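/- Let Δ be a normal 3-pseudomanifold and let t be a vertex of Δ with g₂(lk(t,Δ)) ≥ g₂(lk(v,Δ)) for every other vertex v. Suppose g₂(Δ) ≤ g₂(lk(t,Δ)) + 9. Let σ be a missing tetrahedron of Δ such that for every vertex x of σ the missing triangle formed by the other three vertices of σ separates lk(x,Δ). Then Δ was formed using a connected sum (and not a handle addition). -/

import Mathlib

/-- An abstract simplicial complex on vertex set `ℕ`: a finite, downward closed
collection of nonempty finite sets of vertices. -/
structure SComplex where
  faces : Finset (Finset ℕ)
  not_empty_mem : ∅ ∉ faces
  down_closed : ∀ s ∈ faces, ∀ t ⊆ s, t ≠ ∅ → t ∈ faces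

namespace SComplex

/-- The set of vertices of the complex. -/
def vertexSet (K : SComplex) : Finset ℕ := K.faces.sup id

/-- `fnum K i` is the number of `i`-dimensional faces of `K`. -/
def fnum (K : SComplex) (i : ℕ) : ℕ := (K.faces.filter fun s => s.card = i + 1).card

/-- `g₂` for a 3-dimensional complex: `f₁ - 4 f₀ + 10`. -/
def g2 (K : SComplex) : ℤ := (K.fnum 1 : ℤ) - 4 * (K.fnum 0 : ℤ) + 10

/-- `g₂` for a 2-dimensional complex: `f₁ - 3 f₀ + 6`. -/
def g2surf (K : SComplex) : ℤ := (K.fnum 1 : ℤ) - 3 * (K.fnum 0 : ℤ) + 6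

/-- Euler characteristic of a (2-dimensional) complex. -/
def euler (K : SComplex) : ℤ := (K.fnum 0 : ℤ) - (K.fnum 1 : ℤ) + (K.fnum 2 : ℤ)

/-- The link of a face `σ`. -/
def lk (K : SComplex) (σ : Finset ℕ) : SComplex where
  faces := K.faces.filter fun γ => γ ∩ σ = ∅ ∧ γ ∪ σ ∈ K.faces
  not_empty_mem := fun h => K.not_empty_mem (Finset.mem_filter.mp h).1
  down_closed := by
    intro s hs t hts ht
    rw [Finset.mem_filter] at hs ⊢
    refine ⟨K.down_closed s hs.1 t hts ht, ?_, ?_⟩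
    · have h1 : t ∩ σ ⊆ s ∩ σ := Finset.inter_subset_inter hts (Finset.Subset.refl σ)
      rw [hs.2.1] at h1
      exact Finset.subset_empty.mp h1
    · refine K.down_closed (s ∪ σ) hs.2.2 (t ∪ σ)
        (Finset.union_subset_union hts (Finset.Subset.refl σ)) ?_
      intro hc
      exact ht (Finset.union_eq_empty.mp hc).1

/-- The (closed) star of a face `σ`. -/
def st (K : SComplex) (σ : Finset ℕ) : SComplex where
  faces := K.faces.filter fun α => α ∪ σ ∈ K.faces
  not_empty_mem := fun h => K.not_empty_mem (Finset.mem_filter.mp h).1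
  down_closed := by
    intro s hs t hts ht
    rw [Finset.mem_filter] at hs ⊢
    refine ⟨K.down_closed s hs.1 t hts ht, ?_⟩
    refine K.down_closed (s ∪ σ) hs.2 (t ∪ σ)
      (Finset.union_subset_union hts (Finset.Subset.refl σ)) ?_
    intro hc
    exact ht (Finset.union_eq_empty.mp hc).1

/-- A facet is a maximal face. -/
def IsFacet (K : SComplex) (s : Finset ℕ) : Prop :=
  s ∈ K.faces ∧ ∀ t ∈ K.faces, s ⊆ t → s = t

/-- A pure `d`-dimensional complex: all facets have `d+1` vertices. -/
def IsPure (K : SComplex) (d : ℕ) : Prop :=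
  K.faces.Nonempty ∧ ∀ s, K.IsFacet s → s.card = d + 1

/-- Two facets are adjacent if they share a codimension-one face. -/
def FacetAdj (K : SComplex) (s t : Finset ℕ) : Prop :=
  K.IsFacet s ∧ K.IsFacet t ∧ (s ∩ t).card + 1 = s.card

/-- Strong connectedness: any two facets are joined by a chain of facets, consecutive
ones sharing a codimension-one face. -/
def StronglyConnected (K : SComplex) : Prop :=
  ∀ s t, K.IsFacet s → K.IsFacet t → Relation.ReflTransGen K.FacetAdj s t

/-- Two vertices are adjacent if they span an edge. -/
def VertAdj (K : SComplex) (u v : ℕ) : Prop := ({u, v} : Finset ℕ) ∈ K.faces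

/-- Connectedness of a complex (via its 1-skeleton). -/
def Conn (K : SComplex) : Prop :=
  K.faces.Nonempty ∧
    ∀ u v, {u} ∈ K.faces → {v} ∈ K.faces → Relation.ReflTransGen K.VertAdj u v

/-- A normal `d`-pseudomanifold: pure, strongly connected, every `(d-1)`-face is in
exactly two facets, and links of faces of dimension at most `d-2` are connected. -/
def IsNormalPseudomanifold (K : SComplex) (d : ℕ) : Prop :=
  K.IsPure d ∧ K.StronglyConnected ∧
    (∀ s ∈ K.faces, s.card = d →
      (K.faces.filter fun F => F.card = d + 1 ∧ s ⊆ F).card = 2) ∧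
    (∀ s ∈ K.faces, s.card ≤ d - 1 → (K.lk s).Conn)

/-- The geometric realization `|K|`, as a subspace of `ℕ → ℝ`. -/
def realSpace (K : SComplex) : Set (ℕ → ℝ) :=
  {w | (∀ v, 0 ≤ w v) ∧ ∃ s ∈ K.faces, (∀ v, w v ≠ 0 → v ∈ s) ∧ ∑ v ∈ s, w v = 1}

/-- The link of the vertex `v` triangulates the `(d-1)`-sphere. -/
def HasSphereLink (K : SComplex) (d : ℕ) (v : ℕ) : Prop :=
  Nonempty (↥((K.lk {v}).realSpace) ≃ₜ
    ↥(Metric.sphere (0 : EuclideanSpace ℝ (Fin d)) 1))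

/-- A singular vertex of a normal 3-pseudomanifold: its link is not a 2-sphere. -/
def IsSingular (K : SComplex) (v : ℕ) : Prop :=
  {v} ∈ K.faces ∧ ¬ K.HasSphereLink 3 v

/-- `d(σ)`: the number of vertices of the link of `σ`. -/
def deg (K : SComplex) (σ : Finset ℕ) : ℕ := (K.lk σ).fnum 0

/-- The boundary complex of the simplex on vertex set `s`: all nonempty proper subsets. -/
def properFaces (s : Finset ℕ) : Finset (Finset ℕ) :=
  s.powerset.filter fun t => t ≠ ∅ ∧ t ≠ s

/-- All nonempty faces of the simplex on vertex set `s`. -/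
def simplexFaces (s : Finset ℕ) : Finset (Finset ℕ) :=
  s.powerset.filter fun t => t ≠ ∅

/-- Operation (A): a bistellar 2-move on an edge `uv` with `lk(uv) = ∂(abc)`, `abc ∉ K`. -/
def BistellarTwoMove (K K' : SComplex) : Prop :=
  ∃ u v a b c : ℕ,
    ({u, v} : Finset ℕ) ∈ K.faces ∧ u ≠ v ∧
    ({a, b, c} : Finset ℕ).card = 3 ∧
    u ∉ ({a, b, c} : Finset ℕ) ∧ v ∉ ({a, b, c} : Finset ℕ) ∧
    (K.lk {u, v}).faces = properFaces {a, b, c} ∧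
    ({a, b, c} : Finset ℕ) ∉ K.faces ∧
    K'.faces = ((K.faces.filter fun α => ¬ ({u, v} : Finset ℕ) ⊆ α) ∪
      simplexFaces (insert u {a, b, c})) ∪ simplexFaces (insert v {a, b, c})

/-- The faces of the boundary complex of a pure `d`-dimensional complex with face set `F`:
faces contained in some `(d-1)`-face lying in exactly one facet. -/
def bdryFaces (F : Finset (Finset ℕ)) (d : ℕ) : Finset (Finset ℕ) :=
  F.filter fun s => ∃ r ∈ F, s ⊆ r ∧ r.card = d ∧
    (F.filter fun t => t.card = d + 1 ∧ r ⊆ t).card = 1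

/-- The faces of the cone with apex `w` over the complex with face set `F`. -/
def coneFaces (w : ℕ) (F : Finset (Finset ℕ)) : Finset (Finset ℕ) :=
  (F ∪ F.image (insert w)) ∪ {{w}}

/-- `K₁` is obtained from the normal `d`-pseudomanifold `K` by contracting the
edge `uv` (satisfying the link condition): delete all faces containing `u` or `v`
and cone off the boundary of the result with a new vertex `w`. -/
def EdgeContractionAt (d : ℕ) (K : SComplex) (u v : ℕ) (K₁ : SComplex) : Prop :=
  ({u, v} : Finset ℕ) ∈ K.faces ∧ u ≠ v ∧
  (K.lk {u}).faces ∩ (K.lk {v}).faces = (K.lk {u, v}).faces ∧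
  ∃ w, w ∉ K.vertexSet ∧
    K₁.faces = (K.faces.filter fun α => u ∉ α ∧ v ∉ α) ∪
      coneFaces w (bdryFaces (K.faces.filter fun α => u ∉ α ∧ v ∉ α) d)

/-- Operation (B): an edge contraction in a 3-dimensional complex. -/
def EdgeContraction (K K₁ : SComplex) : Prop := ∃ u v, EdgeContractionAt 3 K u v K₁

/-- The class `R`: normal 3-pseudomanifolds with one or two singular vertices such that
(i) if `K` contains the boundary of a 3-simplex then it contains the 3-simplex and
(ii) no normal 3-pseudomanifold with smaller `g₂` is obtained from `K` by a
bistellar 2-move, an edge contraction, an edge expansion followed by a bistellar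
2-move, or an edge expansion followed by an edge contraction. -/
def InClassR (K : SComplex) : Prop :=
  K.IsNormalPseudomanifold 3 ∧
  1 ≤ {v | K.IsSingular v}.ncard ∧ {v | K.IsSingular v}.ncard ≤ 2 ∧
  (∀ s : Finset ℕ, s.card = 4 → (∀ t ∈ properFaces s, t ∈ K.faces) → s ∈ K.faces) ∧
  (∀ K' : SComplex, K'.IsNormalPseudomanifold 3 →
    (BistellarTwoMove K K' ∨ EdgeContraction K K' ∨
      (∃ M, EdgeContraction M K ∧ BistellarTwoMove M K') ∨
      (∃ M, EdgeContraction M K ∧ EdgeContraction M K')) →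
    K.g2 ≤ K'.g2)



/-- The missing triangle `τ` (whose boundary lies in the surface complex `L`)
separates `L`: some two triangles of `L` cannot be joined by a chain of triangles
in which consecutive triangles share an edge not lying in `∂τ`. -/
def SeparatesLink (L : SComplex) (τ : Finset ℕ) : Prop :=
  ∃ p q, p ∈ L.faces ∧ q ∈ L.faces ∧ p.card = 3 ∧ q.card = 3 ∧
    ¬ Relation.ReflTransGen
      (fun p' q' => p' ∈ L.faces ∧ q' ∈ L.faces ∧ p'.card = 3 ∧ q'.card = 3 ∧
        (p' ∩ q').card = 2 ∧ ¬ (p' ∩ q' ⊆ τ)) p q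

/-- `K` is the connected sum of `K₁` and `K₂`: a facet `τ₂` of `K₂` is identified with
a facet `τ₁` of `K₁` via a bijection (realized by the relabelling map `h`, injective on
the vertices of `K₂` and avoiding the vertices of `K₁` away from `τ₂`), and the
identified facet is removed. (A bijection between facets of distinct components is
automatically admissible.) -/
def IsConnSumPair (K₁ K₂ K : SComplex) : Prop :=
  ∃ (τ₁ τ₂ : Finset ℕ) (h : ℕ → ℕ),
    K₁.IsFacet τ₁ ∧ τ₁.card = 4 ∧ K₂.IsFacet τ₂ ∧ τ₂.card = 4 ∧
    Set.InjOn h ↑K₂.vertexSet ∧ τ₂.image h = τ₁ ∧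
    (∀ v ∈ K₂.vertexSet, v ∉ τ₂ → h v ∉ K₁.vertexSet) ∧
    K.faces = (K₁.faces ∪ K₂.faces.image (Finset.image h)) \ {τ₁}

/-- `K` was formed using a connected sum of two normal 3-pseudomanifolds. -/
def FormedByConnSum (K : SComplex) : Prop :=
  ∃ K₁ K₂ : SComplex, K₁.IsNormalPseudomanifold 3 ∧ K₂.IsNormalPseudomanifold 3 ∧
    IsConnSumPair K₁ K₂ K

/-- `K` was formed using a handle addition: two disjoint facets of a (connected) normal
3-pseudomanifold `K'` are identified via an admissible bijection `ψ` (every path from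
`x` to `ψ x` has length at least 3), and the identified facet is removed. -/
def FormedByHandleAddition (K : SComplex) : Prop :=
  ∃ (K' : SComplex) (τ₁ τ₂ : Finset ℕ) (ψ h : ℕ → ℕ),
    K'.IsNormalPseudomanifold 3 ∧
    K'.IsFacet τ₁ ∧ τ₁.card = 4 ∧ K'.IsFacet τ₂ ∧ τ₂.card = 4 ∧
    Set.InjOn ψ ↑τ₁ ∧ τ₁.image ψ = τ₂ ∧
    (∀ x ∈ τ₁, x ≠ ψ x ∧ ({x, ψ x} : Finset ℕ) ∉ K'.faces ∧
      ∀ z, ({x, z} : Finset ℕ) ∈ K'.faces → ({z, ψ x} : Finset ℕ) ∈ K'.faces → False) ∧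
    (∀ y, y ∉ τ₂ → h y = y) ∧ (∀ x ∈ τ₁, h (ψ x) = x) ∧
    K.faces = (K'.faces.image (Finset.image h)) \ {τ₁}

/-! ### Part 1: generic points and infinitesimal (hyper)rigidity -/

/-- There are generic points in `ℝ⁴` indexed by `ℕ`. -/
theorem exists_generic : ∃ p : ℕ → Fin 4 → ℝ,
    AlgebraicIndependent ℚ (fun i : ℕ × Fin 4 => p i.1 i.2) := by
  obtain ⟨ι, x, hx⟩ := exists_isTranscendenceBasis' ℚ ℝ
  have hinf : Infinite ι := by
    by_contra hfin
    rw [not_infinite_iff_finite] at hfin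
    have h1 : Algebra.IsAlgebraic (Algebra.adjoin ℚ (Set.range x)) ℝ := hx.isAlgebraic
    have h2 := Algebra.IsAlgebraic.cardinalMk_le_max (Algebra.adjoin ℚ (Set.range x)) ℝ
    have h3 : Countable (MvPolynomial ι ℚ) := by
      have : Countable ι := Finite.to_countable
      rw [← Cardinal.mk_le_aleph0_iff]
      refine MvPolynomial.cardinalMk_le_max.trans ?_
      simp
    have h4 : Countable (Algebra.adjoin ℚ (Set.range x)) :=
      hx.1.aevalEquiv.toEquiv.symm.injective.countable
    have h5 : Cardinal.mk ℝ ≤ Cardinal.aleph0 := by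
      refine h2.trans ?_
      simp
    exact absurd (Cardinal.mk_le_aleph0_iff.mp h5) (by
      have : Uncountable ℝ := inferInstance
      exact not_countable_iff.mpr this)
  obtain ⟨f⟩ : Nonempty (ℕ × Fin 4 ↪ ι) := by
    have e : ℕ × Fin 4 ≃ ℕ := Classical.choice (nonempty_equiv_of_countable)
    exact ⟨e.toEmbedding.trans (Infinite.natEmbedding ι)⟩
  refine ⟨fun v k => x (f (v, k)), ?_⟩
  exact hx.1.comp f f.injective

/-- The rank of a polynomial matrix is maximal at a generic point. -/
theorem rank_transfer {τ ι κ : Type} [Fintype ι] [Fintype κ] (p q : τ → ℝ)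
    (hp : AlgebraicIndependent ℚ p) (M : Matrix ι κ (MvPolynomial τ ℚ)) :
    (M.map (MvPolynomial.aeval q)).rank ≤ (M.map (MvPolynomial.aeval p)).rank := by
  classical
  obtain ⟨f, hf, -, hli⟩ := Submodule.exists_fun_fin_finrank_span_eq ℝ
    (Set.range (M.map (MvPolynomial.aeval q)).row)
  have hrk := (M.map (MvPolynomial.aeval q)).rank_eq_finrank_span_row
  generalize Module.finrank ℝ (Submodule.span ℝ
    (Set.range (M.map (MvPolynomial.aeval q)).row)) = r at *
  choose g hg using hf
  have key : ∀ s : τ → ℝ, MvPolynomial.aeval s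
      ((M.submatrix g id) * (M.submatrix g id).transpose).det =
      (((M.map (MvPolynomial.aeval s)).submatrix g id) *
        ((M.map (MvPolynomial.aeval s)).submatrix g id).transpose).det := by
    intro s
    rw [AlgHom.map_det]
    congr 1
    ext i j
    simp [Matrix.mul_apply]
  have hq : (((M.map (MvPolynomial.aeval q)).submatrix g id) *
        ((M.map (MvPolynomial.aeval q)).submatrix g id).transpose).det ≠ 0 := by
    have h1 : LinearIndependent ℝ ((M.map (MvPolynomial.aeval q)).submatrix g id).row := by
      have : ((M.map (MvPolynomial.aeval q)).submatrix g id).row = f := by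
        ext i j
        rw [← hg]
        rfl
      rw [this]; exact hli
    have h2 := h1.rank_matrix
    rw [← Matrix.rank_self_mul_transpose] at h2
    intro h0
    have h3 := Matrix.exists_mulVec_eq_zero_iff.mpr h0
    obtain ⟨v, hv, hv0⟩ := h3
    have h4 := LinearMap.finrank_range_add_finrank_ker
      (((M.map (MvPolynomial.aeval q)).submatrix g id) *
        ((M.map (MvPolynomial.aeval q)).submatrix g id).transpose).mulVecLin
    rw [Matrix.rank] at h2
    rw [h2] at h4
    simp only [Module.finrank_fintype_fun_eq_card] at h4
    have h5 : Module.finrank ℝ (LinearMap.ker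
      (((M.map (MvPolynomial.aeval q)).submatrix g id) *
        ((M.map (MvPolynomial.aeval q)).submatrix g id).transpose).mulVecLin) = 0 := by omega
    rw [Submodule.finrank_eq_zero] at h5
    apply hv
    have : v ∈ LinearMap.ker
      (((M.map (MvPolynomial.aeval q)).submatrix g id) *
        ((M.map (MvPolynomial.aeval q)).submatrix g id).transpose).mulVecLin := by
      simpa using hv0
    rw [h5] at this
    simpa using this
  rw [← key] at hq
  have hne : ((M.submatrix g id) * (M.submatrix g id).transpose).det ≠ 0 := by
    intro h; rw [h] at hq; simp at hq
  have hpne : MvPolynomial.aeval p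
      ((M.submatrix g id) * (M.submatrix g id).transpose).det ≠ 0 := by
    intro h
    exact hne (hp (by rw [h]; simp))
  rw [key] at hpne
  have h6 := Matrix.rank_of_det_ne_zero hpne
  rw [hrk]
  calc r = _ := by rw [h6]; simp
    _ ≤ ((M.map (MvPolynomial.aeval p)).submatrix g id).rank := Matrix.rank_mul_le_left _ _
    _ ≤ _ := Matrix.rank_submatrix_le _ _ _

/-- Symmetric matrices, parametrised by their entries. -/
noncomputable def symM : (Sym2 (Fin 4) → ℝ) →ₗ[ℝ] Matrix (Fin 4) (Fin 4) ℝ where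
  toFun a := Matrix.of fun i j => a s(i, j)
  map_add' := by intros; ext; simp
  map_smul' := by intros; ext; simp

theorem symM_injective : Function.Injective symM := by
  intro a b h
  ext e
  induction e with
  | _ i j =>
    have := congrFun (congrFun h i) j
    simpa [symM] using this

theorem symM_transpose (a) : (symM a).transpose = symM a := by
  ext i j
  simp [symM, Sym2.eq_swap]

theorem exists_symM (S : Matrix (Fin 4) (Fin 4) ℝ) (h : S.transpose = S) : ∃ a, symM a = S := by
  refine ⟨Sym2.lift ⟨fun i j => S i j, ?_⟩, ?_⟩
  · intro i j
    exact congrFun (congrFun h j) i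
  · ext i j
    simp [symM]

/-- symmetric matrices are self adjoint. -/
theorem symM_dot (a) (x y : Fin 4 → ℝ) :
    (symM a).mulVec x ⬝ᵥ y = (symM a).mulVec y ⬝ᵥ x := by
  rw [dotProduct_comm, Matrix.dotProduct_mulVec, ← Matrix.mulVec_transpose, symM_transpose]

/-- Infinitesimal motions of a graph with respect to a placement. -/
def Motion (q : ℕ → Fin 4 → ℝ) (E : ℕ → ℕ → Prop) (m : ℕ → Fin 4 → ℝ) : Prop :=
  ∀ u v, E u v → m u ⬝ᵥ q v = m v ⬝ᵥ q u

/-- All motions are trivial. -/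
def Rigid (q : ℕ → Fin 4 → ℝ) (E : ℕ → ℕ → Prop) (W : Finset ℕ) : Prop :=
  ∀ m, Motion q E m → ∃ a, ∀ w ∈ W, m w = (symM a).mulVec (q w)

/-- Genericity. -/
def Generic (p : ℕ → Fin 4 → ℝ) : Prop :=
  AlgebraicIndependent ℚ (fun i : ℕ × Fin 4 => p i.1 i.2)

theorem Generic.det_ne_zero {p} (hp : Generic p) (e : Fin 4 → ℕ) (he : Function.Injective e) :
    (Matrix.of fun i => p (e i)).det ≠ 0 := by
  classical
  let M : Matrix (Fin 4) (Fin 4) (MvPolynomial (ℕ × Fin 4) ℚ) :=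
    Matrix.of fun i j => MvPolynomial.X (e i, j)
  have h : ∀ s : ℕ → Fin 4 → ℝ, MvPolynomial.aeval (fun i : ℕ × Fin 4 => s i.1 i.2) M.det
      = (Matrix.of fun i => s (e i)).det := by
    intro s
    rw [AlgHom.map_det]
    congr 1
    ext i j
    simp [M]
  rw [← h]
  intro h0
  have h1 : M.det = 0 := hp (by rw [h0]; simp)
  have h2 := h (fun v k => if e k = v then 1 else 0)
  rw [h1] at h2
  have h3 : (Matrix.of fun i : Fin 4 => (fun (v : ℕ) (k : Fin 4) => if e k = v then (1:ℝ) else 0) (e i))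
      = 1 := by
    ext i j
    simp [Matrix.one_apply, he.eq_iff, eq_comm]
  rw [h3] at h2
  simp at h2

theorem exists_enum {F : Finset ℕ} (hF : F.card = 4) :
    ∃ e : Fin 4 → ℕ, Function.Injective e ∧ ∀ w, w ∈ F ↔ ∃ i, e i = w := by
  refine ⟨fun i => (F.equivFinOfCardEq hF).symm i, ?_, ?_⟩
  · intro i j h
    simpa using h
  · intro w
    constructor
    · intro hw
      exact ⟨F.equivFinOfCardEq hF ⟨w, hw⟩, by simp⟩
    · rintro ⟨i, rfl⟩
      simp

theorem Generic.perp {p} (hp : Generic p) {F : Finset ℕ} (hF : F.card = 4) {x : Fin 4 → ℝ}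
    (h : ∀ w ∈ F, x ⬝ᵥ p w = 0) : x = 0 := by
  obtain ⟨e, he, hFe⟩ := exists_enum hF
  have hd := hp.det_ne_zero e he
  by_contra hx
  apply hd
  rw [← Matrix.exists_mulVec_eq_zero_iff]
  refine ⟨x, hx, ?_⟩
  ext i
  have := h (e i) ((hFe _).mpr ⟨i, rfl⟩)
  rw [dotProduct_comm] at this
  simpa [Matrix.mulVec] using this

theorem Generic.sym_eq {p} (hp : Generic p) {F : Finset ℕ} (hF : F.card = 4) {a b}
    (h : ∀ w ∈ F, (symM a).mulVec (p w) = (symM b).mulVec (p w)) : a = b := by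
  apply symM_injective
  rw [← sub_eq_zero]
  ext i j
  have : (symM a - symM b) i = 0 := by
    apply hp.perp hF
    intro w hw
    have := congrFun (h w hw) i
    simp only [Matrix.mulVec] at this
    rw [show (symM a - symM b) i = symM a i - symM b i from rfl, sub_dotProduct, this, sub_self]
  exact congrFun this j

/-- Cliques with at least four vertices are rigid. -/
theorem Generic.clique {p} (hp : Generic p) {F W : Finset ℕ} (hF : F.card = 4) (hFW : F ⊆ W)
    {E : ℕ → ℕ → Prop} (hE : ∀ u ∈ W, ∀ v ∈ W, u ≠ v → E u v) : Rigid p E W := by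
  classical
  intro m hm
  obtain ⟨e, he, hFe⟩ := exists_enum hF
  have hd := hp.det_ne_zero e he
  set P : Matrix (Fin 4) (Fin 4) ℝ := Matrix.of fun i => p (e i) with hP
  set N : Matrix (Fin 4) (Fin 4) ℝ := Matrix.of fun i => m (e i) with hN
  have hu : IsUnit P.det := hd.isUnit
  -- `S Pᵀ = Nᵀ`
  have hmem : ∀ i, e i ∈ F := fun i => (hFe _).mpr ⟨i, rfl⟩
  have hsym : N * P.transpose = P * N.transpose := by
    ext i j
    rw [Matrix.mul_apply, Matrix.mul_apply]
    by_cases hij : i = j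
    · subst hij
      simp [hP, hN, mul_comm]
    · have := hm (e i) (e j) (hE _ (hFW (hmem i)) _ (hFW (hmem j)) (fun h => hij (he h)))
      simp only [dotProduct] at this
      simp only [hP, hN, Matrix.transpose_apply, Matrix.of_apply]
      rw [this]
      exact Finset.sum_congr rfl fun _ _ => mul_comm _ _
  have hS : (P⁻¹ * N).transpose = P⁻¹ * N := by
    have hut : IsUnit P.transpose.det := by rwa [Matrix.det_transpose]
    rw [Matrix.transpose_mul, Matrix.transpose_nonsing_inv]
    calc N.transpose * P.transpose⁻¹ = P⁻¹ * (P * N.transpose) * P.transpose⁻¹ := by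
          rw [← Matrix.mul_assoc, Matrix.nonsing_inv_mul _ hu, Matrix.one_mul]
      _ = P⁻¹ * N := by
          rw [← hsym, Matrix.mul_assoc, Matrix.mul_assoc, Matrix.mul_nonsing_inv _ hut,
            Matrix.mul_one]
  obtain ⟨a, ha⟩ := exists_symM _ hS
  have h4 : ∀ i, m (e i) = (symM a).mulVec (p (e i)) := by
    intro i
    have : N = P * symM a := by
      rw [ha, ← Matrix.mul_assoc, Matrix.mul_nonsing_inv _ hu, Matrix.one_mul]
    have h := congrFun this i
    rw [show N i = m (e i) from rfl] at h
    rw [h, ← symM_transpose, Matrix.mulVec_transpose, symM_transpose]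
    rfl
  refine ⟨a, fun w hw => ?_⟩
  by_cases hwF : w ∈ F
  · obtain ⟨i, rfl⟩ := (hFe w).mp hwF
    exact h4 i
  · rw [← sub_eq_zero]
    apply hp.perp hF
    intro x hx
    have hne : w ≠ x := by rintro rfl; exact hwF hx
    rw [sub_dotProduct, hm w x (hE _ hw _ (hFW hx) hne)]
    obtain ⟨i, rfl⟩ := (hFe x).mp hx
    rw [h4 i, symM_dot, sub_self]

theorem card_sym : Fintype.card (Sym2 (Fin 4)) = 10 := by decide

/-- Trivial motions, as a linear map. -/
noncomputable def trivMap (q : ℕ → Fin 4 → ℝ) (W : Finset ℕ) :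
    (Sym2 (Fin 4) → ℝ) →ₗ[ℝ] (W × Fin 4 → ℝ) where
  toFun a := fun x => (symM a).mulVec (q x.1) x.2
  map_add' := by intros; ext; simp [Matrix.add_mulVec]
  map_smul' := by intros; ext; simp [Matrix.smul_mulVec]

/-- Rigidity at some placement implies rigidity at a generic one. -/
theorem Generic.transfer {p} (hp : Generic p) {q} {W F : Finset ℕ} (hF : F.card = 4) (hFW : F ⊆ W)
    {E : ℕ → ℕ → Prop} (hE : ∀ u v, E u v → u ∈ W ∧ v ∈ W)
    (h : Rigid q E W) : Rigid p E W := by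
  classical
  let ι := {e : W × W // E e.1 e.2}
  let M : Matrix ι (W × Fin 4) (MvPolynomial (ℕ × Fin 4) ℚ) :=
    Matrix.of fun e x => (if x.1 = e.1.1 then MvPolynomial.X ((e.1.2 : ℕ), x.2) else 0)
      - (if x.1 = e.1.2 then MvPolynomial.X ((e.1.1 : ℕ), x.2) else 0)
  let A : (ℕ → Fin 4 → ℝ) → Matrix ι (W × Fin 4) ℝ := fun s =>
    M.map (MvPolynomial.aeval (fun i : ℕ × Fin 4 => s i.1 i.2))
  have hA : ∀ s (z : W × Fin 4 → ℝ) (e : ι), (A s).mulVec z e =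
      (fun k => z (e.1.1, k)) ⬝ᵥ s e.1.2 - (fun k => z (e.1.2, k)) ⬝ᵥ s e.1.1 := by
    intro s z e
    simp only [Matrix.mulVec, dotProduct, A, M, Matrix.map_apply, Matrix.of_apply, map_sub,
      sub_mul, Finset.sum_sub_distrib, Fintype.sum_prod_type]
    congr 1
    · rw [Finset.sum_eq_single e.1.1]
      · simp [mul_comm]
      · intro b _ hb
        simp [hb]
      · simp
    · rw [Finset.sum_eq_single e.1.2]
      · simp [mul_comm]
      · intro b _ hb
        simp [hb]
      · simp
  have hrank := rank_transfer _ (fun i : ℕ × Fin 4 => q i.1 i.2) hp M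
  have hdim : ∀ s, (A s).rank + Module.finrank ℝ (LinearMap.ker (A s).mulVecLin) =
      Fintype.card (W × Fin 4) := by
    intro s
    have := LinearMap.finrank_range_add_finrank_ker (A s).mulVecLin
    rwa [Module.finrank_fintype_fun_eq_card] at this
  have hext : ∀ s (z : W × Fin 4 → ℝ), z ∈ LinearMap.ker (A s).mulVecLin ↔
      Motion s E (fun w => if hw : w ∈ W then fun k => z (⟨w, hw⟩, k) else 0) := by
    intro s z
    rw [LinearMap.mem_ker]
    constructor
    · intro hz u v huv
      have h1 := congrFun hz (⟨(⟨u, (hE u v huv).1⟩, ⟨v, (hE u v huv).2⟩), huv⟩ : ι)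
      rw [Matrix.mulVecLin_apply, hA] at h1
      simp only [(hE u v huv).1, (hE u v huv).2, dif_pos]
      simpa [sub_eq_zero] using h1
    · intro hz
      ext e
      rw [Matrix.mulVecLin_apply, hA]
      have := hz _ _ e.2
      beta_reduce at this
      rw [dif_pos e.1.1.2, dif_pos e.1.2.2] at this
      exact sub_eq_zero.mpr this
  have hker_q : LinearMap.ker (A q).mulVecLin ≤ LinearMap.range (trivMap q W) := by
    intro z hz
    obtain ⟨a, ha⟩ := h _ ((hext q z).mp hz)
    refine ⟨a, ?_⟩
    ext ⟨w, k⟩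
    have := congrFun (ha w w.2) k
    rw [dif_pos w.2] at this
    exact this.symm
  have hq10 : Module.finrank ℝ (LinearMap.ker (A q).mulVecLin) ≤ 10 := by
    refine (Submodule.finrank_mono hker_q).trans ?_
    refine (LinearMap.finrank_range_le _).trans ?_
    rw [Module.finrank_fintype_fun_eq_card, card_sym]
  have hinj : Function.Injective (trivMap p W) := by
    intro a b hab
    apply hp.sym_eq hF
    intro w hw
    ext k
    exact congrFun hab (⟨w, hFW hw⟩, k)
  have hp10 : Module.finrank ℝ (LinearMap.range (trivMap p W)) = 10 := by
    rw [LinearMap.finrank_range_of_inj hinj, Module.finrank_fintype_fun_eq_card, card_sym]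
  have hle : LinearMap.range (trivMap p W) ≤ LinearMap.ker (A p).mulVecLin := by
    rintro _ ⟨a, rfl⟩
    rw [LinearMap.mem_ker]
    ext e
    rw [Matrix.mulVecLin_apply, hA]
    have := symM_dot a (p e.1.1) (p e.1.2)
    simpa [trivMap, sub_eq_zero] using this
  have heq : LinearMap.range (trivMap p W) = LinearMap.ker (A p).mulVecLin := by
    apply Submodule.eq_of_le_of_finrank_le hle
    have h1 := hdim p
    have h2 := hdim q
    have h3 : (A q).rank ≤ (A p).rank := hrank
    omega
  intro m hm
  have hz : (fun x : W × Fin 4 => m x.1 x.2) ∈ LinearMap.ker (A p).mulVecLin := by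
    rw [hext]
    intro u v huv
    simpa [(hE u v huv).1, (hE u v huv).2] using hm u v huv
  rw [← heq] at hz
  obtain ⟨a, ha⟩ := hz
  refine ⟨a, fun w hw => ?_⟩
  ext k
  exact (congrFun ha (⟨w, hw⟩, k)).symm

/-- The parametrised family of placements used in the counting lemma. -/
noncomputable def famMap (p : ℕ → Fin 4 → ℝ) {ι : Type} [Fintype ι] (B : ι → Finset ℕ)
    (A : Finset ℕ) : ((ι → Sym2 (Fin 4) → ℝ) × (A → Fin 4 → ℝ)) →ₗ[ℝ] (ℕ → Fin 4 → ℝ) where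
  toFun x := fun w => (∑ i, if w ∈ B i then (symM (x.1 i)).mulVec (p w) else 0) +
    (if h : w ∈ A then x.2 ⟨w, h⟩ else 0)
  map_add' := by
    intro x y
    ext w k
    simp only [Prod.fst_add, Prod.snd_add, Pi.add_apply, map_add, Matrix.add_mulVec]
    have : ∀ i, (if w ∈ B i then (symM (x.1 i)).mulVec (p w) + (symM (y.1 i)).mulVec (p w) else 0)
      = (if w ∈ B i then (symM (x.1 i)).mulVec (p w) else 0) +
        (if w ∈ B i then (symM (y.1 i)).mulVec (p w) else 0) := by
      intro i; split_ifs <;> simp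
    simp only [this, Finset.sum_add_distrib, Pi.add_apply]
    split_ifs <;> simp <;> ring
  map_smul' := by
    intro c x
    ext w k
    simp only [Prod.smul_fst, Prod.smul_snd, Pi.smul_apply, map_smul, Matrix.smul_mulVec,
      RingHom.id_apply]
    have : ∀ i, (if w ∈ B i then c • (symM (x.1 i)).mulVec (p w) else 0)
      = c • (if w ∈ B i then (symM (x.1 i)).mulVec (p w) else 0) := by
      intro i; split_ifs <;> simp
    simp only [this, ← Finset.smul_sum, Pi.add_apply, Pi.smul_apply, smul_add]
    split_ifs <;> simp

theorem Generic.count {p} (hp : Generic p) {E : ℕ → ℕ → Prop} {W : Finset ℕ}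
    (hr : Rigid p E W) {ι : Type} [Fintype ι] [Nonempty ι] (B : ι → Finset ℕ)
    (hBW : ∀ i, B i ⊆ W) (hB4 : ∀ i, ∃ F ⊆ B i, F.card = 4)
    (hdisj : ∀ i j, i ≠ j → Disjoint (B i) (B j))
    (X : Finset (Finset ℕ)) (hX : ∀ e ∈ X, e.card = 2)
    (hEX : ∀ u v, E u v → ({u, v} : Finset ℕ) ∈ X ∨ ∃ i, u ∈ B i ∧ v ∈ B i) :
    10 * Fintype.card ι + 4 * W.card ≤ 10 + X.card + 4 * ∑ i, (B i).card := by
  classical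
  set A := W \ Finset.univ.biUnion B with hA
  have hval1 : ∀ x i w, w ∈ B i → famMap p B A x w = (symM (x.1 i)).mulVec (p w) := by
    intro x i w hw
    have h1 : w ∉ A := by
      rw [hA]; simp only [Finset.mem_sdiff, Finset.mem_biUnion, Finset.mem_univ, true_and, not_and,
        not_not]
      exact fun _ => ⟨i, hw⟩
    change (∑ i, if w ∈ B i then (symM (x.1 i)).mulVec (p w) else 0) +
      (if h : w ∈ A then x.2 ⟨w, h⟩ else 0) = _
    rw [dif_neg h1, add_zero, Finset.sum_eq_single i, if_pos hw]
    · intro j _ hji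
      rw [if_neg]
      intro hj
      exact (Finset.disjoint_left.mp (hdisj j i hji) hj) hw
    · simp
  have hval2 : ∀ x w (h : w ∈ A), famMap p B A x w = x.2 ⟨w, h⟩ := by
    intro x w h
    change (∑ i, if w ∈ B i then (symM (x.1 i)).mulVec (p w) else 0) +
      (if h : w ∈ A then x.2 ⟨w, h⟩ else 0) = _
    rw [dif_pos h, Finset.sum_eq_zero, zero_add]
    intro i _
    rw [if_neg]
    intro hi
    rw [hA] at h
    simp only [Finset.mem_sdiff, Finset.mem_biUnion, Finset.mem_univ, true_and, not_exists] at h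
    exact h.2 i hi
  have hch : ∀ e : X, ∃ uv : ℕ × ℕ, (e : Finset ℕ) = {uv.1, uv.2} := by
    intro e
    obtain ⟨a, b, -, h⟩ := Finset.card_eq_two.mp (hX e e.2)
    exact ⟨(a, b), h⟩
  choose f hf using hch
  let Ψ : (ℕ → Fin 4 → ℝ) →ₗ[ℝ] (X → ℝ) :=
    { toFun := fun m e => m (f e).1 ⬝ᵥ p (f e).2 - m (f e).2 ⬝ᵥ p (f e).1
      map_add' := by intro a b; ext e; simp [add_dotProduct]; ring
      map_smul' := by intro a b; ext e; simp [smul_dotProduct, mul_sub] }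
  let Φ := Ψ.comp (famMap p B A)
  let T : (Sym2 (Fin 4) → ℝ) →ₗ[ℝ] ((ι → Sym2 (Fin 4) → ℝ) × (A → Fin 4 → ℝ)) :=
    { toFun := fun a => (fun _ => a, fun w => (symM a).mulVec (p w))
      map_add' := by intro a b; ext <;> simp [Matrix.add_mulVec]
      map_smul' := by intro a b; ext <;> simp [Matrix.smul_mulVec] }
  have hker : LinearMap.ker Φ ≤ LinearMap.range T := by
    intro x hx
    have hx' : Ψ (famMap p B A x) = 0 := hx
    have hm : Motion p E (famMap p B A x) := by
      intro u v huv
      rcases hEX u v huv with h | ⟨i, hu, hv⟩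
      · have h1 := congrFun hx' ⟨_, h⟩
        have h2 := hf ⟨_, h⟩
        change famMap p B A x _ ⬝ᵥ p _ - famMap p B A x _ ⬝ᵥ p _ = 0 at h1
        simp only at h2
        generalize f ⟨_, h⟩ = y at h1 h2
        obtain ⟨y1, y2⟩ := y
        simp only at h1 h2
        have h3 : (u = y1 ∧ v = y2) ∨ (u = y2 ∧ v = y1) := by
          have hu : u ∈ ({y1, y2} : Finset ℕ) := h2 ▸ (by simp)
          have hv : v ∈ ({y1, y2} : Finset ℕ) := h2 ▸ (by simp)
          have h1' : y1 ∈ ({u, v} : Finset ℕ) := h2 ▸ (by simp)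
          have h2' : y2 ∈ ({u, v} : Finset ℕ) := h2 ▸ (by simp)
          simp only [Finset.mem_insert, Finset.mem_singleton] at *
          omega
        rcases h3 with ⟨rfl, rfl⟩ | ⟨rfl, rfl⟩ <;> linarith
      · rw [hval1 x i u hu, hval1 x i v hv, symM_dot]
    obtain ⟨a, ha⟩ := hr _ hm
    refine ⟨a, ?_⟩
    apply Prod.ext
    · ext1 i
      obtain ⟨F, hFB, hF⟩ := hB4 i
      change a = x.1 i
      apply hp.sym_eq hF
      intro w hw
      rw [← ha w (hBW i (hFB hw)), hval1 x i w (hFB hw)]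
    · ext1 ⟨w, hw⟩
      change (symM a).mulVec (p w) = _
      rw [← ha w (Finset.mem_sdiff.mp hw).1, hval2 x w hw]
  have h1 : Module.finrank ℝ (LinearMap.ker Φ) ≤ 10 := by
    refine (Submodule.finrank_mono hker).trans ((LinearMap.finrank_range_le _).trans ?_)
    rw [Module.finrank_fintype_fun_eq_card, card_sym]
  have h2 := LinearMap.finrank_range_add_finrank_ker Φ
  have h3 : Module.finrank ℝ (LinearMap.range Φ) ≤ X.card := by
    refine (Submodule.finrank_le _).trans ?_
    simp
  have h4 : Module.finrank ℝ ((ι → Sym2 (Fin 4) → ℝ) × (A → Fin 4 → ℝ)) =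
      Fintype.card ι * 10 + A.card * 4 := by
    have e1 : Module.finrank ℝ (ι → Sym2 (Fin 4) → ℝ) = Fintype.card ι * 10 := by
      rw [Module.finrank_pi_fintype]
      simp only [Module.finrank_fintype_fun_eq_card, card_sym, Finset.sum_const, Finset.card_univ,
        smul_eq_mul]
    have e2 : Module.finrank ℝ (A → Fin 4 → ℝ) = A.card * 4 := by
      rw [Module.finrank_pi_fintype]
      simp only [Module.finrank_fintype_fun_eq_card, Finset.sum_const, Finset.card_univ,
        Fintype.card_fin, smul_eq_mul, Fintype.card_coe]
    rw [Module.finrank_prod, e1, e2]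
  have h5 : W.card ≤ A.card + ∑ i, (B i).card := by
    have h6 : W.card ≤ (A ∪ Finset.univ.biUnion B).card := by
      apply Finset.card_le_card
      intro w hw
      rw [hA]
      by_cases h : w ∈ Finset.univ.biUnion B
      · exact Finset.mem_union_right _ h
      · exact Finset.mem_union_left _ (Finset.mem_sdiff.mpr ⟨hw, h⟩)
    refine h6.trans ((Finset.card_union_le _ _).trans ?_)
    exact Nat.add_le_add_left Finset.card_biUnion_le _
  omega

/-! ### Part 2: minimal cycles are rigid (Fogelsanger) -/

/-- The boundary operator on mod 2 chains. -/
def bd (V : Finset ℕ) (c : Finset ℕ → ZMod 2) : Finset ℕ → ZMod 2 :=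
  fun R => ∑ w ∈ V \ R, c (insert w R)

structure Cyc (V : Finset ℕ) (c : Finset ℕ → ZMod 2) : Prop where
  supp : ∀ F, c F ≠ 0 → F ⊆ V ∧ F.card = 4
  cyc : ∀ R, bd V c R = 0

structure MinCyc (V : Finset ℕ) (c : Finset ℕ → ZMod 2) : Prop where
  cyc : Cyc V c
  ne : c ≠ 0
  min : ∀ d, Cyc V d → (∀ F, d F ≠ 0 → c F ≠ 0) → d = 0 ∨ d = c

def AdjC (c : Finset ℕ → ZMod 2) (u v : ℕ) : Prop := u ≠ v ∧ ∃ F, c F ≠ 0 ∧ u ∈ F ∧ v ∈ F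

open Classical in
noncomputable def vertsC (V : Finset ℕ) (c : Finset ℕ → ZMod 2) : Finset ℕ :=
  V.filter fun w => ∃ F, c F ≠ 0 ∧ w ∈ F

theorem z2_one {x : ZMod 2} (h : x ≠ 0) : x = 1 := by
  revert x; decide

theorem z2_add_self (x : ZMod 2) : x + x = 0 := by
  revert x; decide

theorem z2_eq {x y : ZMod 2} (h : x + y = 0) : x = y := by
  revert x y; decide

theorem bd_add (V) (c d : Finset ℕ → ZMod 2) (R) : bd V (c + d) R = bd V c R + bd V d R := by
  simp [bd, Finset.sum_add_distrib]

theorem Cyc.add {V c d} (hc : Cyc V c) (hd : Cyc V d) : Cyc V (c + d) := by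
  refine ⟨fun F hF => ?_, fun R => ?_⟩
  · by_cases h : c F = 0
    · exact hd.supp F (by simpa [h] using hF)
    · exact hc.supp F h
  · rw [bd_add, hc.cyc, hd.cyc, add_zero]

theorem Cyc.zero (V) : Cyc V 0 := ⟨fun F h => absurd rfl h, fun R => by simp [bd]⟩

theorem bd_bd (V c E) : bd V (bd V c) E = 0 := by
  classical
  have h : bd V (bd V c) E = ∑ a ∈ (V \ E).offDiag, c (insert a.2 (insert a.1 E)) := by
    unfold bd
    rw [Finset.sum_sigma']
    refine Finset.sum_bij' (fun a _ => (a.1, a.2)) (fun a _ => ⟨a.1, a.2⟩) ?_ ?_ ?_ ?_ ?_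
    · rintro ⟨a, b⟩ h
      simp only [Finset.mem_sigma, Finset.mem_sdiff, Finset.mem_insert, Finset.mem_offDiag] at *
      grind
    · rintro ⟨a, b⟩ h
      simp only [Finset.mem_sigma, Finset.mem_sdiff, Finset.mem_insert, Finset.mem_offDiag] at *
      grind
    · simp
    · simp
    · simp
  rw [h]
  refine Finset.sum_involution (fun a _ => a.swap) ?_ ?_ ?_ ?_
  · rintro ⟨a, b⟩ _
    simp only [Prod.fst_swap, Prod.snd_swap]
    rw [Finset.insert_comm a b, z2_add_self]
  · rintro ⟨a, b⟩ h _
    simp only [Finset.mem_offDiag] at h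
    simp only [Prod.swap_prod_mk, ne_eq, Prod.mk.injEq]
    tauto
  · rintro ⟨a, b⟩ h
    simp only [Finset.mem_offDiag, Prod.swap_prod_mk] at *
    tauto
  · simp

/-- Every facet of a cycle lies in a minimal subcycle. -/
theorem Cyc.exists_min {V c} (hc : Cyc V c) {F} (hF : c F ≠ 0) :
    ∃ d, MinCyc V d ∧ (∀ G, d G ≠ 0 → c G ≠ 0) ∧ d F ≠ 0 := by
  classical
  induction hn : (V.powerset.filter fun G => c G ≠ 0).card using Nat.strong_induction_on
    generalizing c with
  | _ n ih =>
    by_cases hm : ∀ d, Cyc V d → (∀ F, d F ≠ 0 → c F ≠ 0) → d = 0 ∨ d = c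
    · exact ⟨c, ⟨hc, fun h => hF (by rw [h]; rfl), hm⟩, fun _ h => h, hF⟩
    · push Not at hm
      obtain ⟨d, hd, hdc, hd0, hdne⟩ := hm
      have key : ∀ e, Cyc V e → (∀ G, e G ≠ 0 → c G ≠ 0) → e ≠ c → e F ≠ 0 →
          ∃ d, MinCyc V d ∧ (∀ G, d G ≠ 0 → c G ≠ 0) ∧ d F ≠ 0 := by
        intro e he hec hne heF
        obtain ⟨G, hG⟩ := Function.ne_iff.mp hne
        have hG1 : e G = 0 := by
          by_contra h
          exact hG (by rw [z2_one h, z2_one (hec G h)])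
        have hG2 : c G ≠ 0 := by rw [hG1] at hG; exact hG.symm
        obtain ⟨d', h1, h2, h3⟩ := ih _ (by
          rw [← hn]
          apply Finset.card_lt_card
          rw [Finset.ssubset_iff_of_subset]
          · exact ⟨G, by simp [hG2, (hc.supp G hG2).1], by simp [hG1]⟩
          · intro H
            simp only [Finset.mem_filter]
            exact fun h => ⟨h.1, hec H h.2⟩) he heF rfl
        exact ⟨d', h1, fun G hG => hec G (h2 G hG), h3⟩
      by_cases hdF : d F = 0
      · apply key (c + d) (hc.add hd)
        · intro G hG hcG
          have : d G ≠ 0 := by simpa [hcG] using hG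
          exact hdc G this hcG
        · intro h
          exact hd0 (by simpa using h)
        · simpa [hdF] using hF
      · exact key d hd hdc hdne hdF

/-- Splitting a cycle along a function that is constant on minimal subcycles. -/
theorem Cyc.split {V c} (hc : Cyc V c) {α : Type} [DecidableEq α] (f : Finset ℕ → α)
    (hf : ∀ d, MinCyc V d → (∀ G, d G ≠ 0 → c G ≠ 0) → ∀ F G, d F ≠ 0 → d G ≠ 0 → f F = f G)
    (s : α) : Cyc V (fun F => if f F = s then c F else 0) := by
  classical
  induction hn : (V.powerset.filter fun G => c G ≠ 0).card using Nat.strong_induction_on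
    generalizing c with
  | _ n ih =>
    by_cases h0 : c = 0
    · have : (fun F => if f F = s then c F else 0) = 0 := by ext F; simp [h0]
      rw [this]; exact Cyc.zero V
    · obtain ⟨F, hF⟩ := Function.ne_iff.mp h0
      obtain ⟨d, hd, hdc, hdF⟩ := hc.exists_min hF
      have hsub : ∀ G, (c + d) G ≠ 0 → c G ≠ 0 := by
        intro G hG hcG
        have : d G ≠ 0 := by simpa [hcG] using hG
        exact hdc G this hcG
      have h1 := ih _ (by
          rw [← hn]
          apply Finset.card_lt_card
          rw [Finset.ssubset_iff_of_subset]
          · refine ⟨F, by simpa [(hc.supp F hF).1] using hF, ?_⟩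
            simp only [Finset.mem_filter, not_and, not_not]
            intro _
            rw [Pi.add_apply, z2_one hF, z2_one hdF, z2_add_self]
          · intro H
            simp only [Finset.mem_filter]
            exact fun h => ⟨h.1, hsub H h.2⟩) (hc.add hd.cyc)
          (fun e he hec => hf e he (fun G hG => hsub G (hec G hG))) rfl
      by_cases hs : f F = s
      · have : (fun F => if f F = s then c F else 0) =
          (fun F => if f F = s then (c + d) F else 0) + d := by
          ext G
          by_cases hG : d G = 0
          · simp [hG]
          · have : f G = s := (hf d hd hdc G F hG hdF).trans hs
            simp [this, add_assoc, z2_add_self]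
        rw [this]
        exact h1.add hd.cyc
      · have : (fun F => if f F = s then c F else 0) =
          (fun F => if f F = s then (c + d) F else 0) := by
          ext G
          by_cases hG : d G = 0
          · simp [hG]
          · have : f G ≠ s := by rw [hf d hd hdc G F hG hdF]; exact hs
            simp [this]
        rw [this]
        exact h1

/-- Contraction of `u` to `v`. -/
def kap (u v : ℕ) (c : Finset ℕ → ZMod 2) : Finset ℕ → ZMod 2 := fun F =>
  if u ∈ F then 0 else if v ∈ F then c F + c (insert u (F.erase v)) else c F

theorem bd_kap_both {V u v c R} (huR : u ∈ R) : bd V (kap u v c) R = 0 := by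
  apply Finset.sum_eq_zero
  intro w _
  simp [kap, huR]

theorem bd_kap_none {V u v c R} (huv : u ≠ v) (hu : u ∈ V) (hv : v ∈ V) (huR : u ∉ R)
    (hvR : v ∉ R) : bd V (kap u v c) R = bd V c R := by
  unfold bd
  have hu' : u ∈ V \ R := by simp [hu, huR]
  have hv' : v ∈ (V \ R).erase u := by simp [hv, hvR, huv.symm]
  rw [← Finset.add_sum_erase _ _ hu', ← Finset.add_sum_erase _ _ hv',
    ← Finset.add_sum_erase (V \ R) (fun w => c (insert w R)) hu',
    ← Finset.add_sum_erase _ (fun w => c (insert w R)) hv']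
  have h1 : kap u v c (insert u R) = 0 := by simp [kap]
  have h2 : kap u v c (insert v R) = c (insert v R) + c (insert u R) := by
    simp [kap, huv, huR, Finset.erase_insert hvR]
  have h3 : ∑ x ∈ ((V \ R).erase u).erase v, kap u v c (insert x R) =
      ∑ x ∈ ((V \ R).erase u).erase v, c (insert x R) := by
    apply Finset.sum_congr rfl
    intro x hx
    simp only [Finset.mem_erase] at hx
    simp [kap, huR, hvR, hx.2.1.symm, hx.1.symm]
  rw [h1, h2, h3]
  ring

theorem bd_kap_one {V u v c R} (huv : u ≠ v) (hu : u ∈ V) (hv : v ∈ V) (huR : u ∉ R)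
    (hvR : v ∈ R) : bd V (kap u v c) R = bd V c R + bd V c (insert u (R.erase v)) := by
  unfold bd
  have hu' : u ∈ V \ R := by simp [hu, huR]
  have hv' : v ∈ V \ (insert u (R.erase v)) := by simp [hv, huv.symm]
  have hset : (V \ (insert u (R.erase v))).erase v = (V \ R).erase u := by
    ext x
    simp only [Finset.mem_erase, Finset.mem_sdiff, Finset.mem_insert, not_or, not_and, not_not]
    grind
  rw [← Finset.add_sum_erase _ _ hu',
    ← Finset.add_sum_erase (V \ R) (fun w => c (insert w R)) hu',
    ← Finset.add_sum_erase (V \ (insert u (R.erase v)))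
      (fun w => c (insert w (insert u (R.erase v)))) hv', hset]
  have h1 : kap u v c (insert u R) = 0 := by simp [kap]
  have h2 : insert v (insert u (R.erase v)) = insert u R := by
    rw [Finset.insert_comm, Finset.insert_erase hvR]
  have h3 : ∑ x ∈ (V \ R).erase u, kap u v c (insert x R) =
      ∑ x ∈ (V \ R).erase u, c (insert x R) +
      ∑ x ∈ (V \ R).erase u, c (insert x (insert u (R.erase v))) := by
    rw [← Finset.sum_add_distrib]
    apply Finset.sum_congr rfl
    intro x hx
    simp only [Finset.mem_erase, Finset.mem_sdiff] at hx
    have hxv : x ≠ v := by rintro rfl; exact hx.2.2 hvR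
    simp only [kap, Finset.mem_insert, huR, hx.1.symm, hvR, or_true, or_self, if_true, if_false]
    rw [Finset.erase_insert_of_ne hxv, Finset.insert_comm u x]
  rw [h1, h2, h3]
  have := z2_add_self (c (insert u R))
  linear_combination -this

theorem bd_of_kap {V u v c} (huv : u ≠ v) (hu : u ∈ V) (hv : v ∈ V)
    (hk : ∀ R, bd V (kap u v c) R = 0) (h1 : ∀ R, u ∈ R → v ∉ R → bd V c R = 0) :
    ∀ R, bd V c R = 0 := by
  intro R
  by_cases huR : u ∈ R
  · by_cases hvR : v ∈ R
    · have h := bd_bd V c (R.erase v)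
      unfold bd at h
      change ∑ w ∈ V \ R.erase v, bd V c (insert w (R.erase v)) = 0 at h
      rw [Finset.sum_eq_single v, Finset.insert_erase hvR] at h
      · exact h
      · intro b _ hb
        apply h1
        · simp [huR, huv]
        · simp [hb.symm]
      · simp [hv]
    · exact h1 R huR hvR
  · by_cases hvR : v ∈ R
    · have := hk R
      rw [bd_kap_one huv hu hv huR hvR, h1 (insert u (R.erase v)) (by simp) (by simp [huv.symm]),
        add_zero] at this
      exact this
    · rw [← bd_kap_none huv hu hv huR hvR]
      exact hk R

theorem kap_cyc {V u v c} (huv : u ≠ v) (hu : u ∈ V) (hv : v ∈ V) (hc : Cyc V c) :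
    Cyc V (kap u v c) := by
  refine ⟨fun F hF => ?_, fun R => ?_⟩
  · unfold kap at hF
    split_ifs at hF with h1 h2
    · exact absurd rfl hF
    · by_cases h : c F = 0
      · have h3 := hc.supp (insert u (F.erase v)) (by simpa [h] using hF)
        rw [Finset.card_insert_of_notMem (by simp [h1]), Finset.card_erase_of_mem h2] at h3
        constructor
        · intro x hx
          by_cases hxv : x = v
          · exact hxv ▸ hv
          · exact h3.1 (by simp [hx, hxv])
        · have : 0 < F.card := Finset.card_pos.mpr ⟨v, h2⟩
          omega
      · exact hc.supp F h
    · exact hc.supp F hF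
  · by_cases huR : u ∈ R
    · exact bd_kap_both huR
    · by_cases hvR : v ∈ R
      · rw [bd_kap_one huv hu hv huR hvR, hc.cyc, hc.cyc, add_zero]
      · rw [bd_kap_none huv hu hv huR hvR, hc.cyc]

/-- The part of the lift away from the edge `uv`. -/
def lift0 (u v : ℕ) (c T : Finset ℕ → ZMod 2) : Finset ℕ → ZMod 2 := fun F =>
  if u ∈ F ∧ v ∈ F then 0 else c F * T (if u ∈ F then insert v (F.erase u) else F)

/-- The lift of a cycle of the contraction. -/
def liftC (V : Finset ℕ) (u v : ℕ) (c T : Finset ℕ → ZMod 2) : Finset ℕ → ZMod 2 := fun F =>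
  if u ∈ F ∧ v ∈ F then ∑ w ∈ V \ F, lift0 u v c T (insert w (F.erase v)) else lift0 u v c T F

theorem kap_lift {V u v c T} (huv : u ≠ v) (hT : ∀ F, T F ≠ 0 → kap u v c F ≠ 0) :
    kap u v (liftC V u v c T) = T := by
  ext1 F
  have hTF : T F = kap u v c F * T F := by
    by_cases h : T F = 0
    · simp [h]
    · rw [z2_one (hT F h), one_mul]
  by_cases huF : u ∈ F
  · rw [hTF]; simp [kap, huF]
  · by_cases hvF : v ∈ F
    · rw [hTF]
      have h1 : insert v ((insert u (F.erase v)).erase u) = F := by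
        rw [Finset.erase_insert (by simp [huF]), Finset.insert_erase hvF]
      simp [kap, huF, hvF, liftC, lift0, huv.symm, h1]
      ring
    · rw [hTF]
      simp [kap, huF, hvF, liftC, lift0]

theorem lift_cyc {V u v c T} (huv : u ≠ v) (hu : u ∈ V) (hv : v ∈ V) (hc : Cyc V c)
    (hTc : Cyc V T) (hT : ∀ F, T F ≠ 0 → kap u v c F ≠ 0) : Cyc V (liftC V u v c T) := by
  constructor
  · intro F hF
    unfold liftC at hF
    split_ifs at hF with h
    · obtain ⟨w, hw, hne⟩ := Finset.exists_ne_zero_of_sum_ne_zero hF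
      have h1 : c (insert w (F.erase v)) ≠ 0 := by
        unfold lift0 at hne
        split_ifs at hne
        · exact absurd rfl hne
        · exact left_ne_zero_of_mul hne
        · exact left_ne_zero_of_mul hne
      obtain ⟨h2, h3⟩ := hc.supp _ h1
      simp only [Finset.mem_sdiff] at hw
      rw [Finset.card_insert_of_notMem (by simp [hw.2]), Finset.card_erase_of_mem h.2] at h3
      constructor
      · intro x hx
        by_cases hxv : x = v
        · exact hxv ▸ hv
        · exact h2 (by simp [hx, hxv])
      · have : 0 < F.card := Finset.card_pos.mpr ⟨v, h.2⟩
        omega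
    · unfold lift0 at hF
      rw [if_neg h] at hF
      exact hc.supp F (left_ne_zero_of_mul hF)
  · apply bd_of_kap huv hu hv
    · rw [kap_lift huv hT]
      exact hTc.cyc
    · intro R huR hvR
      have hv' : v ∈ V \ R := by simp [hv, hvR]
      unfold bd
      rw [← Finset.add_sum_erase _ _ hv']
      have h1 : liftC V u v c T (insert v R) =
          ∑ w ∈ (V \ R).erase v, lift0 u v c T (insert w R) := by
        unfold liftC
        rw [if_pos (by simp [huR]), Finset.erase_insert hvR]
        apply Finset.sum_congr _ (fun _ _ => rfl)
        ext x; simp only [Finset.mem_erase, Finset.mem_sdiff, Finset.mem_insert]; tauto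
      have h2 : ∑ w ∈ (V \ R).erase v, liftC V u v c T (insert w R) =
          ∑ w ∈ (V \ R).erase v, lift0 u v c T (insert w R) := by
        apply Finset.sum_congr rfl
        intro w hw
        unfold liftC
        rw [if_neg]
        simp only [Finset.mem_erase] at hw
        simp [hvR, hw.1.symm]
      rw [h1, h2, z2_add_self]

theorem Cyc.another {V c F b} (hc : Cyc V c) (hF : c F ≠ 0) (hb : b ∈ F) :
    ∃ d ∈ V, d ∉ F ∧ c (insert d (F.erase b)) ≠ 0 := by
  by_contra hcon
  push Not at hcon
  have h := hc.cyc (F.erase b)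
  unfold bd at h
  rw [Finset.sum_eq_single b, Finset.insert_erase hb] at h
  · exact hF h
  · intro d hd hdb
    simp only [Finset.mem_sdiff, Finset.mem_erase] at hd
    exact hcon d hd.1 (fun h => hd.2 ⟨hdb, h⟩)
  · intro h'
    simp [(hc.supp F hF).1 hb] at h'

theorem lift0_ne {u v c T F} (h : lift0 u v c T F ≠ 0) : ¬ (u ∈ F ∧ v ∈ F) ∧ c F ≠ 0 ∧
    T (if u ∈ F then insert v (F.erase u) else F) ≠ 0 := by
  unfold lift0 at h
  by_cases huv : u ∈ F ∧ v ∈ F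
  · rw [if_pos huv] at h; exact absurd rfl h
  · rw [if_neg huv] at h
    exact ⟨huv, left_ne_zero_of_mul h, right_ne_zero_of_mul h⟩

theorem liftC_off {V u v c T F} (huv : ¬ (u ∈ F ∧ v ∈ F)) (h : liftC V u v c T F ≠ 0) :
    lift0 u v c T F ≠ 0 := by
  unfold liftC at h
  rwa [if_neg huv] at h

theorem liftC_on {V u v c T F} (huv : u ∈ F ∧ v ∈ F) (h : liftC V u v c T F ≠ 0) :
    ∃ w ∈ V, w ∉ F ∧ lift0 u v c T (insert w (F.erase v)) ≠ 0 := by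
  unfold liftC at h
  rw [if_pos huv] at h
  obtain ⟨w, hw, hne⟩ := Finset.exists_ne_zero_of_sum_ne_zero h
  rw [Finset.mem_sdiff] at hw
  exact ⟨w, hw.1, hw.2, hne⟩

theorem AdjC.symm {c u v} (h : AdjC c u v) : AdjC c v u := by
  obtain ⟨h1, F, h2, h3, h4⟩ := h
  exact ⟨h1.symm, F, h2, h4, h3⟩

theorem mem_vertsC {V c w} : w ∈ vertsC V c ↔ w ∈ V ∧ ∃ F, c F ≠ 0 ∧ w ∈ F := by
  simp [vertsC]

theorem Cyc.mem_verts {V c F w} (hc : Cyc V c) (hF : c F ≠ 0) (hw : w ∈ F) : w ∈ vertsC V c :=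
  mem_vertsC.mpr ⟨(hc.supp F hF).1 hw, F, hF, hw⟩

theorem Motion.mono {q E E' m} (h : Motion q E m) (hE : ∀ u v, E' u v → E u v) :
    Motion q E' m := fun u v h' => h u v (hE u v h')

theorem lift_adj {V u v c T F0} (huv : u ≠ v) (hu : u ∈ V) (hv : v ∈ V) (hc : Cyc V c)
    (hTc : Cyc V T) (hT : ∀ F, T F ≠ 0 → kap u v c F ≠ 0) (hF0 : c F0 ≠ 0) (hu0 : u ∈ F0)
    (hv0 : v ∈ F0) (x y : ℕ) (h : AdjC (liftC V u v c T) x y) : AdjC c x y := by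
  have hcyc := lift_cyc huv hu hv hc hTc hT
  obtain ⟨hxy, F, hF, hx, hy⟩ := h
  refine ⟨hxy, ?_⟩
  by_cases hF2 : u ∈ F ∧ v ∈ F
  · by_cases h1 : x ≠ v ∧ y ≠ v
    · obtain ⟨w, _, _, hw⟩ := liftC_on hF2 hF
      exact ⟨_, (lift0_ne hw).2.1, by simp [hx, h1.1], by simp [hy, h1.2]⟩
    by_cases h2 : x ≠ u ∧ y ≠ u
    · obtain ⟨d, _, hd, hne⟩ := hcyc.another hF hF2.1
      have : ¬ (u ∈ insert d (F.erase u) ∧ v ∈ insert d (F.erase u)) := by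
        rintro ⟨h, _⟩
        simp only [Finset.mem_insert, Finset.mem_erase, ne_eq, not_true_eq_false, false_and,
          or_false] at h
        exact hd (h ▸ hF2.1)
      exact ⟨_, (lift0_ne (liftC_off this hne)).2.1, by simp [hx, h2.1], by simp [hy, h2.2]⟩
    refine ⟨F0, hF0, ?_, ?_⟩ <;> grind
  · exact ⟨F, (lift0_ne (liftC_off hF2 hF)).2.1, hx, hy⟩

theorem lift_verts {V u v c T F w} (hTc : Cyc V T)
    (hF : liftC V u v c T F ≠ 0) (hw : w ∈ F) (hwu : w ≠ u) : w ∈ vertsC V T := by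
  by_cases hF2 : u ∈ F ∧ v ∈ F
  · obtain ⟨w', _, _, hw'⟩ := liftC_on hF2 hF
    have h := lift0_ne hw'
    refine hTc.mem_verts h.2.2 ?_
    grind
  · have h := lift0_ne (liftC_off hF2 hF)
    refine hTc.mem_verts h.2.2 ?_
    grind

theorem lift_rigid {p V u v c T F0} (hp : Generic p) (huv : u ≠ v) (hc : MinCyc V c)
    (hTc : MinCyc V T) (hT : ∀ F, T F ≠ 0 → kap u v c F ≠ 0) (hF0 : c F0 ≠ 0) (hu0 : u ∈ F0)
    (hv0 : v ∈ F0) (ih : Rigid p (AdjC T) (vertsC V T)) :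
    Rigid p (AdjC c) (vertsC V (liftC V u v c T)) := by
  have hu : u ∈ V := (hc.cyc.supp _ hF0).1 hu0
  have hv : v ∈ V := (hc.cyc.supp _ hF0).1 hv0
  have hcyc := lift_cyc huv hu hv hc.cyc hTc.cyc hT
  have hkap := kap_lift (V := V) huv hT
  have hadj := lift_adj huv hu hv hc.cyc hTc.cyc hT hF0 hu0 hv0
  have hverts := fun F w => lift_verts (V := V) (u := u) (v := v) (c := c) (F := F) (w := w) hTc.cyc
  set c' := liftC V u v c T with hc'
  have hoff : ∀ F, c' F ≠ 0 → ¬ (u ∈ F ∧ v ∈ F) → c F ≠ 0 := fun F h1 h2 =>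
    (lift0_ne (liftC_off h2 h1)).2.1
  -- a facet on the edge
  obtain ⟨F, hF, huF, hvF⟩ : ∃ F, c' F ≠ 0 ∧ u ∈ F ∧ v ∈ F := by
    by_contra hcon
    push Not at hcon
    rcases hc.min c' hcyc (fun F hF => hoff F hF (fun h => hcon F hF h.1 h.2)) with h | h
    · apply hTc.ne
      rw [← hkap, h]
      ext F; simp [kap]
    · exact hcon F0 (by rw [h]; exact hF0) hu0 hv0
  have hF4 := (hcyc.supp F hF).2
  have hcard : ((F.erase u).erase v).card = 2 := by
    rw [Finset.card_erase_of_mem (by simp [hvF, huv.symm]), Finset.card_erase_of_mem huF, hF4]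
  obtain ⟨a, b, hab, habF⟩ := Finset.card_eq_two.mp hcard
  have ha : a ∈ (F.erase u).erase v := by rw [habF]; simp
  have hb : b ∈ (F.erase u).erase v := by rw [habF]; simp
  simp only [Finset.mem_erase] at ha hb
  obtain ⟨d, hdV, hdF, hd⟩ := hcyc.another hF hb.2.2
  have q : ℕ → Fin 4 → ℝ := p
  have hrig : Rigid (Function.update p u (p v)) (AdjC c') (vertsC V c') := by
    intro m hm
    have hnb : ∀ x, x ≠ u → AdjC c' u x → AdjC c' v x → (m u - m v) ⬝ᵥ p x = 0 := by
      intro x hxu h1 h2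
      have e1 := hm _ _ h1
      have e2 := hm _ _ h2
      rw [Function.update_of_ne hxu, Function.update_self] at e1
      rw [Function.update_of_ne hxu, Function.update_of_ne huv.symm] at e2
      rw [sub_dotProduct, e1, e2, sub_self]
    have hvv : (m u - m v) ⬝ᵥ p v = 0 := by
      have e1 := hm u v ⟨huv, F, hF, huF, hvF⟩
      rw [Function.update_of_ne huv.symm, Function.update_self] at e1
      rw [sub_dotProduct, e1, sub_self]
    have hmuv : m u = m v := by
      rw [← sub_eq_zero]
      apply hp.perp (F := {v, a, b, d})
      · have h1 : d ≠ v := fun h => hdF (h ▸ hvF)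
        have h2 : d ≠ a := fun h => hdF (h ▸ ha.2.2)
        have h3 : d ≠ b := fun h => hdF (h ▸ hb.2.2)
        rw [Finset.card_insert_of_notMem (by simp [ha.1.symm, hb.1.symm, h1.symm]),
          Finset.card_insert_of_notMem (by simp [hab, h2.symm]),
          Finset.card_insert_of_notMem (by simp [h3.symm]), Finset.card_singleton]
      · intro w hw
        simp only [Finset.mem_insert, Finset.mem_singleton] at hw
        have hdu : d ≠ u := fun h => hdF (h ▸ huF)
        have hdv : d ≠ v := fun h => hdF (h ▸ hvF)
        rcases hw with rfl | rfl | rfl | rfl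
        · exact hvv
        · exact hnb _ ha.2.1 ⟨ha.2.1.symm, F, hF, huF, ha.2.2⟩ ⟨ha.1.symm, F, hF, hvF, ha.2.2⟩
        · exact hnb _ hb.2.1 ⟨hb.2.1.symm, F, hF, huF, hb.2.2⟩ ⟨hb.1.symm, F, hF, hvF, hb.2.2⟩
        · exact hnb _ hdu ⟨hdu.symm, _, hd, by simp [hb.2.1.symm, huF], by simp⟩
            ⟨hdv.symm, _, hd, by simp [hb.1.symm, hvF], by simp⟩
    have hmT : Motion p (AdjC T) m := by
      rintro x y ⟨hxy, G, hG, hx, hy⟩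
      have hG' : kap u v c' G ≠ 0 := by rw [hkap]; exact hG
      unfold kap at hG'
      split_ifs at hG' with h1 h2
      · exact absurd rfl hG'
      · have hxu : x ≠ u := fun h => h1 (h ▸ hx)
        have hyu : y ≠ u := fun h => h1 (h ▸ hy)
        by_cases h3 : c' G = 0
        · have h4 : c' (insert u (G.erase v)) ≠ 0 := by simpa [h3] using hG'
          by_cases hxv : x = v
          · have := hm u y ⟨hyu.symm, _, h4, by simp, by
              rw [Finset.mem_insert, Finset.mem_erase]; exact Or.inr ⟨by rw [← hxv]; exact hxy.symm, hy⟩⟩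
            rw [Function.update_of_ne hyu, Function.update_self, hmuv] at this
            rw [hxv]; exact this
          · by_cases hyv : y = v
            · have := hm u x ⟨hxu.symm, _, h4, by simp, by
                rw [Finset.mem_insert, Finset.mem_erase]; exact Or.inr ⟨hxv, hx⟩⟩
              rw [Function.update_of_ne hxu, Function.update_self, hmuv] at this
              rw [hyv]; exact this.symm
            · have := hm x y ⟨hxy, _, h4, by simp [hxv, hx], by simp [hyv, hy]⟩
              rwa [Function.update_of_ne hxu, Function.update_of_ne hyu] at this
        · have := hm x y ⟨hxy, G, h3, hx, hy⟩
          rwa [Function.update_of_ne hxu, Function.update_of_ne hyu] at this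
      · have hxu : x ≠ u := fun h => h1 (h ▸ hx)
        have hyu : y ≠ u := fun h => h1 (h ▸ hy)
        have := hm x y ⟨hxy, G, hG', hx, hy⟩
        rwa [Function.update_of_ne hxu, Function.update_of_ne hyu] at this
    obtain ⟨s, hs⟩ := ih m hmT
    refine ⟨s, fun w hw => ?_⟩
    obtain ⟨_, G, hG, hwG⟩ := mem_vertsC.mp hw
    by_cases hwu : w = u
    · rw [hwu, Function.update_self, hmuv]
      exact hs v (hverts F v hF hvF huv.symm)
    · rw [Function.update_of_ne hwu]
      exact hs w (hverts G w hG hwG hwu)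
  have := hp.transfer hF4 (fun w hw => hcyc.mem_verts hF hw) (W := vertsC V c') (fun x y h => by
    obtain ⟨_, G, hG, hx, hy⟩ := h
    exact ⟨hcyc.mem_verts hG hx, hcyc.mem_verts hG hy⟩) hrig
  exact fun m hm => this m (hm.mono hadj)

theorem kap_ne {u v c F} (h : kap u v c F ≠ 0) : u ∉ F ∧ (v ∉ F → c F ≠ 0) ∧
    (v ∈ F → (c F ≠ 0 ∧ c (insert u (F.erase v)) = 0) ∨
      (c F = 0 ∧ c (insert u (F.erase v)) ≠ 0)) := by
  unfold kap at h
  split_ifs at h with h1 h2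
  · exact absurd rfl h
  · refine ⟨h1, fun h' => absurd h2 h', fun _ => ?_⟩
    by_cases h3 : c F = 0
    · right; exact ⟨h3, by simpa [h3] using h⟩
    · left
      refine ⟨h3, ?_⟩
      by_contra h4
      exact h (by rw [z2_one h3, z2_one h4, z2_add_self])
  · exact ⟨h1, fun _ => h, fun h' => absurd h' h2⟩

theorem liftC_eq {V u v c T F} (h : ¬ (u ∈ F ∧ v ∈ F)) : liftC V u v c T F =
    c F * T (if u ∈ F then insert v (F.erase u) else F) := by
  simp only [liftC, lift0, if_neg h]

open Classical in
theorem fogelsanger {p} (hp : Generic p) {V c} (hc : MinCyc V c) :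
    Rigid p (AdjC c) (vertsC V c) := by
  induction hn : (vertsC V c).card using Nat.strong_induction_on generalizing c with
  | _ n IH =>
  obtain ⟨F0, hF0⟩ := Function.ne_iff.mp hc.ne
  replace hF0 : c F0 ≠ 0 := hF0
  have hF04 := (hc.cyc.supp _ hF0).2
  obtain ⟨u, hu0, v, hv0, huv⟩ := Finset.one_lt_card.mp (show 1 < F0.card by omega)
  have hu : u ∈ V := (hc.cyc.supp _ hF0).1 hu0
  have hv : v ∈ V := (hc.cyc.supp _ hF0).1 hv0
  -- rigidity of lifts
  have hlift : ∀ T, MinCyc V T → (∀ G, T G ≠ 0 → kap u v c G ≠ 0) →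
      Rigid p (AdjC c) (vertsC V (liftC V u v c T)) := by
    intro T hT hTk
    apply lift_rigid hp huv hc hT hTk hF0 hu0 hv0
    refine IH _ ?_ hT rfl
    rw [← hn]
    apply Finset.card_lt_card
    rw [Finset.ssubset_iff_of_subset]
    · refine ⟨u, hc.cyc.mem_verts hF0 hu0, fun h => ?_⟩
      obtain ⟨_, F, hF, huF⟩ := mem_vertsC.mp h
      exact (kap_ne (hTk F hF)).1 huF
    · intro w hw
      obtain ⟨hwV, F, hF, hwF⟩ := mem_vertsC.mp hw
      obtain ⟨h1, h2, h3⟩ := kap_ne (hTk F hF)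
      by_cases hvF : v ∈ F
      · rcases h3 hvF with h | h
        · exact hc.cyc.mem_verts h.1 hwF
        · by_cases hwv : w = v
          · rw [hwv]; exact hc.cyc.mem_verts hF0 hv0
          · exact hc.cyc.mem_verts h.2 (by simp [hwv, hwF])
      · exact hc.cyc.mem_verts (h2 hvF) hwF
  intro m hm
  have hex : ∀ F, ∃ a, c F ≠ 0 → ∀ w ∈ F, m w = (symM a).mulVec (p w) := by
    intro F
    by_cases hF : c F = 0
    · exact ⟨0, fun h => absurd hF h⟩
    · obtain ⟨a, ha⟩ := hp.clique (hc.cyc.supp F hF).2 (Finset.Subset.refl F)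
        (E := AdjC c) (fun x hx y hy hxy => ⟨hxy, F, hF, hx, hy⟩) m hm
      exact ⟨a, fun _ => ha⟩
  choose S hS using hex
  have huniq : ∀ (F : Finset ℕ) a b, F.card = 4 → (∀ w ∈ F, m w = (symM a).mulVec (p w)) →
      (∀ w ∈ F, m w = (symM b).mulVec (p w)) → a = b := by
    intro F a b hF ha hb
    exact hp.sym_eq hF (fun w hw => (ha w hw).symm.trans (hb w hw))
  have hSu : ∀ F a, c F ≠ 0 → (∀ w ∈ F, m w = (symM a).mulVec (p w)) → S F = a := by
    intro F a hF ha
    exact huniq F _ _ (hc.cyc.supp F hF).2 (hS F hF) ha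
  let f : Finset ℕ → (Sym2 (Fin 4) → ℝ) := fun F =>
    if c F ≠ 0 then S F else S (insert u (F.erase v))
  have hf : ∀ d, MinCyc V d → (∀ G, d G ≠ 0 → kap u v c G ≠ 0) →
      ∀ F G, d F ≠ 0 → d G ≠ 0 → f F = f G := by
    intro T hT hTk
    obtain ⟨a, ha⟩ := hlift T hT hTk m hm
    have hcyc := lift_cyc huv hu hv hc.cyc hT.cyc hTk
    have key : ∀ F, T F ≠ 0 → f F = a := by
      intro F hF
      obtain ⟨h1, h2, h3⟩ := kap_ne (hTk F hF)
      have hA : c F ≠ 0 → f F = a := by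
        intro hcF
        have : f F = S F := by simp only [f]; rw [if_pos hcF]
        rw [this]
        apply hSu F a hcF
        intro w hw
        apply ha
        refine hcyc.mem_verts (F := F) ?_ hw
        rw [liftC_eq (by tauto), if_neg h1]
        exact mul_ne_zero hcF hF
      by_cases hvF : v ∈ F
      · rcases h3 hvF with h | h
        · exact hA h.1
        · have : f F = S (insert u (F.erase v)) := by
            simp only [f]; rw [if_neg (by simp [h.1])]
          rw [this]
          apply hSu _ a h.2
          intro w hw
          apply ha
          refine hcyc.mem_verts (F := insert u (F.erase v)) ?_ hw
          rw [liftC_eq (by simp [huv.symm]), if_pos (by simp),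
            Finset.erase_insert (by simp [h1]), Finset.insert_erase hvF]
          exact mul_ne_zero h.2 hF
      · exact hA (h2 hvF)
    intro F G hF hG
    rw [key F hF, key G hG]
  let cA : (Sym2 (Fin 4) → ℝ) → Finset ℕ → ZMod 2 := fun s F => if S F = s then c F else 0
  have hcA_ne : ∀ s F, cA s F ≠ 0 → c F ≠ 0 ∧ S F = s := by
    intro s F h
    simp only [cA] at h
    split_ifs at h with h1
    · exact ⟨h, h1⟩
    · exact absurd rfl h
  have hkA : ∀ s, kap u v (cA s) = fun F => if f F = s then kap u v c F else 0 := by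
    intro s
    ext1 F
    by_cases huF : u ∈ F
    · simp [kap, huF]
    by_cases hvF : v ∈ F
    · have e1 : kap u v (cA s) F = cA s F + cA s (insert u (F.erase v)) := by simp [kap, huF, hvF]
      have e2 : kap u v c F = c F + c (insert u (F.erase v)) := by simp [kap, huF, hvF]
      rw [e1, e2]
      by_cases h1 : c F = 0
      · simp [cA, f, h1]
      · by_cases h2 : c (insert u (F.erase v)) = 0
        · simp [cA, f, h1, h2]
        · have h4 := (hc.cyc.supp F h1).2
          obtain ⟨a, ha⟩ := hp.clique h4 (Finset.subset_insert u F) (E := AdjC c) (by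
            intro x hx y hy hxy
            refine ⟨hxy, ?_⟩
            by_cases hx' : x ∈ F ∧ y ∈ F
            · exact ⟨F, h1, hx'.1, hx'.2⟩
            · by_cases hx2 : x ≠ v ∧ y ≠ v
              · exact ⟨_, h2, by simp only [Finset.mem_insert, Finset.mem_erase] at *; tauto,
                  by simp only [Finset.mem_insert, Finset.mem_erase] at *; tauto⟩
              · refine ⟨F0, hF0, ?_, ?_⟩ <;> grind) m hm
          have hSe : S F = S (insert u (F.erase v)) := by
            rw [hSu F a h1 (fun w hw => ha w (by simp [hw])), hSu _ a h2 (fun w hw => ha w (by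
              simp only [Finset.mem_insert, Finset.mem_erase] at *; tauto))]
          simp only [cA, ← hSe, z2_one h1, z2_one h2]
          split_ifs <;> first | rfl | simp [z2_add_self]
    · simp only [kap, huF, hvF, cA, f, if_false]
      by_cases h1 : c F = 0
      · simp [h1]
      · simp [h1]
  have hkcyc : ∀ s R, bd V (kap u v (cA s)) R = 0 := by
    intro s R
    rw [hkA s]
    exact ((kap_cyc huv hu hv hc.cyc).split f hf s).cyc R
  have hbd : ∀ s R, u ∈ R → v ∉ R → bd V (cA s) R = 0 := by
    intro s R huR hvR
    by_contra hne
    have key : ∀ s, bd V (cA s) R ≠ 0 →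
        (insert v R).card = 4 ∧ ∀ w ∈ insert v R, m w = (symM s).mulVec (p w) := by
      intro s hs
      have hu' : u ∉ insert v (R.erase u) := by simp [huv]
      have e := bd_kap_one (c := cA s) huv hu hv hu' (Finset.mem_insert_self v (R.erase u))
      rw [hkcyc, Finset.erase_insert (by simp [hvR]), Finset.insert_erase huR] at e
      have hs' : bd V (cA s) (insert v (R.erase u)) ≠ 0 := by
        intro h; rw [h, zero_add] at e; exact hs e.symm
      obtain ⟨w, hw, hw1⟩ := Finset.exists_ne_zero_of_sum_ne_zero hs
      obtain ⟨w', hw', hw1'⟩ := Finset.exists_ne_zero_of_sum_ne_zero hs'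
      obtain ⟨h1, h2⟩ := hcA_ne _ _ hw1
      obtain ⟨h1', h2'⟩ := hcA_ne _ _ hw1'
      have c1 := (hc.cyc.supp _ h1).2
      rw [Finset.card_insert_of_notMem (Finset.mem_sdiff.mp hw).2] at c1
      refine ⟨by rw [Finset.card_insert_of_notMem hvR, c1], ?_⟩
      intro x hx
      rcases Finset.mem_insert.mp hx with rfl | hx
      · rw [← h2']; exact hS _ h1' _ (by simp)
      · rw [← h2]; exact hS _ h1 _ (by simp [hx])
    have huq : ∀ s', bd V (cA s') R ≠ 0 → s' = s := by
      intro s' hs'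
      exact huniq _ _ _ (key s hne).1 (key s' hs').2 (key s hne).2
    have hz := hc.cyc.cyc R
    let I : Finset (Sym2 (Fin 4) → ℝ) := (V \ R).image fun w => S (insert w R)
    have hsum : bd V c R = ∑ s' ∈ I, bd V (cA s') R := by
      unfold bd
      rw [Finset.sum_comm]
      apply Finset.sum_congr rfl
      intro w hw
      simp only [cA]
      rw [Finset.sum_ite_eq, if_pos]
      exact Finset.mem_image_of_mem (fun w => S (insert w R)) hw
    have hsI : s ∈ I := by
      obtain ⟨w, hw, hw1⟩ := Finset.exists_ne_zero_of_sum_ne_zero hne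
      rw [← (hcA_ne _ _ hw1).2]
      exact Finset.mem_image_of_mem (fun w => S (insert w R)) hw
    rw [hsum, Finset.sum_eq_single s (fun s' _ h => by
      by_contra h'; exact h (huq s' h')) (fun h => absurd hsI h)] at hz
    exact hne hz
  have hcyc : Cyc V (cA (S F0)) :=
    ⟨fun F hF => hc.cyc.supp F (hcA_ne _ _ hF).1,
      bd_of_kap huv hu hv (hkcyc _) (hbd _)⟩
  have hall : cA (S F0) = c := by
    rcases hc.min _ hcyc (fun F hF => (hcA_ne _ _ hF).1) with h | h
    · have := congrFun h F0
      simp only [cA, if_true] at this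
      exact absurd this hF0
    · exact h
  refine ⟨S F0, fun w hw => ?_⟩
  obtain ⟨_, F, hF, hwF⟩ := mem_vertsC.mp hw
  have := (hcA_ne (S F0) F (by rw [hall]; exact hF)).2
  rw [← this]
  exact hS F hF w hwF

/-! ### Part 3: weak pseudomanifolds and the lower bound theorem -/

/-- A tetrahedron of the complex. -/
def Fct (K : SComplex) (F : Finset ℕ) : Prop := F ∈ K.faces ∧ F.card = 4

structure Weak (K : SComplex) : Prop where
  sub : ∀ s ∈ K.faces, ∃ F, K.Fct F ∧ s ⊆ F
  ridge : ∀ s ∈ K.faces, s.card = 3 →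
    (K.faces.filter fun F => F.card = 3 + 1 ∧ s ⊆ F).card = 2
  conn : ∀ f : Finset ℕ → ZMod 2, (∀ F G, K.Fct F → K.Fct G → (F ∩ G).card = 3 → f F = f G) →
    ∀ F G, K.Fct F → K.Fct G → f F = f G
  ne : K.faces.Nonempty

theorem mem_vertexSet {K : SComplex} {w} : w ∈ K.vertexSet ↔ {w} ∈ K.faces := by
  unfold vertexSet
  rw [Finset.mem_sup]
  constructor
  · rintro ⟨s, hs, hw⟩
    exact K.down_closed s hs _ (by simpa using hw) (by simp)
  · intro h
    exact ⟨_, h, by simp⟩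

theorem face_sub_vertexSet {K : SComplex} {s} (hs : s ∈ K.faces) : s ⊆ K.vertexSet :=
  fun _ hw => mem_vertexSet.mpr (K.down_closed s hs _ (by simpa using hw) (by simp))

theorem sub_face {K : SComplex} {s t} (hs : s ∈ K.faces) (hts : t ⊆ s) (ht : t.Nonempty) :
    t ∈ K.faces := K.down_closed s hs t hts ht.ne_empty

/-- Exactly two tetrahedra contain a ridge. -/
def RidgeProp (K : SComplex) : Prop := ∀ s ∈ K.faces, s.card = 3 →
    (K.faces.filter fun F => F.card = 3 + 1 ∧ s ⊆ F).card = 2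

theorem RidgeProp.two {K} (hK : RidgeProp K) {R F G H} (hR : R.card = 3) (hF : K.Fct F)
    (hG : K.Fct G) (hH : K.Fct H) (hRF : R ⊆ F) (hRG : R ⊆ G) (hRH : R ⊆ H) (hFG : F ≠ G) :
    H = F ∨ H = G := by
  have h := hK R (sub_face hF.1 hRF (Finset.card_pos.mp (by omega))) hR
  obtain ⟨a, b, hab, he⟩ := Finset.card_eq_two.mp h
  have m : ∀ X, K.Fct X → R ⊆ X → X = a ∨ X = b := by
    intro X hX hRX
    have : X ∈ ({a, b} : Finset (Finset ℕ)) := by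
      rw [← he]; simp [hX.1, hX.2, hRX]
    simpa using this
  have h1 := m F hF hRF
  have h2 := m G hG hRG
  have h3 := m H hH hRH
  grind

theorem RidgeProp.other {K} (hK : RidgeProp K) {R F} (hR : R.card = 3) (hF : K.Fct F)
    (hRF : R ⊆ F) : ∃ G, K.Fct G ∧ R ⊆ G ∧ G ≠ F ∧ F ∩ G = R := by
  have h := hK R (sub_face hF.1 hRF (Finset.card_pos.mp (by omega))) hR
  obtain ⟨G, hG, hne⟩ := Finset.exists_mem_ne (s := K.faces.filter fun F => F.card = 3 + 1 ∧ R ⊆ F)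
    (by omega) F
  simp only [Finset.mem_filter] at hG
  refine ⟨G, ⟨hG.1, hG.2.1⟩, hG.2.2, hne, ?_⟩
  symm
  apply Finset.eq_of_subset_of_card_le (Finset.subset_inter hRF hG.2.2)
  by_contra hlt
  have h1 : (F ∩ G).card ≤ F.card := Finset.card_le_card Finset.inter_subset_left
  have h2 := hF.2
  have h3 : F ∩ G = F := Finset.eq_of_subset_of_card_le Finset.inter_subset_left (by omega)
  have h4 : F ∩ G = G := Finset.eq_of_subset_of_card_le Finset.inter_subset_right (by omega)
  exact hne (h4.symm.trans h3)

open Classical in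
/-- The indicator chain of the tetrahedra. -/
noncomputable def ch (K : SComplex) : Finset ℕ → ZMod 2 := fun F => if K.Fct F then 1 else 0

theorem ch_ne {K F} : ch K F ≠ 0 ↔ K.Fct F := by
  unfold ch
  split_ifs with h <;> simp [h]

theorem Weak.minCyc {K} (hK : Weak K) : MinCyc K.vertexSet (ch K) := by
  classical
  have hr : RidgeProp K := hK.ridge
  refine ⟨⟨fun F hF => ?_, fun R => ?_⟩, ?_, ?_⟩
  · rw [ch_ne] at hF
    exact ⟨face_sub_vertexSet hF.1, hF.2⟩
  · unfold bd
    by_cases hR : ∃ w ∈ K.vertexSet \ R, K.Fct (insert w R)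
    · obtain ⟨w, hw, hF⟩ := hR
      have hwR := (Finset.mem_sdiff.mp hw).2
      have hR3 : R.card = 3 := by
        have := hF.2
        rw [Finset.card_insert_of_notMem hwR] at this
        omega
      obtain ⟨G, hG, hRG, hne, hi⟩ := hr.other hR3 hF (Finset.subset_insert w R)
      have hcd : (G \ R).card = 1 := by
        rw [Finset.card_sdiff_of_subset hRG, hG.2, hR3]
      obtain ⟨w', hw'⟩ := Finset.card_eq_one.mp hcd
      have hw'' : w' ∈ G \ R := by rw [hw']; simp
      have hG' : G = insert w' R := by
        rw [← Finset.sdiff_union_of_subset hRG, hw']; rfl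
      rw [Finset.mem_sdiff] at hw''
      have hne' : w ≠ w' := by rintro rfl; exact hne hG'
      have hw'V : w' ∈ K.vertexSet \ R :=
        Finset.mem_sdiff.mpr ⟨face_sub_vertexSet hG.1 hw''.1, hw''.2⟩
      rw [Finset.sum_eq_add_of_mem w w' hw hw'V hne']
      · rw [z2_one (ch_ne.mpr hF), z2_one (ch_ne.mpr (hG' ▸ hG)), z2_add_self]
      · rintro x hx ⟨hx1, hx2⟩
        by_contra hxne
        rw [← ne_eq, ch_ne] at hxne
        have hxR := (Finset.mem_sdiff.mp hx).2
        have hxi : x ∈ insert x R := Finset.mem_insert_self x R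
        rcases hr.two hR3 hF hG hxne (Finset.subset_insert w R) hRG (Finset.subset_insert x R)
          hne.symm with h | h
        · rw [h] at hxi; simp at hxi; tauto
        · rw [h, hG'] at hxi; simp at hxi; tauto
    · push Not at hR
      apply Finset.sum_eq_zero
      intro w hw
      by_contra h
      exact hR w hw (ch_ne.mp h)
  · obtain ⟨s, hs⟩ := hK.ne
    obtain ⟨F, hF, _⟩ := hK.sub s hs
    intro h
    exact ch_ne.mpr hF (by rw [h]; rfl)
  · intro d hd hdc
    have hconst := hK.conn d (by
      intro F G hF hG hFG
      have hb := hd.cyc (F ∩ G)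
      have hne : F ≠ G := by rintro rfl; rw [Finset.inter_self, hF.2] at hFG; omega
      have c1 : (F \ (F ∩ G)).card = 1 := by
        rw [Finset.card_sdiff_of_subset Finset.inter_subset_left, hF.2, hFG]
      have c2 : (G \ (F ∩ G)).card = 1 := by
        rw [Finset.card_sdiff_of_subset Finset.inter_subset_right, hG.2, hFG]
      obtain ⟨a, ha⟩ := Finset.card_eq_one.mp c1
      obtain ⟨b, hb'⟩ := Finset.card_eq_one.mp c2
      have hF' : insert a (F ∩ G) = F := by
        conv_rhs => rw [← Finset.sdiff_union_of_subset (Finset.inter_subset_left (s₁ := F) (s₂ := G)), ha]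
        rfl
      have hG' : insert b (F ∩ G) = G := by
        conv_rhs => rw [← Finset.sdiff_union_of_subset (Finset.inter_subset_right (s₁ := F) (s₂ := G)), hb']
        rfl
      have ha1 : a ∈ F \ (F ∩ G) := by rw [ha]; simp
      have hb1 : b ∈ G \ (F ∩ G) := by rw [hb']; simp
      have hab : a ≠ b := by rintro rfl; exact hne (hF'.symm.trans hG')
      unfold bd at hb
      rw [Finset.mem_sdiff] at ha1 hb1
      rw [Finset.sum_eq_add_of_mem a b
        (Finset.mem_sdiff.mpr ⟨face_sub_vertexSet hF.1 ha1.1, ha1.2⟩)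
        (Finset.mem_sdiff.mpr ⟨face_sub_vertexSet hG.1 hb1.1, hb1.2⟩) hab, hF', hG'] at hb
      · exact z2_eq hb
      · rintro x hx ⟨hx1, hx2⟩
        by_contra hxne
        have hxF := ch_ne.mp (hdc _ hxne)
        have hxR := (Finset.mem_sdiff.mp hx).2
        have hxi : x ∈ insert x (F ∩ G) := Finset.mem_insert_self x _
        rcases hr.two hFG hF hG hxF Finset.inter_subset_left Finset.inter_subset_right
          (Finset.subset_insert x _) hne with h | h
        · rw [h, ← hF'] at hxi
          exact (Finset.mem_insert.mp hxi).elim hx1 hxR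
        · rw [h, ← hG'] at hxi
          exact (Finset.mem_insert.mp hxi).elim hx2 hxR)
    by_cases h0 : d = 0
    · exact Or.inl h0
    · right
      obtain ⟨F, hF⟩ := Function.ne_iff.mp h0
      replace hF : d F ≠ 0 := hF
      have hFf := ch_ne.mp (hdc F hF)
      ext1 G
      by_cases hG : K.Fct G
      · rw [hconst G F hG hFf, z2_one hF, z2_one (ch_ne.mpr hG)]
      · have h1 : ch K G = 0 := by by_contra h; exact hG (ch_ne.mp h)
        have h2 : d G = 0 := by by_contra h; exact hdc G h h1
        rw [h1, h2]

theorem Weak.rigid {p} (hp : Generic p) {K} (hK : Weak K) :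
    Rigid p (fun u v => u ≠ v ∧ {u, v} ∈ K.faces) K.vertexSet := by
  have h := fogelsanger hp hK.minCyc
  intro m hm
  obtain ⟨a, ha⟩ := h m (hm.mono (by
    rintro u v ⟨huv, F, hF, hu, hv⟩
    refine ⟨huv, sub_face (ch_ne.mp hF).1 ?_ (by simp)⟩
    intro x hx
    simp only [Finset.mem_insert, Finset.mem_singleton] at hx
    rcases hx with rfl | rfl <;> assumption))
  refine ⟨a, fun w hw => ha w ?_⟩
  obtain ⟨F, hF, hwF⟩ := hK.sub _ (mem_vertexSet.mp hw)
  exact hK.minCyc.cyc.mem_verts (ch_ne.mpr hF) (by simpa using hwF)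

theorem mem_lk {K : SComplex} {σ s} : s ∈ (K.lk σ).faces ↔
    s ∈ K.faces ∧ s ∩ σ = ∅ ∧ s ∪ σ ∈ K.faces := by
  simp [lk]

theorem fnum_zero (K : SComplex) : K.fnum 0 = K.vertexSet.card := by
  unfold fnum
  symm
  refine Finset.card_bij (fun w _ => {w}) ?_ ?_ ?_
  · intro w hw
    simp [mem_vertexSet.mp hw]
  · intro a _ b _ h
    simpa using h
  · intro s hs
    simp only [Finset.mem_filter, zero_add] at hs
    obtain ⟨a, rfl⟩ := Finset.card_eq_one.mp hs.2
    exact ⟨a, mem_vertexSet.mpr hs.1, rfl⟩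

theorem lk_vertex {K : SComplex} {t w} :
    w ∈ (K.lk {t}).vertexSet ↔ w ≠ t ∧ {t, w} ∈ K.faces := by
  rw [mem_vertexSet, mem_lk]
  have h : ({w} : Finset ℕ) ∪ {t} = {t, w} := by ext; simp; tauto
  rw [h]
  constructor
  · rintro ⟨_, h2, h3⟩
    refine ⟨?_, h3⟩
    rintro rfl
    simp at h2
  · rintro ⟨h1, h2⟩
    refine ⟨sub_face h2 (by simp) (by simp), ?_, h2⟩
    ext x; simp; rintro rfl; exact h1

theorem lk_edge {K : SComplex} {t e} : e ∈ ((K.lk {t}).faces.filter fun s => s.card = 1 + 1) ↔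
    e.card = 2 ∧ t ∉ e ∧ insert t e ∈ K.faces := by
  rw [Finset.mem_filter, mem_lk]
  have h : e ∪ {t} = insert t e := by ext; simp
  rw [h]
  constructor
  · rintro ⟨⟨_, h2, h3⟩, h4⟩
    refine ⟨h4, ?_, h3⟩
    intro hte
    have : t ∈ e ∩ {t} := by simp [hte]
    rw [h2] at this; simp at this
  · rintro ⟨h1, h2, h3⟩
    refine ⟨⟨sub_face h3 (Finset.subset_insert t e) (Finset.card_pos.mp (by omega)), ?_, h3⟩, h1⟩
    ext x; simp; rintro hx rfl; exact h2 hx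

/-- Edges in the closed star of `t`. -/
def starE (K : SComplex) (t : ℕ) : Finset (Finset ℕ) :=
  K.faces.filter fun e => e.card = 2 ∧ insert t e ∈ K.faces

theorem starE_card (K : SComplex) (t : ℕ) :
    (K.starE t).card = (K.lk {t}).fnum 1 + (K.lk {t}).fnum 0 := by
  rw [fnum_zero]
  have h1 : (K.starE t).filter (fun e => t ∉ e) = (K.lk {t}).faces.filter fun s => s.card = 1 + 1 := by
    ext e
    rw [lk_edge]
    simp only [starE, Finset.mem_filter]
    constructor
    · tauto
    · rintro ⟨h1, h2, h3⟩
      exact ⟨⟨sub_face h3 (Finset.subset_insert t e) (Finset.card_pos.mp (by omega)), h1, h3⟩, h2⟩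
  have h2 : ((K.starE t).filter (fun e => t ∈ e)).card = (K.lk {t}).vertexSet.card := by
    symm
    refine Finset.card_bij (fun w _ => {t, w}) ?_ ?_ ?_
    · intro w hw
      rw [lk_vertex] at hw
      simp [starE, hw.2, Finset.card_pair hw.1.symm]
    · intro a ha b hb h
      rw [lk_vertex] at ha hb
      have : a ∈ ({t, b} : Finset ℕ) := by rw [← h]; simp
      simp only [Finset.mem_insert, Finset.mem_singleton] at this
      exact this.resolve_left ha.1
    · intro e he
      simp only [starE, Finset.mem_filter] at he
      obtain ⟨⟨h1, h2, _⟩, h3⟩ := he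
      have : (e.erase t).card = 1 := by rw [Finset.card_erase_of_mem h3, h2]
      obtain ⟨a, ha⟩ := Finset.card_eq_one.mp this
      have hat : a ∈ e.erase t := by rw [ha]; simp
      have hee : {t, a} = e := by rw [← Finset.insert_erase h3, ha]
      refine ⟨a, ?_, hee⟩
      rw [lk_vertex]
      exact ⟨(Finset.mem_erase.mp hat).1, hee ▸ h1⟩
  rw [← Finset.card_filter_add_card_filter_not (s := K.starE t) (fun e => t ∈ e), h1, h2, fnum]
  ring

theorem Weak.lbt {K} (hK : Weak K) {ι : Type} [Fintype ι] [Nonempty ι] (t : ι → ℕ)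
    (ht : ∀ i, {t i} ∈ K.faces)
    (hd : ∀ i j, i ≠ j → ∀ w, {t i, w} ∈ K.faces → {t j, w} ∈ K.faces → False) :
    ∑ i, (K.lk {t i}).g2surf ≤ K.g2 := by
  classical
  obtain ⟨p, hp⟩ := exists_generic
  replace hp : Generic p := hp
  let B : ι → Finset ℕ := fun i => K.vertexSet.filter fun w => {t i, w} ∈ K.faces
  have hmB : ∀ i w, w ∈ B i ↔ {t i, w} ∈ K.faces := by
    intro i w
    simp only [B, Finset.mem_filter, mem_vertexSet]
    exact ⟨fun h => h.2, fun h => ⟨sub_face h (by simp) (by simp), h⟩⟩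
  have hBc : ∀ i, (B i).card = (K.lk {t i}).fnum 0 + 1 := by
    intro i
    have : B i = insert (t i) (K.lk {t i}).vertexSet := by
      ext w
      rw [hmB, Finset.mem_insert, lk_vertex]
      constructor
      · intro h; tauto
      · rintro (rfl | h)
        · simpa using ht i
        · exact h.2
    rw [this, Finset.card_insert_of_notMem (by rw [lk_vertex]; tauto), fnum_zero]
  have hse : ∀ i e, e ∈ K.starE (t i) → e ⊆ B i := by
    intro i e he w hw
    simp only [starE, Finset.mem_filter] at he
    rw [hmB]
    apply sub_face he.2.2 _ (by simp)
    intro x hx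
    simp only [Finset.mem_insert, Finset.mem_singleton] at hx ⊢
    rcases hx with rfl | rfl
    · simp
    · right; exact hw
  have hdisj : ∀ i j, i ≠ j → Disjoint (B i) (B j) := by
    intro i j hij
    rw [Finset.disjoint_left]
    intro w h1 h2
    rw [hmB] at h1 h2
    exact hd i j hij w h1 h2
  let Y := Finset.univ.biUnion fun i => K.starE (t i)
  have hY : Y.card = ∑ i, (K.starE (t i)).card := by
    apply Finset.card_biUnion
    intro i _ j _ hij
    change Disjoint (K.starE (t i)) (K.starE (t j))
    rw [Finset.disjoint_left]
    intro e h1 h2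
    have he : e.card = 2 := by simp only [starE, Finset.mem_filter] at h1; exact h1.2.1
    obtain ⟨w, hw⟩ := Finset.card_pos.mp (show 0 < e.card by omega)
    exact Finset.disjoint_left.mp (hdisj i j hij) (hse i e h1 hw) (hse j e h2 hw)
  have hYsub : Y ⊆ K.faces.filter fun s => s.card = 1 + 1 := by
    intro e he
    simp only [Y, Finset.mem_biUnion, Finset.mem_univ, true_and, starE, Finset.mem_filter] at he
    obtain ⟨i, h1, h2, _⟩ := he
    simp [h1, h2]
  have hcount := hp.count (hK.rigid hp) B (fun i => Finset.filter_subset _ _) (by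
      intro i
      obtain ⟨F, hF, htF⟩ := hK.sub _ (ht i)
      refine ⟨F, ?_, hF.2⟩
      intro w hw
      rw [hmB]
      apply sub_face hF.1 _ (by simp)
      intro x hx
      simp only [Finset.mem_insert, Finset.mem_singleton] at hx
      rcases hx with rfl | rfl
      · simpa using htF
      · exact hw) hdisj ((K.faces.filter fun s => s.card = 1 + 1) \ Y) (by
      intro e he
      simp only [Finset.mem_sdiff, Finset.mem_filter] at he
      exact he.1.2) (by
      rintro u v ⟨huv, he⟩
      by_cases h : ({u, v} : Finset ℕ) ∈ Y
      · right
        simp only [Y, Finset.mem_biUnion, Finset.mem_univ, true_and] at h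
        obtain ⟨i, hi⟩ := h
        have := hse i _ hi
        exact ⟨i, this (by simp), this (by simp)⟩
      · left
        rw [Finset.mem_sdiff, Finset.mem_filter]
        exact ⟨⟨he, Finset.card_pair huv⟩, h⟩)
  rw [Finset.card_sdiff_of_subset hYsub, hY] at hcount
  have hle : Y.card ≤ (K.faces.filter fun s => s.card = 1 + 1).card := Finset.card_le_card hYsub
  rw [hY] at hle
  have hf1 : (K.faces.filter fun s => s.card = 1 + 1).card = K.fnum 1 := rfl
  rw [hf1] at hcount hle
  rw [← fnum_zero] at hcount
  simp only [hBc, starE_card] at hcount hle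
  unfold g2 g2surf
  simp only [Finset.sum_add_distrib, Finset.sum_sub_distrib, ← Finset.mul_sum, Finset.sum_const,
    Finset.card_univ, smul_eq_mul, nsmul_eq_mul, mul_one] at hcount hle ⊢
  zify [hle] at hcount
  linarith

theorem Weak.lbt1 {K} (hK : Weak K) {t : ℕ} (ht : {t} ∈ K.faces) :
    (K.lk {t}).g2surf ≤ K.g2 := by
  have := hK.lbt (ι := Unit) (fun _ => t) (fun _ => ht) (fun i j h => absurd rfl h)
  simpa using this

theorem Weak.lbt2 {K} (hK : Weak K) {t t' : ℕ} (ht : {t} ∈ K.faces) (ht' : {t'} ∈ K.faces)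
    (hd : ∀ w, {t, w} ∈ K.faces → {t', w} ∈ K.faces → False) :
    (K.lk {t}).g2surf + (K.lk {t'}).g2surf ≤ K.g2 := by
  have := hK.lbt (ι := Bool) (fun b => if b then t else t') (by simp [ht, ht']) (by
    intro i j hij w h1 h2
    cases i <;> cases j <;> simp at hij h1 h2
    · exact hd w h2 h1
    · exact hd w h1 h2)
  simpa using this

/-! ### Part 4: no handles under the bound -/

structure Handle (K D : SComplex) (τ₁ τ₂ : Finset ℕ) (ψ h : ℕ → ℕ) : Prop where
  f1 : K.Fct τ₁
  f2 : K.Fct τ₂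
  inj : Set.InjOn ψ ↑τ₁
  img : τ₁.image ψ = τ₂
  adm : ∀ x ∈ τ₁, ∀ z, ({x, z} : Finset ℕ) ∈ K.faces → ({z, ψ x} : Finset ℕ) ∈ K.faces → False
  hid : ∀ y, y ∉ τ₂ → h y = y
  hps : ∀ x ∈ τ₁, h (ψ x) = x
  eq : D.faces = (K.faces.image (Finset.image h)) \ {τ₁}

theorem pair_face {K : SComplex} {s a b} (hs : s ∈ K.faces) (ha : a ∈ s) (hb : b ∈ s) :
    ({a, b} : Finset ℕ) ∈ K.faces := by
  apply sub_face hs _ (by simp)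
  intro x hx
  simp only [Finset.mem_insert, Finset.mem_singleton] at hx
  rcases hx with rfl | rfl <;> assumption

namespace Handle
variable {K D : SComplex} {τ₁ τ₂ : Finset ℕ} {ψ h : ℕ → ℕ}

theorem psi_mem (H : Handle K D τ₁ τ₂ ψ h) {x} (hx : x ∈ τ₁) : ψ x ∈ τ₂ := by
  rw [← H.img]; exact Finset.mem_image_of_mem ψ hx

theorem exists_psi (H : Handle K D τ₁ τ₂ ψ h) {y} (hy : y ∈ τ₂) : ∃ x ∈ τ₁, ψ x = y := by
  rw [← H.img] at hy; exact Finset.mem_image.mp hy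

theorem nadj (H : Handle K D τ₁ τ₂ ψ h) {x y} (hx : x ∈ τ₁) (hy : y ∈ τ₂) :
    ({x, y} : Finset ℕ) ∉ K.faces := by
  intro hxy
  obtain ⟨z, hz, rfl⟩ := H.exists_psi hy
  exact H.adm z hz x (pair_face H.f1.1 hz hx) hxy

theorem disj (H : Handle K D τ₁ τ₂ ψ h) {x} (hx : x ∈ τ₁) : x ∉ τ₂ := by
  intro hx2
  exact H.nadj hx hx2 (by
    simpa using sub_face H.f1.1 (show {x} ⊆ τ₁ by simpa using hx) (by simp))

theorem h_eq (H : Handle K D τ₁ τ₂ ψ h) {x y} (hxy : h x = h y) :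
    x = y ∨ (x ∈ τ₁ ∧ y = ψ x) ∨ (y ∈ τ₁ ∧ x = ψ y) := by
  by_cases hx : x ∈ τ₂
  · obtain ⟨a, ha, rfl⟩ := H.exists_psi hx
    rw [H.hps a ha] at hxy
    by_cases hy : y ∈ τ₂
    · obtain ⟨b, hb, rfl⟩ := H.exists_psi hy
      rw [H.hps b hb] at hxy
      left; rw [hxy]
    · rw [H.hid y hy] at hxy
      right; right
      rw [← hxy]; exact ⟨ha, rfl⟩
  · rw [H.hid x hx] at hxy
    by_cases hy : y ∈ τ₂
    · obtain ⟨b, hb, rfl⟩ := H.exists_psi hy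
      rw [H.hps b hb] at hxy
      right; left
      rw [hxy]; exact ⟨hb, rfl⟩
    · rw [H.hid y hy] at hxy
      exact Or.inl hxy

/-- `h` separates vertices with a common (closed) neighbour. -/
theorem h_inj (H : Handle K D τ₁ τ₂ ψ h) {x y z} (h1 : ({x, z} : Finset ℕ) ∈ K.faces)
    (h2 : ({y, z} : Finset ℕ) ∈ K.faces) (hxy : h x = h y) : x = y := by
  rcases H.h_eq hxy with h | ⟨ha, rfl⟩ | ⟨ha, rfl⟩
  · exact h
  · exact (H.adm x ha z h1 (by rwa [Finset.pair_comm])).elim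
  · exact (H.adm y ha z h2 (by rwa [Finset.pair_comm])).elim

theorem face_inj (H : Handle K D τ₁ τ₂ ψ h) {s} (hs : s ∈ K.faces) : Set.InjOn h ↑s := by
  intro x hx y hy hxy
  exact H.h_inj (z := x) (pair_face hs hx hx) (pair_face hs hy hx) hxy

theorem card_img (H : Handle K D τ₁ τ₂ ψ h) {s} (hs : s ∈ K.faces) : (s.image h).card = s.card :=
  Finset.card_image_of_injOn (H.face_inj hs)

theorem img_mem (H : Handle K D τ₁ τ₂ ψ h) {s} (hs : s ∈ K.faces) (hc : s.card ≠ 4) :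
    s.image h ∈ D.faces := by
  rw [H.eq, Finset.mem_sdiff]
  refine ⟨Finset.mem_image_of_mem _ hs, ?_⟩
  rw [Finset.mem_singleton]
  intro he
  have := H.card_img hs
  rw [he, H.f1.2] at this
  exact hc this.symm

theorem mem_D (H : Handle K D τ₁ τ₂ ψ h) {s} (hs : s ∈ D.faces) :
    ∃ r ∈ K.faces, r.image h = s := by
  rw [H.eq, Finset.mem_sdiff] at hs
  exact Finset.mem_image.mp hs.1

theorem h_notMem (H : Handle K D τ₁ τ₂ ψ h) (y) : h y ∉ τ₂ := by
  by_cases hy : y ∈ τ₂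
  · obtain ⟨a, ha, rfl⟩ := H.exists_psi hy
    rw [H.hps a ha]; exact H.disj ha
  · rw [H.hid y hy]; exact hy

theorem verts_le (H : Handle K D τ₁ τ₂ ψ h) : D.fnum 0 + 4 ≤ K.fnum 0 := by
  have h1 : D.vertexSet ⊆ K.vertexSet \ τ₂ := by
    intro w hw
    obtain ⟨r, hr, he⟩ := H.mem_D (mem_vertexSet.mp hw)
    have : w ∈ r.image h := by rw [he]; simp
    obtain ⟨y, hy, rfl⟩ := Finset.mem_image.mp this
    rw [Finset.mem_sdiff]
    refine ⟨?_, H.h_notMem y⟩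
    by_cases hy2 : y ∈ τ₂
    · obtain ⟨a, ha, rfl⟩ := H.exists_psi hy2
      rw [H.hps a ha]; exact face_sub_vertexSet H.f1.1 ha
    · rw [H.hid y hy2]; exact face_sub_vertexSet hr hy
  have h2 := Finset.card_le_card h1
  have h3 := face_sub_vertexSet H.f2.1
  have h4 := Finset.card_le_card h3
  rw [Finset.card_sdiff_of_subset h3, H.f2.2] at h2
  rw [H.f2.2] at h4
  rw [fnum_zero, fnum_zero]
  omega

theorem edges_le (H : Handle K D τ₁ τ₂ ψ h) : K.fnum 1 ≤ D.fnum 1 + 6 := by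
  have hP : τ₂.powersetCard 2 ⊆ K.faces.filter fun s => s.card = 1 + 1 := by
    intro e he
    rw [Finset.mem_powersetCard] at he
    rw [Finset.mem_filter]
    exact ⟨sub_face H.f2.1 he.1 (Finset.card_pos.mp (by omega)), he.2⟩
  have h1 : ((K.faces.filter fun s => s.card = 1 + 1) \ τ₂.powersetCard 2).card ≤
      (D.faces.filter fun s => s.card = 1 + 1).card := by
    apply Finset.card_le_card_of_injOn (Finset.image h)
    · intro e he
      simp only [Finset.coe_sdiff, Set.mem_diff, Finset.mem_coe, Finset.mem_filter] at he ⊢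
      exact ⟨H.img_mem he.1.1 (by omega), by rw [H.card_img he.1.1]; exact he.1.2⟩
    · intro e he e' he' hee
      simp only [Finset.coe_sdiff, Set.mem_diff, Finset.mem_coe, Finset.mem_filter,
        Finset.mem_powersetCard, not_and] at he he'
      obtain ⟨⟨hK, hc⟩, hn⟩ := he
      obtain ⟨⟨hK', hc'⟩, hn'⟩ := he'
      have key : ∀ e e', e ∈ K.faces → e' ∈ K.faces → e.card = 1 + 1 → e'.card = 1 + 1 →
          ¬ e ⊆ τ₂ → ¬ e' ⊆ τ₂ → e.image h = e'.image h → e ⊆ e' := by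
        intro e e' hK hK' hc hc' hn hn' hee x hx
        have hx' : h x ∈ e'.image h := by rw [← hee]; exact Finset.mem_image_of_mem h hx
        obtain ⟨x', hx', hxx⟩ := Finset.mem_image.mp hx'
        by_cases hne : x' = x
        · exact hne ▸ hx'
        exfalso
        obtain ⟨y, hy, hyx⟩ := Finset.exists_mem_ne (s := e) (by omega) x
        have hy' : h y ∈ e'.image h := by rw [← hee]; exact Finset.mem_image_of_mem h hy
        obtain ⟨y', hy', hyy⟩ := Finset.mem_image.mp hy'
        have hxy := pair_face hK hx hy
        have hxy' := pair_face hK' hx' hy'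
        have hfill : ∀ a b, a ∈ e → b ∈ e → a ≠ b → a ∈ τ₂ → b ∈ τ₂ → False := by
          intro a b ha hb hab h1 h2
          have : ({a, b} : Finset ℕ) = e := Finset.eq_of_subset_of_card_le (by
            intro z hz; simp at hz; rcases hz with rfl | rfl <;> assumption)
            (by rw [hc, Finset.card_pair hab])
          apply hn; rw [← this]
          intro z hz; simp at hz; rcases hz with rfl | rfl <;> assumption
        have hneyx : y' ≠ x' := by
          rintro rfl
          exact hyx (H.face_inj hK hy hx (hyy.symm.trans hxx))
        have hfill' : x' ∈ τ₂ → y' ∈ τ₂ → False := by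
          intro h1 h2
          have : ({x', y'} : Finset ℕ) = e' := Finset.eq_of_subset_of_card_le (by
            intro z hz; simp at hz; rcases hz with rfl | rfl <;> assumption)
            (by rw [hc', Finset.card_pair hneyx.symm])
          apply hn'; rw [← this]
          intro z hz; simp at hz; rcases hz with rfl | rfl <;> assumption
        by_cases hyy2 : y' = y
        · subst hyy2
          exact hne (H.h_inj hxy' hxy hxx)
        rcases (H.h_eq hxx).resolve_left hne with ⟨h1, h2⟩ | ⟨h1, h2⟩
        · rcases (H.h_eq hyy).resolve_left hyy2 with ⟨h3, h4⟩ | ⟨h3, h4⟩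
          · exact hfill x y hx hy hyx.symm (h2 ▸ H.psi_mem h1) (h4 ▸ H.psi_mem h3)
          · exact H.nadj h1 (h4 ▸ H.psi_mem h3) hxy'
        · rcases (H.h_eq hyy).resolve_left hyy2 with ⟨h3, h4⟩ | ⟨h3, h4⟩
          · exact H.nadj h1 (h4 ▸ H.psi_mem h3) hxy
          · exact hfill' (h2 ▸ H.psi_mem h1) (h4 ▸ H.psi_mem h3)
      exact Finset.Subset.antisymm
        (key e e' hK hK' hc hc' (fun h => hn h hc) (fun h => hn' h hc') hee)
        (key e' e hK' hK hc' hc (fun h => hn' h hc') (fun h => hn h hc) hee.symm)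
  rw [Finset.card_sdiff_of_subset hP, Finset.card_powersetCard, H.f2.2] at h1
  have : Nat.choose 4 2 = 6 := rfl
  unfold fnum
  omega

theorem D_edge (H : Handle K D τ₁ τ₂ ψ h) {t e}
    (he : e ∈ ((D.lk {t}).faces.filter fun s => s.card = 1 + 1)) :
    ∃ y r, h y = t ∧ r ∈ ((K.lk {y}).faces.filter fun s => s.card = 1 + 1) ∧ r.image h = e := by
  rw [lk_edge] at he
  obtain ⟨h1, h2, h3⟩ := he
  obtain ⟨s, hs, hse⟩ := H.mem_D h3
  have : t ∈ s.image h := by rw [hse]; simp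
  obtain ⟨y, hy, hyt⟩ := Finset.mem_image.mp this
  have hc : s.card = 3 := by
    rw [← H.card_img hs, hse, Finset.card_insert_of_notMem h2, h1]
  refine ⟨y, s.erase y, hyt, ?_, ?_⟩
  · rw [lk_edge]
    exact ⟨by rw [Finset.card_erase_of_mem hy, hc], by simp, by rwa [Finset.insert_erase hy]⟩
  · ext x
    rw [Finset.mem_image]
    constructor
    · rintro ⟨z, hz, rfl⟩
      rw [Finset.mem_erase] at hz
      have hz' : h z ∈ insert t e := by rw [← hse]; exact Finset.mem_image_of_mem h hz.2
      refine (Finset.mem_insert.mp hz').resolve_left ?_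
      intro hzt
      exact hz.1 (H.face_inj hs hz.2 hy (hzt.trans hyt.symm))
    · intro hx
      have : x ∈ s.image h := by rw [hse]; simp [hx]
      obtain ⟨z, hz, rfl⟩ := Finset.mem_image.mp this
      refine ⟨z, ?_, rfl⟩
      rw [Finset.mem_erase]
      refine ⟨?_, hz⟩
      rintro rfl
      exact h2 (hyt ▸ hx)

theorem no_handle (H : Handle K D τ₁ τ₂ ψ h) (hK : Weak K) {t} (ht : {t} ∈ D.faces)
    (hg : D.g2 ≤ (D.lk {t}).g2surf + 9) : False := by
  have hv := H.verts_le
  have he := H.edges_le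
  have hg10 : K.g2 + 10 ≤ D.g2 := by
    unfold g2
    have : (D.fnum 0 : ℤ) + 4 ≤ K.fnum 0 := by exact_mod_cast hv
    have : (K.fnum 1 : ℤ) ≤ D.fnum 1 + 6 := by exact_mod_cast he
    linarith
  obtain ⟨r, hr, hrt⟩ := H.mem_D ht
  have htr : t ∈ r.image h := by rw [hrt]; simp
  obtain ⟨y, hy, hyt⟩ := Finset.mem_image.mp htr
  have ht2 : t ∉ τ₂ := hyt ▸ H.h_notMem y
  by_cases ht1 : t ∈ τ₁
  · have htK : {t} ∈ K.faces := sub_face H.f1.1 (by simpa using ht1) (by simp)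
    have ht' := H.psi_mem ht1
    have htK' : {ψ t} ∈ K.faces := sub_face H.f2.1 (by simpa using ht') (by simp)
    have hadm : ∀ w, {t, w} ∈ K.faces → {ψ t, w} ∈ K.faces → False := fun w h1 h2 =>
      H.adm t ht1 w h1 (by rwa [Finset.pair_comm])
    have hl := hK.lbt2 htK htK' hadm
    have hE : (D.lk {t}).fnum 1 + 3 ≤ (K.lk {t}).fnum 1 + (K.lk {ψ t}).fnum 1 := by
      have hP : (τ₂.erase (ψ t)).powersetCard 2 ⊆
          (K.lk {ψ t}).faces.filter fun s => s.card = 1 + 1 := by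
        intro e he
        rw [Finset.mem_powersetCard] at he
        rw [lk_edge]
        refine ⟨he.2, fun h => ?_, ?_⟩
        · simpa using he.1 h
        · apply sub_face H.f2.1 _ (by simp)
          intro x hx
          rcases Finset.mem_insert.mp hx with rfl | hx
          · exact ht'
          · exact Finset.mem_of_mem_erase (he.1 hx)
      have hsub : ((D.lk {t}).faces.filter fun s => s.card = 1 + 1) ⊆
          (((K.lk {t}).faces.filter fun s => s.card = 1 + 1).image (Finset.image h)) ∪
          ((((K.lk {ψ t}).faces.filter fun s => s.card = 1 + 1) \
            (τ₂.erase (ψ t)).powersetCard 2).image (Finset.image h)) := by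
        intro e he
        obtain ⟨y, r, hy, hr, rfl⟩ := H.D_edge he
        rw [Finset.mem_union]
        have hyt : y = t ∨ y = ψ t := by
          by_cases hy2 : y ∈ τ₂
          · obtain ⟨a, ha, rfl⟩ := H.exists_psi hy2
            rw [H.hps a ha] at hy
            right; rw [hy]
          · rw [H.hid y hy2] at hy
            exact Or.inl hy
        rcases hyt with rfl | rfl
        · left; exact Finset.mem_image_of_mem _ hr
        · by_cases hrP : r ∈ (τ₂.erase (ψ t)).powersetCard 2
          · left
            rw [Finset.mem_powersetCard] at hrP
            have hrim : r.image h ⊆ τ₁.erase t := by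
              intro x hx
              obtain ⟨z, hz, rfl⟩ := Finset.mem_image.mp hx
              have := hrP.1 hz
              rw [Finset.mem_erase] at this
              obtain ⟨a, ha, rfl⟩ := H.exists_psi this.2
              rw [H.hps a ha, Finset.mem_erase]
              refine ⟨?_, ha⟩
              rintro rfl
              exact this.1 rfl
            rw [Finset.mem_image]
            refine ⟨r.image h, ?_, ?_⟩
            · rw [lk_edge]
              refine ⟨?_, fun h => by simpa using hrim h, ?_⟩
              · rw [lk_edge] at hr
                rw [H.card_img (sub_face hr.2.2 (Finset.subset_insert _ _)
                  (Finset.card_pos.mp (by omega))), hr.1]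
              · apply sub_face H.f1.1 _ (by simp)
                intro x hx
                rcases Finset.mem_insert.mp hx with rfl | hx
                · exact ht1
                · exact Finset.mem_of_mem_erase (hrim hx)
            · have : ∀ x ∈ r.image h, h x = x := fun x hx =>
                H.hid x (H.disj (Finset.mem_of_mem_erase (hrim hx)))
              rw [Finset.image_congr (g := id) (fun x hx => this x hx), Finset.image_id]
          · right
            exact Finset.mem_image_of_mem _ (Finset.mem_sdiff.mpr ⟨hr, hrP⟩)
      have h1 := Finset.card_le_card hsub
      have h2 := h1.trans (Finset.card_union_le _ _)
      have h3 := h2.trans (Nat.add_le_add Finset.card_image_le Finset.card_image_le)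
      have h4 := Finset.card_le_card hP
      rw [Finset.card_sdiff_of_subset hP] at h3
      rw [Finset.card_powersetCard, Finset.card_erase_of_mem ht', H.f2.2] at h3 h4
      have : Nat.choose (4 - 1) 2 = 3 := rfl
      unfold fnum
      omega
    have hV : (K.lk {t}).fnum 0 + (K.lk {ψ t}).fnum 0 ≤ (D.lk {t}).fnum 0 + 3 := by
      rw [fnum_zero, fnum_zero, fnum_zero]
      have hsub : (K.lk {t}).vertexSet ∪ ((K.lk {ψ t}).vertexSet \ τ₂.erase (ψ t)) ⊆
          (D.lk {t}).vertexSet := by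
        intro w hw
        rcases Finset.mem_union.mp hw with hw | hw
        · rw [lk_vertex] at hw ⊢
          refine ⟨hw.1, ?_⟩
          have hw2 : w ∉ τ₂ := fun h => H.nadj ht1 h hw.2
          have := H.img_mem hw.2 (by rw [Finset.card_pair hw.1.symm]; omega)
          rwa [Finset.image_insert, Finset.image_singleton, H.hid t ht2, H.hid w hw2] at this
        · rw [Finset.mem_sdiff, lk_vertex, Finset.mem_erase] at hw
          obtain ⟨⟨h1, h2⟩, h3⟩ := hw
          have hw2 : w ∉ τ₂ := fun h => h3 ⟨h1, h⟩
          rw [lk_vertex]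
          refine ⟨?_, ?_⟩
          · rintro rfl
            exact hadm w (by simpa using htK) h2
          · have := H.img_mem h2 (by rw [Finset.card_pair h1.symm]; omega)
            rwa [Finset.image_insert, Finset.image_singleton, H.hps t ht1, H.hid w hw2] at this
      have h1 := Finset.card_le_card hsub
      rw [Finset.card_union_of_disjoint] at h1
      · have h2 := Finset.le_card_sdiff (τ₂.erase (ψ t)) (K.lk {ψ t}).vertexSet
        rw [Finset.card_erase_of_mem ht', H.f2.2] at h2
        omega
      · rw [Finset.disjoint_left]
        intro w hw hw'
        rw [Finset.mem_sdiff] at hw'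
        rw [lk_vertex] at hw hw'
        exact hadm w hw.2 hw'.1.2
    have : (D.lk {t}).g2surf ≤ (K.lk {t}).g2surf + (K.lk {ψ t}).g2surf := by
      unfold g2surf
      zify at hE hV
      linarith
    linarith
  · have hyt' : ∀ y, h y = t → y = t := by
      intro y hyt
      by_cases hy2 : y ∈ τ₂
      · obtain ⟨a, ha, rfl⟩ := H.exists_psi hy2
        rw [H.hps a ha] at hyt
        exact absurd (hyt ▸ ha) ht1
      · rw [H.hid y hy2] at hyt
        exact hyt
    have htK : {t} ∈ K.faces := by
      rw [hyt' y hyt] at hy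
      exact sub_face hr (by simpa using hy) (by simp)
    have hl := hK.lbt1 htK
    have hE : (D.lk {t}).fnum 1 ≤ (K.lk {t}).fnum 1 := by
      have hsub : ((D.lk {t}).faces.filter fun s => s.card = 1 + 1) ⊆
          (((K.lk {t}).faces.filter fun s => s.card = 1 + 1).image (Finset.image h)) := by
        intro e he
        obtain ⟨y, r, hy, hr, rfl⟩ := H.D_edge he
        rw [hyt' y hy] at hr
        exact Finset.mem_image_of_mem _ hr
      exact (Finset.card_le_card hsub).trans Finset.card_image_le
    have hV : (K.lk {t}).fnum 0 ≤ (D.lk {t}).fnum 0 := by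
      rw [fnum_zero, fnum_zero]
      apply Finset.card_le_card_of_injOn h
      · intro w hw
        rw [Finset.mem_coe, lk_vertex] at hw ⊢
        refine ⟨fun h => hw.1 (hyt' w h), ?_⟩
        have := H.img_mem hw.2 (by rw [Finset.card_pair hw.1.symm]; omega)
        rwa [Finset.image_insert, Finset.image_singleton, H.hid t ht2] at this
      · intro w hw w' hw' hww
        rw [Finset.mem_coe, lk_vertex] at hw hw'
        exact H.h_inj (z := t) (by rw [Finset.pair_comm]; exact hw.2)
          (by rw [Finset.pair_comm]; exact hw'.2) hww
    have : (D.lk {t}).g2surf ≤ (K.lk {t}).g2surf := by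
      unfold g2surf
      zify at hE hV
      linarith
    linarith

end Handle

/-! ### Part 5: functions on tetrahedra -/

theorem sub_of_pure {K : SComplex} (hp : K.IsPure 3) {s} (hs : s ∈ K.faces) :
    ∃ F, K.Fct F ∧ s ⊆ F := by
  obtain ⟨F, hF, hmax⟩ := Finset.exists_max_image (K.faces.filter fun F => s ⊆ F) Finset.card
    ⟨s, by simp [hs]⟩
  rw [Finset.mem_filter] at hF
  refine ⟨F, ⟨hF.1, ?_⟩, hF.2⟩
  refine hp.2 F ⟨hF.1, fun t ht hFt => ?_⟩
  apply Finset.eq_of_subset_of_card_le hFt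
  exact hmax t (by simp [ht, hF.2.trans hFt])

theorem fct_of_sub {K : SComplex} (hsub : ∀ s ∈ K.faces, ∃ F, K.Fct F ∧ s ⊆ F) {s} :
    K.IsFacet s ↔ K.Fct s := by
  constructor
  · intro h
    obtain ⟨F, hF, hsF⟩ := hsub s h.1
    rw [h.2 F hF.1 hsF]; exact hF
  · intro h
    refine ⟨h.1, fun t ht hst => ?_⟩
    obtain ⟨F, hF, htF⟩ := hsub t ht
    apply Finset.eq_of_subset_of_card_le hst
    rw [h.2, ← hF.2]
    exact Finset.card_le_card htF

theorem weak_of_normal {K : SComplex} (hK : K.IsNormalPseudomanifold 3) : Weak K := by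
  obtain ⟨hp, hs, hr, _⟩ := hK
  have hsub := fun s (h : s ∈ K.faces) => sub_of_pure hp h
  refine ⟨hsub, hr, fun f hf F G hF hG => ?_, hp.1⟩
  have h := hs F G ((fct_of_sub hsub).mpr hF) ((fct_of_sub hsub).mpr hG)
  induction h with
  | refl => rfl
  | @tail b c _ hbc ih =>
    have hb := (fct_of_sub hsub).mp hbc.1
    have hc := (fct_of_sub hsub).mp hbc.2.1
    rw [ih hb]
    apply hf b c hb hc
    have := hbc.2.2
    have := hb.2
    omega

/-- The jump of a function on tetrahedra across a ridge. -/
def jump (K : SComplex) (f : Finset ℕ → ZMod 2) (R : Finset ℕ) : ZMod 2 :=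
  ∑ F ∈ K.faces.filter fun F => F.card = 3 + 1 ∧ R ⊆ F, f F

theorem jump_eq {K} (hK : RidgeProp K) {f R F G} (hR : R.card = 3) (hF : K.Fct F)
    (hG : K.Fct G) (hRF : R ⊆ F) (hRG : R ⊆ G) (hFG : F ≠ G) : K.jump f R = f F + f G := by
  unfold jump
  apply Finset.sum_eq_add_of_mem F G (by simp [hF.1, hF.2, hRF]) (by simp [hG.1, hG.2, hRG]) hFG
  intro H hH hne
  rw [Finset.mem_filter] at hH
  rcases hK.two hR hF hG ⟨hH.1, hH.2.1⟩ hRF hRG hH.2.2 hFG with h | h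
  · exact absurd h hne.1
  · exact absurd h hne.2

theorem jump_eq' {K} (hK : RidgeProp K) {f F G} (hF : K.Fct F)
    (hG : K.Fct G) (hFG : (F ∩ G).card = 3) : K.jump f (F ∩ G) = f F + f G := by
  apply jump_eq hK hFG hF hG Finset.inter_subset_left Finset.inter_subset_right
  rintro rfl
  rw [Finset.inter_self, hF.2] at hFG
  omega

theorem jump_add {K : SComplex} {f g R} : K.jump (fun F => f F + g F) R = K.jump f R + K.jump g R := by
  simp [jump, Finset.sum_add_distrib]

theorem jump_congr {K : SComplex} {f g R} (h : ∀ F, K.Fct F → R ⊆ F → f F = g F) :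
    K.jump f R = K.jump g R := by
  apply Finset.sum_congr rfl
  intro F hF
  rw [Finset.mem_filter] at hF
  exact h F ⟨hF.1, hF.2.1⟩ hF.2.2

theorem conn_step {K : SComplex} (hsub : ∀ s ∈ K.faces, ∃ F, K.Fct F ∧ s ⊆ F) {s}
    (hs3 : s.card ≤ 3) (hc : (K.lk s).Conn) {f : Finset ℕ → ZMod 2}
    (hw : ∀ w, w ∉ s → insert w s ∈ K.faces → ∀ F G, K.Fct F → K.Fct G → insert w s ⊆ F →
      insert w s ⊆ G → f F = f G) {F G} (hF : K.Fct F) (hG : K.Fct G) (hsF : s ⊆ F) (hsG : s ⊆ G) :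
    f F = f G := by
  have hv : ∀ F, K.Fct F → s ⊆ F → ∃ w, w ∉ s ∧ insert w s ⊆ F := by
    intro F hF hsF
    have : (F \ s).Nonempty := by
      rw [← Finset.card_pos, Finset.card_sdiff_of_subset hsF, hF.2]; omega
    obtain ⟨w, hw⟩ := this
    rw [Finset.mem_sdiff] at hw
    exact ⟨w, hw.2, Finset.insert_subset hw.1 hsF⟩
  have hlk : ∀ w, {w} ∈ (K.lk s).faces ↔ w ∉ s ∧ insert w s ∈ K.faces := by
    intro w
    rw [mem_lk]
    have : ({w} : Finset ℕ) ∪ s = insert w s := rfl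
    rw [this]
    constructor
    · rintro ⟨_, h2, h3⟩
      refine ⟨fun h => ?_, h3⟩
      have : w ∈ {w} ∩ s := by simp [h]
      rw [h2] at this; simp at this
    · rintro ⟨h1, h2⟩
      exact ⟨sub_face h2 (by simp) (by simp), Finset.singleton_inter_of_notMem h1, h2⟩
  obtain ⟨w, hws, hwF⟩ := hv F hF hsF
  obtain ⟨w', hws', hwG'⟩ := hv G hG hsG
  have hwK := sub_face hF.1 hwF (by simp)
  have hwK' := sub_face hG.1 hwG' (by simp)
  have path := hc.2 w w' ((hlk w).mpr ⟨hws, hwK⟩) ((hlk w').mpr ⟨hws', hwK'⟩)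
  have key : ∀ H, K.Fct H → insert w' s ⊆ H → f F = f H := by
    clear hws' hwK' hwG'
    induction path with
    | refl => exact fun H hH hwH => hw w hws hwK F H hF hH hwF hwH
    | @tail b c _ hbc ih =>
      intro H hH hcH
      unfold VertAdj at hbc
      have hb := (hlk b).mp (sub_face hbc (by simp) (by simp))
      have hc := (hlk c).mp (sub_face hbc (by simp) (by simp))
      rw [mem_lk] at hbc
      obtain ⟨J, hJ, hJs⟩ := hsub _ hbc.2.2
      rw [ih J hJ (fun x hx => hJs (by simp at hx ⊢; tauto))]
      exact hw c hc.1 hc.2 J H hJ hH (fun x hx => hJs (by simp at hx ⊢; tauto)) hcH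
  exact key G hG hwG'

theorem const_of_jump {K : SComplex} (hK : K.IsNormalPseudomanifold 3) {f : Finset ℕ → ZMod 2} {s}
    (hs : s ∈ K.faces) (hf : ∀ R ∈ K.faces, R.card = 3 → s ⊆ R → K.jump f R = 0) {F G}
    (hF : K.Fct F) (hG : K.Fct G) (hsF : s ⊆ F) (hsG : s ⊆ G) : f F = f G := by
  have hr : RidgeProp K := hK.2.2.1
  have hsub := (weak_of_normal hK).sub
  have H3 : ∀ s, s.card = 3 → s ∈ K.faces → (∀ R ∈ K.faces, R.card = 3 → s ⊆ R → K.jump f R = 0) →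
      ∀ F G, K.Fct F → K.Fct G → s ⊆ F → s ⊆ G → f F = f G := by
    intro s hs3 hs hf F G hF hG hsF hsG
    by_cases hFG : F = G
    · rw [hFG]
    have := hf s hs hs3 (Finset.Subset.refl s)
    rw [jump_eq hr hs3 hF hG hsF hsG hFG] at this
    exact z2_eq this
  have step : ∀ n, n < 3 → 0 < n →
      (∀ s, s.card = n + 1 → s ∈ K.faces → (∀ R ∈ K.faces, R.card = 3 → s ⊆ R → K.jump f R = 0) →
      ∀ F G, K.Fct F → K.Fct G → s ⊆ F → s ⊆ G → f F = f G) →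
      (∀ s, s.card = n → s ∈ K.faces → (∀ R ∈ K.faces, R.card = 3 → s ⊆ R → K.jump f R = 0) →
      ∀ F G, K.Fct F → K.Fct G → s ⊆ F → s ⊆ G → f F = f G) := by
    intro n hn hn0 ih s hsn hs hf F G hF hG hsF hsG
    apply conn_step hsub (by omega) (hK.2.2.2 s hs (by omega)) _ hF hG hsF hsG
    intro w hws hwK
    exact ih _ (by rw [Finset.card_insert_of_notMem hws, hsn]) hwK
      (fun R hR hR3 hwR => hf R hR hR3 ((Finset.subset_insert w s).trans hwR))
  have H2 := step 2 (by omega) (by omega) H3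
  have H1 := step 1 (by omega) (by omega) H2
  have hc0 : 0 < s.card := Finset.card_pos.mpr (Finset.nonempty_of_ne_empty
    (fun h => K.not_empty_mem (h ▸ hs)))
  have hc4 : s.card ≤ 4 := hF.2 ▸ Finset.card_le_card hsF
  by_cases h4 : s.card = 4
  · have e1 := Finset.eq_of_subset_of_card_le hsF (by rw [hF.2, h4])
    have e2 := Finset.eq_of_subset_of_card_le hsG (by rw [hG.2, h4])
    rw [← e1, ← e2]
  · obtain h | h | h : s.card = 1 ∨ s.card = 2 ∨ s.card = 3 := by omega
    · exact H1 s h hs hf F G hF hG hsF hsG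
    · exact H2 s h hs hf F G hF hG hsF hsG
    · exact H3 s h hs hf F G hF hG hsF hsG

theorem const_of_jump_all {K : SComplex} (hK : K.IsNormalPseudomanifold 3) {f : Finset ℕ → ZMod 2}
    (hf : ∀ R ∈ K.faces, R.card = 3 → K.jump f R = 0) {F G}
    (hF : K.Fct F) (hG : K.Fct G) : f F = f G := by
  have hw := weak_of_normal hK
  refine hw.conn f ?_ F G hF hG
  intro F G hF hG h3
  have := hf (F ∩ G) (sub_face hF.1 Finset.inter_subset_left (Finset.card_pos.mp (by omega))) h3
  rw [jump_eq' hw.ridge hF hG h3] at this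
  exact z2_eq this

theorem jump_parity {K : SComplex} {f e} (he : e.card = 2) :
    ∑ w ∈ K.vertexSet \ e, K.jump f (insert w e) = 0 := by
  unfold jump
  rw [Finset.sum_comm' (t' := K.faces.filter fun F => F.card = 3 + 1 ∧ e ⊆ F)
    (s' := fun F => F \ e)]
  · apply Finset.sum_eq_zero
    intro F hF
    rw [Finset.mem_filter] at hF
    rw [Finset.sum_const, Finset.card_sdiff_of_subset hF.2.2, hF.2.1, he]
    change 2 • f F = 0
    rw [two_nsmul, z2_add_self]
  · intro w F
    simp only [Finset.mem_sdiff, Finset.mem_filter, Finset.insert_subset_iff]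
    constructor
    · tauto
    · rintro ⟨h1, h2, h3, h4⟩
      exact ⟨⟨face_sub_vertexSet h2 h1.1, h1.2⟩, h2, h3, h1.1, h4⟩

theorem jumps_eq {K : SComplex} {f σ} (hσ : σ.card = 4)
    (hb : ∀ τ ∈ properFaces σ, τ ∈ K.faces) {b c} (hbσ : b ∈ σ) (hcσ : c ∈ σ) (hbc : b ≠ c)
    (hf : ∀ R ∈ K.faces, R.card = 3 → (σ.erase b).erase c ⊆ R → ¬ R ⊆ σ → K.jump f R = 0) :
    K.jump f (σ.erase b) = K.jump f (σ.erase c) := by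
  have he : ((σ.erase b).erase c).card = 2 := by
    rw [Finset.card_erase_of_mem (by simp [hcσ, hbc.symm]), Finset.card_erase_of_mem hbσ, hσ]
  have h := jump_parity (K := K) (f := f) he
  have hV : ∀ x ∈ σ, x ∈ K.vertexSet := by
    intro x hx
    rw [mem_vertexSet]
    apply hb
    simp only [properFaces, Finset.mem_filter, Finset.mem_powerset, Finset.singleton_subset_iff]
    refine ⟨hx, by simp, ?_⟩
    intro h; rw [← h] at hσ; simp at hσ
  have e1 : insert c ((σ.erase b).erase c) = σ.erase b :=
    Finset.insert_erase (by simp [hcσ, hbc.symm])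
  have e2 : insert b ((σ.erase b).erase c) = σ.erase c := by
    rw [Finset.erase_right_comm]
    exact Finset.insert_erase (by simp [hbσ, hbc])
  rw [Finset.sum_eq_add_of_mem c b (by simp [hV c hcσ]) (by simp [hV b hbσ]) hbc.symm, e1, e2] at h
  · exact z2_eq h
  · intro w hw hne
    rw [Finset.mem_sdiff] at hw
    by_cases hR : insert w ((σ.erase b).erase c) ∈ K.faces
    · apply hf _ hR (by rw [Finset.card_insert_of_notMem hw.2, he]) (Finset.subset_insert _ _)
      intro hsub
      have : w ∈ σ := hsub (by simp)
      exact hw.2 (by simp [hne.1, hne.2, this])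
    · unfold jump
      apply Finset.sum_eq_zero
      intro F hF
      rw [Finset.mem_filter] at hF
      exact absurd (sub_face hF.1 hF.2.2 (by simp)) hR

/-- A ridge inside `σ`. -/
theorem ridge_sub {σ R : Finset ℕ} (hσ : σ.card = 4) (hR : R.card = 3) (h : R ⊆ σ) :
    ∃ b ∈ σ, R = σ.erase b := by
  have : (σ \ R).card = 1 := by rw [Finset.card_sdiff_of_subset h]; omega
  obtain ⟨b, hb⟩ := Finset.card_eq_one.mp this
  have hb' : b ∈ σ \ R := by rw [hb]; simp
  rw [Finset.mem_sdiff] at hb'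
  refine ⟨b, hb'.1, ?_⟩
  apply Finset.eq_of_subset_of_card_le
  · intro x hx
    rw [Finset.mem_erase]
    exact ⟨fun h => hb'.2 (h ▸ hx), h hx⟩
  · rw [Finset.card_erase_of_mem hb'.1]; omega

open Classical in
theorem vertex_side {K : SComplex} (hK : K.IsNormalPseudomanifold 3) {σ} (hσ : σ.card = 4)
    (hb : ∀ τ ∈ properFaces σ, τ ∈ K.faces) {x} (hx : x ∈ σ)
    (hsep : SeparatesLink (K.lk {x}) (σ.erase x)) :
    ∃ f : Finset ℕ → ZMod 2, ∀ R ∈ K.faces, R.card = 3 → x ∈ R →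
      K.jump f R = if R ⊆ σ then 1 else 0 := by
  have hr : RidgeProp K := hK.2.2.1
  obtain ⟨p, q, hp, hq, hp3, hq3, hpq⟩ := hsep
  set r := (fun p' q' => p' ∈ (K.lk {x}).faces ∧ q' ∈ (K.lk {x}).faces ∧ p'.card = 3 ∧ q'.card = 3 ∧
        (p' ∩ q').card = 2 ∧ ¬ (p' ∩ q' ⊆ σ.erase x)) with hrdef
  let f : Finset ℕ → ZMod 2 := fun F => if Relation.ReflTransGen r p (F.erase x) then 1 else 0
  have hlk : ∀ F, K.Fct F → x ∈ F → F.erase x ∈ (K.lk {x}).faces ∧ (F.erase x).card = 3 := by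
    intro F hF hxF
    have hc : (F.erase x).card = 3 := by rw [Finset.card_erase_of_mem hxF, hF.2]
    refine ⟨?_, hc⟩
    rw [mem_lk]
    refine ⟨sub_face hF.1 (Finset.erase_subset x F) (Finset.card_pos.mp (by omega)), ?_, ?_⟩
    · ext y; simp
    · have : F.erase x ∪ {x} = F := by ext y; simp; grind
      rw [this]; exact hF.1
  have hoff : ∀ R ∈ K.faces, R.card = 3 → x ∈ R → ¬ R ⊆ σ → K.jump f R = 0 := by
    intro R hR hR3 hxR hRσ
    obtain ⟨F, hF, hRF⟩ := (weak_of_normal hK).sub R hR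
    obtain ⟨G, hG, hRG, hne, hi⟩ := hr.other hR3 hF hRF
    rw [jump_eq hr hR3 hF hG hRF hRG hne.symm]
    have h1 := hlk F hF (hRF hxR)
    have h2 := hlk G hG (hRG hxR)
    have hcapR : F.erase x ∩ G.erase x = R.erase x := by
      rw [← hi]; ext y; simp; tauto
    have hc : (R.erase x).card = 2 := by rw [Finset.card_erase_of_mem hxR, hR3]
    have hns : ¬ (R.erase x ⊆ σ.erase x) := by
      intro h
      apply hRσ
      intro y hy
      by_cases hyx : y = x
      · rw [hyx]; exact hx
      · exact Finset.mem_of_mem_erase (h (by simp [hyx, hy]))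
    have r1 : r (F.erase x) (G.erase x) := ⟨h1.1, h2.1, h1.2, h2.2, by rw [hcapR, hc], by rwa [hcapR]⟩
    have r2 : r (G.erase x) (F.erase x) := ⟨h2.1, h1.1, h2.2, h1.2,
      by rw [Finset.inter_comm, hcapR, hc], by rwa [Finset.inter_comm, hcapR]⟩
    have : f F = f G := by
      have hiff : Relation.ReflTransGen r p (F.erase x) ↔ Relation.ReflTransGen r p (G.erase x) :=
        ⟨fun h => h.tail r1, fun h => h.tail r2⟩
      simp only [f, hiff]
    rw [this, z2_add_self]
  have hfc : ∀ p, p ∈ (K.lk {x}).faces → p.card = 3 → x ∉ p ∧ K.Fct (insert x p) := by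
    intro p hp hp3
    rw [mem_lk] at hp
    have hxp : x ∉ p := by
      intro h
      have : x ∈ p ∩ {x} := by simp [h]
      rw [hp.2.1] at this; simp at this
    refine ⟨hxp, ?_, by rw [Finset.card_insert_of_notMem hxp, hp3]⟩
    have : insert x p = p ∪ {x} := by ext; simp
    rw [this]; exact hp.2.2
  refine ⟨f, ?_⟩
  by_contra hcon
  push Not at hcon
  obtain ⟨R0, hR0, hR03, hxR0, hne⟩ := hcon
  have hR0σ : R0 ⊆ σ := by
    by_contra h
    rw [if_neg h] at hne
    exact hne (hoff R0 hR0 hR03 hxR0 h)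
  rw [if_pos hR0σ] at hne
  have hz0 : K.jump f R0 = 0 := by
    by_contra h; exact hne (z2_one h)
  obtain ⟨b, hbσ, rfl⟩ := ridge_sub hσ hR03 hR0σ
  have hall : ∀ R ∈ K.faces, R.card = 3 → {x} ⊆ R → K.jump f R = 0 := by
    intro R hR hR3 hxR
    rw [Finset.singleton_subset_iff] at hxR
    by_cases hRσ : R ⊆ σ
    · obtain ⟨c, hcσ, rfl⟩ := ridge_sub hσ hR3 hRσ
      by_cases hbc : b = c
      · rw [← hbc]; exact hz0
      · rw [← jumps_eq hσ hb hbσ hcσ hbc, hz0]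
        intro R hR hR3 hsub hns
        refine hoff R hR hR3 (hsub ?_) hns
        simp only [Finset.mem_erase] at hxR hxR0 ⊢
        tauto
    · exact hoff R hR hR3 hxR hRσ
  have hP := hfc p hp hp3
  have hQ := hfc q hq hq3
  have hxK : {x} ∈ K.faces := sub_face hP.2.1 (by simp) (by simp)
  have := const_of_jump hK hxK hall hP.2 hQ.2 (by simp) (by simp)
  simp only [f] at this
  rw [Finset.erase_insert hP.1, Finset.erase_insert hQ.1, if_pos Relation.ReflTransGen.refl,
    if_neg hpq] at this
  exact absurd this (by decide)

open Classical in
theorem exists_side {K : SComplex} (hK : K.IsNormalPseudomanifold 3) {σ} (hσ : σ.card = 4)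
    (hb : ∀ τ ∈ properFaces σ, τ ∈ K.faces)
    (hsep : ∀ x ∈ σ, SeparatesLink (K.lk {x}) (σ.erase x)) :
    ∃ f : Finset ℕ → ZMod 2, ∀ R ∈ K.faces, R.card = 3 → (R ∩ σ).Nonempty →
      K.jump f R = if R ⊆ σ then 1 else 0 := by
  have hex : ∀ x, ∃ f : Finset ℕ → ZMod 2, x ∈ σ → ∀ R ∈ K.faces, R.card = 3 → x ∈ R →
      K.jump f R = if R ⊆ σ then 1 else 0 := by
    intro x
    by_cases hx : x ∈ σ
    · obtain ⟨f, hf⟩ := vertex_side hK hσ hb hx (hsep x hx)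
      exact ⟨f, fun _ => hf⟩
    · exact ⟨0, fun h => absurd h hx⟩
  choose s hs using hex
  have hsub := (weak_of_normal hK).sub
  obtain ⟨x0, hx0⟩ : σ.Nonempty := Finset.card_pos.mp (by omega)
  -- small faces of the boundary
  have hface : ∀ x ∈ σ, ∀ y ∈ σ, ∀ z ∈ σ, ({x, y, z} : Finset ℕ) ∈ K.faces := by
    intro x hx y hy z hz
    apply hb
    simp only [properFaces, Finset.mem_filter, Finset.mem_powerset]
    refine ⟨?_, by simp, ?_⟩
    · intro w hw; simp at hw; rcases hw with rfl | rfl | rfl <;> assumption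
    · intro h
      have := Finset.card_le_three (a := x) (b := y) (c := z)
      rw [h] at this; omega
  have hcon : ∀ x ∈ σ, ∀ y ∈ σ, ∀ F G, K.Fct F → K.Fct G → x ∈ F → y ∈ F → x ∈ G → y ∈ G →
      s x F + s y F = s x G + s y G := by
    intro x hx y hy F G hF hG h1 h2 h3 h4
    have := const_of_jump hK (f := fun F => s x F + s y F) (s := {x, y})
      (by simpa using hface x hx x hx y hy) (by
        intro R hR hR3 hxy
        rw [jump_add, hs x hx R hR hR3 (hxy (by simp)), hs y hy R hR hR3 (hxy (by simp)),
          z2_add_self]) hF hG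
      (by intro z hz; simp at hz; rcases hz with rfl | rfl <;> assumption)
      (by intro z hz; simp at hz; rcases hz with rfl | rfl <;> assumption)
    exact this
  have hG : ∀ x, ∃ G, x ∈ σ → K.Fct G ∧ x0 ∈ G ∧ x ∈ G := by
    intro x
    by_cases hx : x ∈ σ
    · obtain ⟨G, hG, hs⟩ := hsub _ (hface x0 hx0 x0 hx0 x hx)
      exact ⟨G, fun _ => ⟨hG, hs (by simp), hs (by simp)⟩⟩
    · exact ⟨∅, fun h => absurd h hx⟩
  choose G hG using hG
  let s' : ℕ → Finset ℕ → ZMod 2 := fun x F => s x F + (s x (G x) + s x0 (G x))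
  have hs' : ∀ x ∈ σ, ∀ y ∈ σ, ∀ F, K.Fct F → x ∈ F → y ∈ F → s' x F = s' y F := by
    intro x hx y hy F hF hxF hyF
    obtain ⟨H, hH, hHs⟩ := hsub _ (hface x0 hx0 x hx y hy)
    have a1 := hcon x hx y hy F H hF hH hxF hyF (hHs (by simp)) (hHs (by simp))
    have a2 := hcon x hx x0 hx0 (G x) H (hG x hx).1 hH (hG x hx).2.2 (hG x hx).2.1
      (hHs (by simp)) (hHs (by simp))
    have a3 := hcon y hy x0 hx0 (G y) H (hG y hy).1 hH (hG y hy).2.2 (hG y hy).2.1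
      (hHs (by simp)) (hHs (by simp))
    simp only [s']
    rw [a2, a3]
    apply z2_eq
    have t0 := z2_add_self (s x H)
    have t1 := z2_add_self (s y H)
    have t2 := z2_add_self (s x0 H)
    linear_combination a1 + t0 + t1 + t2
  let f : Finset ℕ → ZMod 2 := fun F => if h : (F ∩ σ).Nonempty then s' h.choose F else 0
  have hf : ∀ x ∈ σ, ∀ F, K.Fct F → x ∈ F → f F = s' x F := by
    intro x hx F hF hxF
    have h : (F ∩ σ).Nonempty := ⟨x, by simp [hx, hxF]⟩
    have hm := h.choose_spec
    rw [Finset.mem_inter] at hm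
    simp only [f]
    rw [dif_pos h]
    exact hs' _ hm.2 x hx F hF hm.1 hxF
  refine ⟨f, fun R hR hR3 ⟨x, hx⟩ => ?_⟩
  rw [Finset.mem_inter] at hx
  rw [jump_congr (g := s' x) (fun F hF hRF => hf x hx.2 F hF (hRF hx.1))]
  have := hs x hx.2 R hR hR3 hx.1
  rw [← this]
  simp only [s']
  rw [jump_add]
  have hz : K.jump (fun F => s x (G x) + s x0 (G x)) R = 0 := by
    obtain ⟨F, hF, hRF⟩ := hsub R hR
    obtain ⟨G', hG', hRG, hne, hi⟩ := RidgeProp.other hK.2.2.1 hR3 hF hRF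
    rw [jump_eq hK.2.2.1 hR3 hF hG' hRF hRG hne.symm, z2_add_self]
  rw [hz, add_zero]

/-! ### Part 6: cutting along a missing tetrahedron -/

def shf (N : ℕ) (σ : Finset ℕ) (v : ℕ) : ℕ := if v ∈ σ then v + N else v

def sm (N : ℕ) (σ : Finset ℕ) (ε : ZMod 2) (s : Finset ℕ) : Finset ℕ :=
  if ε = 0 then s else s.image (shf N σ)

def unsh (N : ℕ) (σ : Finset ℕ) (y : ℕ) : ℕ := if y ∈ σ.image (fun v => v + N) then y - N else y

theorem unsh_add {N σ v} (hv : v ∈ σ) : unsh N σ (v + N) = v := by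
  unfold unsh
  rw [if_pos (Finset.mem_image_of_mem (fun v => v + N) hv)]
  omega

theorem unsh_lt {N σ v} (hv : v < N) : unsh N σ v = v := by
  unfold unsh
  rw [if_neg]
  intro h
  obtain ⟨a, _, h⟩ := Finset.mem_image.mp h
  omega

theorem unsh_cases (N σ y) : unsh N σ y = y ∨ (unsh N σ y ∈ σ ∧ y = unsh N σ y + N) := by
  unfold unsh
  split_ifs with h
  · right
    obtain ⟨a, ha, h⟩ := Finset.mem_image.mp h
    subst h
    simpa using ha
  · left; rfl

theorem mem_sm {N σ ε s y} (hs : ∀ x ∈ s, x < N) :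
    y ∈ sm N σ ε s ↔ unsh N σ y ∈ s ∧ (unsh N σ y ∈ σ → (N ≤ y ↔ ε ≠ 0)) := by
  unfold sm
  split_ifs with he
  · constructor
    · intro hy
      have := hs y hy
      rw [unsh_lt this]
      refine ⟨hy, fun _ => ?_⟩
      simp [he, this]
    · rintro ⟨h1, h2⟩
      rcases unsh_cases N σ y with h | ⟨h, h'⟩
      · rwa [h] at h1
      · exact absurd he ((h2 h).mp (by omega))
  · rw [Finset.mem_image]
    constructor
    · rintro ⟨v, hv, rfl⟩
      unfold shf
      split_ifs with hvσ
      · rw [unsh_add hvσ]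
        exact ⟨hv, fun _ => by simp [he]⟩
      · rw [unsh_lt (hs v hv)]
        exact ⟨hv, fun h => absurd h hvσ⟩
    · rintro ⟨h1, h2⟩
      refine ⟨_, h1, ?_⟩
      unfold shf
      rcases unsh_cases N σ y with h | ⟨h, h'⟩
      · rw [if_neg, h]
        intro h3
        have := (h2 h3).mpr he
        have h4 := hs _ h1
        omega
      · rw [if_pos h, ← h']

theorem image_unsh_sm {N σ ε s} (hs : ∀ x ∈ s, x < N) : (sm N σ ε s).image (unsh N σ) = s := by
  ext v
  rw [Finset.mem_image]
  constructor
  · rintro ⟨y, hy, rfl⟩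
    exact ((mem_sm hs).mp hy).1
  · intro hv
    by_cases h : v ∈ σ ∧ ε ≠ 0
    · refine ⟨v + N, ?_, unsh_add h.1⟩
      rw [mem_sm hs, unsh_add h.1]
      exact ⟨hv, fun _ => by simp [h.2]⟩
    · have hvN := hs v hv
      refine ⟨v, ?_, unsh_lt hvN⟩
      rw [mem_sm hs, unsh_lt hvN]
      refine ⟨hv, fun hσ => ?_⟩
      constructor
      · intro; omega
      · intro h'; exact absurd ⟨hσ, h'⟩ h

theorem injOn_unsh_sm {N σ ε s} (hs : ∀ x ∈ s, x < N) : Set.InjOn (unsh N σ) ↑(sm N σ ε s) := by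
  intro x hx y hy hxy
  rw [Finset.mem_coe, mem_sm hs] at hx hy
  have h1 := hs _ hx.1
  rcases unsh_cases N σ x with h | ⟨h, h'⟩
  · rcases unsh_cases N σ y with k | ⟨k, k'⟩
    · rw [← h, ← k, hxy]
    · have h2 := (hy.2 k).mp (by omega)
      rw [hxy] at hx
      have := (hx.2 k).mpr h2
      omega
  · rcases unsh_cases N σ y with k | ⟨k, k'⟩
    · have h2 := (hx.2 h).mp (by omega)
      rw [← hxy] at hy
      have := (hy.2 h).mpr h2
      omega
    · rw [h', k', hxy]

theorem card_sm {N σ ε s} (hs : ∀ x ∈ s, x < N) : (sm N σ ε s).card = s.card := by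
  conv_rhs => rw [← image_unsh_sm (σ := σ) (ε := ε) hs]
  rw [Finset.card_image_of_injOn (injOn_unsh_sm hs)]

theorem z2_iff {a b : ZMod 2} (h : a ≠ 0 ↔ b ≠ 0) : a = b := by
  revert a b; decide

theorem sm_sub {N σ ε ε' s t} (hs : ∀ x ∈ s, x < N) (ht : ∀ x ∈ t, x < N) :
    sm N σ ε s ⊆ sm N σ ε' t ↔ s ⊆ t ∧ ((s ∩ σ).Nonempty → ε = ε') := by
  constructor
  · intro h
    refine ⟨?_, ?_⟩
    · have := Finset.image_subset_image (f := unsh N σ) h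
      rwa [image_unsh_sm hs, image_unsh_sm ht] at this
    · rintro ⟨x, hx⟩
      rw [Finset.mem_inter] at hx
      have hx' : x ∈ (sm N σ ε s).image (unsh N σ) := by rw [image_unsh_sm hs]; exact hx.1
      obtain ⟨y, hy, rfl⟩ := Finset.mem_image.mp hx'
      have hy2 := h hy
      rw [mem_sm hs] at hy
      rw [mem_sm ht] at hy2
      have a := hy.2 hx.2
      have b := hy2.2 hx.2
      exact z2_iff (a.symm.trans b)
  · rintro ⟨h1, h2⟩ y hy
    rw [mem_sm hs] at hy
    rw [mem_sm ht]
    refine ⟨h1 hy.1, fun h => ?_⟩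
    rw [← h2 ⟨_, Finset.mem_inter.mpr ⟨hy.1, h⟩⟩]
    exact hy.2 h

theorem sub_sm_eq {N σ ε z R} (hz : ∀ x ∈ z, x < N) (hR : R ⊆ sm N σ ε z) :
    R = sm N σ ε (R.image (unsh N σ)) ∧ R.image (unsh N σ) ⊆ z := by
  have h1 : R.image (unsh N σ) ⊆ z := by
    have := Finset.image_subset_image (f := unsh N σ) hR
    rwa [image_unsh_sm hz] at this
  refine ⟨?_, h1⟩
  have hs : ∀ x ∈ R.image (unsh N σ), x < N := fun x hx => hz x (h1 hx)
  ext y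
  rw [mem_sm hs]
  constructor
  · intro hy
    exact ⟨Finset.mem_image_of_mem _ hy, ((mem_sm hz).mp (hR hy)).2⟩
  · rintro ⟨hy, hy2⟩
    obtain ⟨y', hy', he⟩ := Finset.mem_image.mp hy
    have h2 : y ∈ sm N σ ε z := by
      rw [mem_sm hz]; exact ⟨h1 hy, hy2⟩
    rw [injOn_unsh_sm hz h2 (hR hy') he.symm]
    exact hy'

theorem card_eq_two_of {α : Type} [DecidableEq α] {s : Finset α} {a b : α} (ha : a ∈ s) (hb : b ∈ s)
    (hab : a ≠ b) (h : ∀ x ∈ s, x = a ∨ x = b) : s.card = 2 := by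
  have : s = {a, b} := by
    ext x
    simp only [Finset.mem_insert, Finset.mem_singleton]
    constructor
    · exact h x
    · rintro (rfl | rfl) <;> assumption
  rw [this, Finset.card_pair hab]

/-- The complex generated by a set of finite sets. -/
def gen (Z : Finset (Finset ℕ)) : SComplex where
  faces := Z.biUnion fun z => z.powerset.filter fun s => s ≠ ∅
  not_empty_mem := by simp
  down_closed := by
    intro s hs t hts ht
    simp only [Finset.mem_biUnion, Finset.mem_filter, Finset.mem_powerset] at hs ⊢
    obtain ⟨z, hz, h1, _⟩ := hs
    exact ⟨z, hz, hts.trans h1, ht⟩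

theorem mem_gen {Z s} : s ∈ (gen Z).faces ↔ s.Nonempty ∧ ∃ z ∈ Z, s ⊆ z := by
  simp only [gen, Finset.mem_biUnion, Finset.mem_filter, Finset.mem_powerset,
    Finset.nonempty_iff_ne_empty]
  constructor
  · rintro ⟨z, h1, h2, h3⟩; exact ⟨h3, z, h1, h2⟩
  · rintro ⟨h3, z, h1, h2⟩; exact ⟨z, h1, h2, h3⟩

theorem fct_gen {Z F} (hZ : ∀ z ∈ Z, z.card = 4) : (gen Z).Fct F ↔ F ∈ Z := by
  unfold Fct
  rw [mem_gen]
  constructor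
  · rintro ⟨⟨_, z, hz, h1⟩, h2⟩
    rw [Finset.eq_of_subset_of_card_le h1 (by rw [hZ z hz, h2])]
    exact hz
  · intro h
    exact ⟨⟨Finset.card_pos.mp (by rw [hZ F h]; omega), F, h, Finset.Subset.refl F⟩, hZ F h⟩

theorem cut_handle {K : SComplex} (hK : K.IsNormalPseudomanifold 3) {σ} (hσ : σ.card = 4)
    (hm : σ ∉ K.faces) (hb : ∀ τ ∈ properFaces σ, τ ∈ K.faces) {f : Finset ℕ → ZMod 2}
    (hf : ∀ R ∈ K.faces, R.card = 3 → (R ∩ σ).Nonempty → K.jump f R = if R ⊆ σ then 1 else 0)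
    (hA : ∀ g : Finset ℕ → ZMod 2, (∀ R ∈ K.faces, R.card = 3 → ¬ R ⊆ σ → K.jump g R = 0) →
      ∀ F G, K.Fct F → K.Fct G → g F = g G) :
    ∃ C τ₁ τ₂ ψ h, Weak C ∧ Handle C K τ₁ τ₂ ψ h := by
  classical
  have hw := weak_of_normal hK
  have hr : RidgeProp K := hw.ridge
  have hbf : ∀ s, s ⊆ σ → s.Nonempty → s ≠ σ → s ∈ K.faces := by
    intro s h1 h2 h3
    apply hb
    simp only [properFaces, Finset.mem_filter, Finset.mem_powerset]
    exact ⟨h1, h2.ne_empty, h3⟩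
  have hσV : σ ⊆ K.vertexSet := by
    intro x hx
    rw [mem_vertexSet]
    apply hbf _ (by simpa using hx) (by simp)
    intro h; rw [← h] at hσ; simp at hσ
  obtain ⟨N, hN⟩ : ∃ N, ∀ x ∈ K.vertexSet, x < N :=
    ⟨K.vertexSet.sup id + 1, fun x hx => Nat.lt_succ_of_le (Finset.le_sup (f := id) hx)⟩
  have hσN : ∀ x ∈ σ, x < N := fun x hx => hN x (hσV hx)
  have hFN : ∀ s ∈ K.faces, ∀ x ∈ s, x < N := fun s hs x hx => hN x (face_sub_vertexSet hs hx)
  let Z : Finset (Finset ℕ) := ((K.faces.filter fun F => F.card = 4).image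
    fun F => sm N σ (f F) F) ∪ {sm N σ 0 σ, sm N σ 1 σ}
  have hZ : ∀ z, z ∈ Z ↔ ∃ ε z0, ((K.Fct z0 ∧ ε = f z0) ∨ z0 = σ) ∧ z = sm N σ ε z0 := by
    intro z
    simp only [Z, Finset.mem_union, Finset.mem_image, Finset.mem_filter, Finset.mem_insert,
      Finset.mem_singleton]
    constructor
    · rintro (⟨F, hF, rfl⟩ | h | h)
      · exact ⟨_, F, Or.inl ⟨hF, rfl⟩, rfl⟩
      · exact ⟨0, σ, Or.inr rfl, h⟩
      · exact ⟨1, σ, Or.inr rfl, h⟩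
    · rintro ⟨ε, z0, (⟨h1, rfl⟩ | rfl), rfl⟩
      · exact Or.inl ⟨z0, h1, rfl⟩
      · right
        by_cases h : ε = 0
        · left; rw [h]
        · right; rw [z2_one h]
  have hZN : ∀ {ε z0}, ((K.Fct z0 ∧ ε = f z0) ∨ z0 = σ) → ∀ x ∈ z0, x < N := by
    rintro ε z0 (h | rfl)
    · exact hFN z0 h.1.1
    · exact hσN
  have hZ4 : ∀ z ∈ Z, z.card = 4 := by
    intro z hz
    obtain ⟨ε, z0, h, rfl⟩ := (hZ z).mp hz
    rw [card_sm (hZN h)]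
    rcases h with h | rfl
    · exact h.1.2
    · exact hσ
  have hfct : ∀ G, (gen Z).Fct G ↔ ∃ ε z0, ((K.Fct z0 ∧ ε = f z0) ∨ z0 = σ) ∧ G = sm N σ ε z0 :=
    fun G => (fct_gen hZ4).trans (hZ G)
  have hsmf : ∀ F, K.Fct F → (gen Z).Fct (sm N σ (f F) F) := fun F hF =>
    (hfct _).mpr ⟨_, F, Or.inl ⟨hF, rfl⟩, rfl⟩
  have hsmσ : ∀ ε, (gen Z).Fct (sm N σ ε σ) := fun ε => (hfct _).mpr ⟨_, σ, Or.inr rfl, rfl⟩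
  have hsmne : ∀ {ε ε' s t}, (∀ x ∈ s, x < N) → (∀ x ∈ t, x < N) → s ≠ t →
      sm N σ ε s ≠ sm N σ ε' t := by
    intro ε ε' s t hs ht hne h
    have := congrArg (Finset.image (unsh N σ)) h
    rw [image_unsh_sm hs, image_unsh_sm ht] at this
    exact hne this
  -- tetrahedra at a ridge of the boundary of the missing tetrahedron
  have hside : ∀ R0, R0 ⊆ σ → R0.card = 3 → ∀ ε, ∃ F, K.Fct F ∧ R0 ⊆ F ∧ f F = ε ∧
      ∀ H, K.Fct H → R0 ⊆ H → f H = ε → H = F := by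
    intro R0 hR0 hR3 ε
    have hne : R0.Nonempty := Finset.card_pos.mp (by omega)
    have hRK : R0 ∈ K.faces := hbf R0 hR0 hne (by rintro rfl; omega)
    obtain ⟨F, hF, hRF⟩ := hw.sub R0 hRK
    obtain ⟨G, hG, hRG, hFG, _⟩ := hr.other hR3 hF hRF
    have hj := hf R0 hRK hR3 (by rwa [Finset.inter_eq_left.mpr hR0])
    rw [if_pos hR0, jump_eq hr hR3 hF hG hRF hRG hFG.symm] at hj
    have hcase : ∀ a b e : ZMod 2, a + b = 1 → (a = e ∧ b ≠ e) ∨ (b = e ∧ a ≠ e) := by decide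
    rcases hcase _ _ ε hj with ⟨h1, h2⟩ | ⟨h1, h2⟩
    · refine ⟨F, hF, hRF, h1, fun H hH hRH hfH => ?_⟩
      rcases hr.two hR3 hF hG hH hRF hRG hRH hFG.symm with h | h
      · exact h
      · exact absurd (h ▸ hfH) h2
    · refine ⟨G, hG, hRG, h1, fun H hH hRH hfH => ?_⟩
      rcases hr.two hR3 hF hG hH hRF hRG hRH hFG.symm with h | h
      · exact absurd (h ▸ hfH) h2
      · exact h
  -- tetrahedra at other ridges
  have hsame : ∀ R0, ¬ R0 ⊆ σ → R0.card = 3 → ∀ F G, K.Fct F → K.Fct G → R0 ⊆ F → R0 ⊆ G →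
      (R0 ∩ σ).Nonempty → f F = f G := by
    intro R0 hR0 hR3 F G hF hG hRF hRG hne
    by_cases hFG : F = G
    · rw [hFG]
    have hRK : R0 ∈ K.faces := sub_face hF.1 hRF (Finset.card_pos.mp (by omega))
    have hj := hf R0 hRK hR3 hne
    rw [if_neg hR0, jump_eq hr hR3 hF hG hRF hRG hFG] at hj
    exact z2_eq hj
  have hrC : RidgeProp (gen Z) := by
    intro R hR hR3
    rw [mem_gen] at hR
    obtain ⟨hRne, z, hz, hRz⟩ := hR
    obtain ⟨ε, z0, hz0, rfl⟩ := (hZ z).mp hz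
    obtain ⟨hRe, hR0z⟩ := sub_sm_eq (hZN hz0) hRz
    set R0 := R.image (unsh N σ) with hR0
    have hR0N : ∀ x ∈ R0, x < N := fun x hx => hZN hz0 x (hR0z hx)
    have hR03 : R0.card = 3 := by rw [← hR3, hRe, card_sm hR0N]
    have hmemf : ∀ G, G ∈ (gen Z).faces.filter (fun F => F.card = 3 + 1 ∧ R ⊆ F) ↔
        (gen Z).Fct G ∧ R ⊆ G := by
      intro G
      rw [Finset.mem_filter]
      unfold Fct
      tauto
    by_cases hR0σ : R0 ⊆ σ
    · have hmeet : (R0 ∩ σ).Nonempty := by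
        rw [Finset.inter_eq_left.mpr hR0σ]; exact Finset.card_pos.mp (by omega)
      obtain ⟨F, hF, hRF, hfF, huF⟩ := hside R0 hR0σ hR03 ε
      refine card_eq_two_of (a := sm N σ ε σ) (b := sm N σ ε F) ?_ ?_ ?_ ?_
      · rw [hmemf]
        refine ⟨hsmσ ε, ?_⟩
        rw [hRe, sm_sub hR0N hσN]
        exact ⟨hR0σ, fun _ => rfl⟩
      · rw [hmemf]
        refine ⟨hfF ▸ hsmf F hF, ?_⟩
        rw [hRe, sm_sub hR0N (hFN F hF.1)]
        exact ⟨hRF, fun _ => rfl⟩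
      · apply hsmne hσN (hFN F hF.1)
        rintro rfl
        exact hm hF.1
      · intro G hG
        rw [hmemf, hfct] at hG
        obtain ⟨⟨ε', z', hz', rfl⟩, hRG⟩ := hG
        rw [hRe, sm_sub hR0N (hZN hz')] at hRG
        obtain rfl := hRG.2 hmeet
        rcases hz' with ⟨h1, h2⟩ | rfl
        · right
          rw [huF z' h1 hRG.1 h2.symm]
        · left; rfl
    · rcases hz0 with ⟨hz0, rfl⟩ | rfl
      swap
      · exact absurd hR0z hR0σ
      obtain ⟨G, hG, hRG, hne, _⟩ := hr.other hR03 hz0 hR0z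
      refine card_eq_two_of (a := sm N σ (f z0) z0) (b := sm N σ (f G) G) ?_ ?_ ?_ ?_
      · rw [hmemf]
        exact ⟨hsmf z0 hz0, hRz⟩
      · rw [hmemf]
        refine ⟨hsmf G hG, ?_⟩
        rw [hRe, sm_sub hR0N (hFN G hG.1)]
        exact ⟨hRG, fun h => hsame R0 hR0σ hR03 z0 G hz0 hG hR0z hRG h⟩
      · exact hsmne (hFN z0 hz0.1) (hFN G hG.1) hne.symm
      · intro H hH
        rw [hmemf, hfct] at hH
        obtain ⟨⟨ε', z', hz', rfl⟩, hRH⟩ := hH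
        rw [hRe, sm_sub hR0N (hZN hz')] at hRH
        rcases hz' with ⟨h1, rfl⟩ | rfl
        · rcases hr.two hR03 hz0 hG h1 hR0z hRG hRH.1 hne.symm with rfl | rfl
          · left; rfl
          · right; rfl
        · exact absurd hRH.1 hR0σ
  -- adjacency in the cut complex
  have hcap : ∀ {A B : Finset ℕ} {R0 : Finset ℕ} {ε}, (gen Z).Fct A → (gen Z).Fct B → A ≠ B →
      (∀ x ∈ R0, x < N) → R0.card = 3 → sm N σ ε R0 ⊆ A → sm N σ ε R0 ⊆ B → (A ∩ B).card = 3 := by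
    intro A B R0 ε hA hB hne hN0 h3 h1 h2
    have c1 : 3 ≤ (A ∩ B).card := by
      rw [← h3, ← card_sm (σ := σ) (ε := ε) hN0]
      exact Finset.card_le_card (Finset.subset_inter h1 h2)
    have c2 : (A ∩ B).card ≤ 4 := hA.2 ▸ Finset.card_le_card Finset.inter_subset_left
    by_contra h
    have c3 : (A ∩ B).card = 4 := by omega
    have e1 := Finset.eq_of_subset_of_card_le (Finset.inter_subset_left (s₁ := A) (s₂ := B))
      (by rw [hA.2, c3])
    have e2 := Finset.eq_of_subset_of_card_le (Finset.inter_subset_right (s₁ := A) (s₂ := B))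
      (by rw [hB.2, c3])
    exact hne (e1.symm.trans e2)
  have hconC : ∀ g : Finset ℕ → ZMod 2,
      (∀ F G, (gen Z).Fct F → (gen Z).Fct G → (F ∩ G).card = 3 → g F = g G) →
      ∀ F G, (gen Z).Fct F → (gen Z).Fct G → g F = g G := by
    intro g hg
    have hg' := hA (fun F => g (sm N σ (f F) F)) (by
      intro R hR hR3 hRσ
      obtain ⟨F, hF, hRF⟩ := hw.sub R hR
      obtain ⟨G, hG, hRG, hne, _⟩ := hr.other hR3 hF hRF
      rw [jump_eq hr hR3 hF hG hRF hRG hne.symm]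
      have : g (sm N σ (f F) F) = g (sm N σ (f G) G) := by
        apply hg _ _ (hsmf F hF) (hsmf G hG)
        apply hcap (R0 := R) (ε := f F) (hsmf F hF) (hsmf G hG)
          (hsmne (hFN F hF.1) (hFN G hG.1) hne.symm) (hFN R hR) hR3
        · rw [sm_sub (hFN R hR) (hFN F hF.1)]
          exact ⟨hRF, fun _ => rfl⟩
        · rw [sm_sub (hFN R hR) (hFN G hG.1)]
          exact ⟨hRG, fun h => hsame R hRσ hR3 F G hF hG hRF hRG h⟩
      simp only [this, z2_add_self])
    obtain ⟨x, hx⟩ : σ.Nonempty := Finset.card_pos.mp (by omega)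
    have hE3 : (σ.erase x).card = 3 := by rw [Finset.card_erase_of_mem hx, hσ]
    obtain ⟨F0, hF0, _, _, _⟩ := hside (σ.erase x) (Finset.erase_subset x σ) hE3 0
    have key : ∀ G, (gen Z).Fct G → g G = g (sm N σ (f F0) F0) := by
      intro G hG
      obtain ⟨ε, z0, (⟨hz, rfl⟩ | rfl), rfl⟩ := (hfct G).mp hG
      · exact hg' z0 F0 hz hF0
      · obtain ⟨F, hF, hRF, rfl, _⟩ := hside (z0.erase x) (Finset.erase_subset x z0) hE3 ε
        rw [← hg' F F0 hF hF0]
        apply hg _ _ hG (hsmf F hF)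
        have hEN : ∀ y ∈ z0.erase x, y < N := fun y hy => hσN y (Finset.mem_of_mem_erase hy)
        apply hcap (R0 := z0.erase x) (ε := f F) hG (hsmf F hF) _ hEN hE3
        · rw [sm_sub hEN hσN]
          exact ⟨Finset.erase_subset _ _, fun _ => rfl⟩
        · rw [sm_sub hEN (hFN F hF.1)]
          exact ⟨hRF, fun _ => rfl⟩
        · apply hsmne hσN (hFN F hF.1)
          rintro rfl
          exact hm hF.1
    intro F G hF hG
    rw [key F hF, key G hG]
  have hsm0 : sm N σ 0 σ = σ := by simp [sm]
  have hsm1 : sm N σ 1 σ = σ.image (fun v => v + N) := by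
    simp only [sm, one_ne_zero, if_false]
    apply Finset.image_congr
    intro v hv
    simp only [shf]
    rw [if_pos (Finset.mem_coe.mp hv)]
  refine ⟨gen Z, σ, σ.image (fun v => v + N), fun v => v + N, unsh N σ, ?_, ?_⟩
  · refine ⟨?_, hrC, hconC, ⟨_, (hsmσ 0).1⟩⟩
    intro s hs
    rw [mem_gen] at hs
    obtain ⟨_, z, hz, hsz⟩ := hs
    exact ⟨z, (fct_gen hZ4).mpr hz, hsz⟩
  · refine ⟨?_, ?_, ?_, rfl, ?_, ?_, ?_, ?_⟩
    · have := hsmσ 0; rwa [hsm0] at this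
    · have := hsmσ 1; rwa [hsm1] at this
    · intro a _ b _ h
      simpa using h
    · intro x hx z h1 h2
      rw [mem_gen] at h1 h2
      obtain ⟨_, A, hA', h1⟩ := h1
      obtain ⟨_, B, hB', h2⟩ := h2
      obtain ⟨ε, A0, hA0, rfl⟩ := (hZ A).mp hA'
      obtain ⟨δ, B0, hB0, rfl⟩ := (hZ B).mp hB'
      have hxA := (mem_sm (hZN hA0)).mp (h1 (show x ∈ ({x, z} : Finset ℕ) by simp))
      have hzA := (mem_sm (hZN hA0)).mp (h1 (show z ∈ ({x, z} : Finset ℕ) by simp))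
      have hzB := (mem_sm (hZN hB0)).mp (h2 (show z ∈ ({z, x + N} : Finset ℕ) by simp))
      have hxB := (mem_sm (hZN hB0)).mp (h2 (show x + N ∈ ({z, x + N} : Finset ℕ) by simp))
      rw [unsh_lt (hσN x hx)] at hxA
      rw [unsh_add hx] at hxB
      have e1 := hxA.2 hx
      have e2 := hxB.2 hx
      have hxN := hσN x hx
      have e1' : ε = 0 := by by_contra h; have := e1.mpr h; omega
      have e2' : δ ≠ 0 := e2.mp (by omega)
      have hzσ : unsh N σ z ∉ σ := by
        intro h
        have a := hzA.2 h
        have b := hzB.2 h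
        exact a.mp (b.mpr e2') e1'
      rcases hA0 with ⟨hA0, hε⟩ | rfl
      swap
      · exact hzσ hzA.1
      rcases hB0 with ⟨hB0, hδ⟩ | rfl
      swap
      · exact hzσ hzB.1
      have hc := const_of_jump hK (f := f) (s := {x, unsh N σ z}) (F := A0) (G := B0)
        (pair_face hA0.1 hxA.1 hzA.1) (by
          intro R hR hR3 hsub
          rw [hf R hR hR3 ⟨x, by simp [hx, hsub (show x ∈ ({x, unsh N σ z} : Finset ℕ) by simp)]⟩, if_neg]
          intro h
          exact hzσ (h (hsub (by simp)))) hA0 hB0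
          (by intro y hy; simp at hy; rcases hy with rfl | rfl; exact hxA.1; exact hzA.1)
          (by intro y hy; simp at hy; rcases hy with rfl | rfl; exact hxB.1; exact hzB.1)
      rw [← hε, ← hδ, e1'] at hc
      exact e2' hc.symm
    · intro y hy
      simp only [unsh]
      rw [if_neg hy]
    · intro x hx
      exact unsh_add hx
    · ext s
      rw [Finset.mem_sdiff, Finset.mem_image, Finset.mem_singleton]
      constructor
      · intro hs
        refine ⟨?_, fun h => hm (h ▸ hs)⟩
        obtain ⟨F, hF, hsF⟩ := hw.sub s hs
        refine ⟨sm N σ (f F) s, ?_, image_unsh_sm (hFN s hs)⟩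
        apply sub_face (hsmf F hF).1
        · rw [sm_sub (hFN s hs) (hFN F hF.1)]
          exact ⟨hsF, fun _ => rfl⟩
        · rw [← Finset.card_pos, card_sm (hFN s hs), Finset.card_pos]
          exact Finset.nonempty_of_ne_empty (fun h => K.not_empty_mem (h ▸ hs))
      · rintro ⟨⟨r, hr', rfl⟩, hne⟩
        rw [mem_gen] at hr'
        obtain ⟨hrne, z, hz, hrz⟩ := hr'
        obtain ⟨ε, z0, hz0, rfl⟩ := (hZ z).mp hz
        have h1 := (sub_sm_eq (hZN hz0) hrz).2
        have h2 : (r.image (unsh N σ)).Nonempty := hrne.image _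
        rcases hz0 with ⟨hz0, _⟩ | rfl
        · exact sub_face hz0.1 h1 h2
        · exact hbf _ h1 h2 hne

/-! ### Part 7: the connected sum decomposition -/

theorem eq_of_faces {K L : SComplex} (h : ∀ s, s ∈ K.faces ↔ s ∈ L.faces) : K = L := by
  cases K; cases L
  simp only [mk.injEq]
  exact Finset.ext h

theorem rtg_symm {α : Type} {r : α → α → Prop} [hr : Std.Symm r] {a b : α}
    (h : Relation.ReflTransGen r a b) : Relation.ReflTransGen r b a := by
  induction h with
  | refl => exact Relation.ReflTransGen.refl
  | tail _ hbc ih => exact Relation.ReflTransGen.head (hr.symm _ _ hbc) ih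

/-- The closed-up side of a missing tetrahedron. -/
def sideC (K : SComplex) (σ : Finset ℕ) (S : Finset ℕ → ZMod 2) (ε : ZMod 2) : SComplex :=
  gen ((K.faces.filter fun F => F.card = 4 ∧ S F = ε) ∪ {σ})

theorem mem_sideC {K σ S ε s} : s ∈ (sideC K σ S ε).faces ↔
    s.Nonempty ∧ ((∃ F, K.Fct F ∧ S F = ε ∧ s ⊆ F) ∨ s ⊆ σ) := by
  unfold sideC
  rw [mem_gen]
  simp only [Finset.mem_union, Finset.mem_filter, Finset.mem_singleton]
  constructor
  · rintro ⟨h, z, (⟨h1, h2, h3⟩ | rfl), h4⟩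
    · exact ⟨h, Or.inl ⟨z, ⟨h1, h2⟩, h3, h4⟩⟩
    · exact ⟨h, Or.inr h4⟩
  · rintro ⟨h, (⟨F, h1, h2, h3⟩ | h1)⟩
    · exact ⟨h, F, Or.inl ⟨h1.1, h1.2, h2⟩, h3⟩
    · exact ⟨h, σ, Or.inr rfl, h1⟩

theorem fct_sideC {K σ S ε F} (hσ : σ.card = 4) : (sideC K σ S ε).Fct F ↔
    (K.Fct F ∧ S F = ε) ∨ F = σ := by
  unfold sideC
  rw [fct_gen]
  · simp only [Finset.mem_union, Finset.mem_filter, Finset.mem_singleton, Fct]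
    tauto
  · intro z hz
    simp only [Finset.mem_union, Finset.mem_filter, Finset.mem_singleton] at hz
    rcases hz with h | rfl
    · exact h.2.1
    · exact hσ

theorem side_const {K : SComplex} (hK : K.IsNormalPseudomanifold 3) {σ} {S : Finset ℕ → ZMod 2}
    (hS : ∀ R ∈ K.faces, R.card = 3 → ¬ R ⊆ σ → K.jump S R = 0) {s F G}
    (hF : K.Fct F) (hG : K.Fct G) (hsF : s ⊆ F) (hsG : s ⊆ G) (hs : ¬ s ⊆ σ) : S F = S G := by
  have hne : s.Nonempty := by
    rw [Finset.nonempty_iff_ne_empty]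
    rintro rfl
    exact hs (Finset.empty_subset σ)
  exact const_of_jump hK (sub_face hF.1 hsF hne)
    (fun R hR h3 hsR => hS R hR h3 fun h => hs (hsR.trans h)) hF hG hsF hsG

theorem side_jump {K : SComplex} (hK : K.IsNormalPseudomanifold 3) {σ} (hσ : σ.card = 4)
    (hb : ∀ τ ∈ properFaces σ, τ ∈ K.faces) {S : Finset ℕ → ZMod 2}
    (hS : ∀ R ∈ K.faces, R.card = 3 → ¬ R ⊆ σ → K.jump S R = 0)
    (hn : ∃ F G, K.Fct F ∧ K.Fct G ∧ S F ≠ S G) {R : Finset ℕ} (hR : R ⊆ σ) (hR3 : R.card = 3) :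
    K.jump S R ≠ 0 := by
  intro h0
  obtain ⟨F, G, hF, hG, hne⟩ := hn
  apply hne
  apply const_of_jump_all hK _ hF hG
  intro R' hR' h3
  by_cases hs : R' ⊆ σ
  · obtain ⟨b, hbσ, rfl⟩ := ridge_sub hσ hR3 hR
    obtain ⟨c, hcσ, rfl⟩ := ridge_sub hσ h3 hs
    by_cases hbc : b = c
    · rw [← hbc]; exact h0
    · rw [← jumps_eq hσ hb hbσ hcσ hbc (fun R hR h3 _ hn => hS R hR h3 hn)]; exact h0
  · exact hS R' hR' h3 hs

theorem proper_mem {σ R : Finset ℕ} (hR : R ⊆ σ) (hne : R.Nonempty) (hc : R.card < σ.card) :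
    R ∈ properFaces σ := by
  unfold properFaces
  rw [Finset.mem_filter, Finset.mem_powerset]
  refine ⟨hR, hne.ne_empty, ?_⟩
  rintro rfl
  omega

theorem side_facet {K : SComplex} (hK : K.IsNormalPseudomanifold 3) {σ} (hσ : σ.card = 4)
    (hb : ∀ τ ∈ properFaces σ, τ ∈ K.faces) {S : Finset ℕ → ZMod 2}
    (hS : ∀ R ∈ K.faces, R.card = 3 → ¬ R ⊆ σ → K.jump S R = 0)
    (hn : ∃ F G, K.Fct F ∧ K.Fct G ∧ S F ≠ S G) (ε : ZMod 2) {R : Finset ℕ} (hR : R ⊆ σ)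
    (hR3 : R.card = 3) :
    ∃ F, K.Fct F ∧ S F = ε ∧ R ⊆ F ∧ ∀ G, K.Fct G → R ⊆ G → S G = ε → G = F := by
  have hw := weak_of_normal hK
  have hrr : RidgeProp K := hw.ridge
  have hj := side_jump hK hσ hb hS hn hR hR3
  have hRK : R ∈ K.faces := hb R (proper_mem hR (Finset.card_pos.mp (by omega)) (by omega))
  obtain ⟨F, hF, hRF⟩ := hw.sub R hRK
  obtain ⟨G, hG, hRG, hGF, _⟩ := hrr.other hR3 hF hRF
  rw [jump_eq hw.ridge hR3 hF hG hRF hRG hGF.symm] at hj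
  have hall : ∀ H, K.Fct H → R ⊆ H → H = F ∨ H = G := fun H hH hRH =>
    hrr.two hR3 hF hG hH hRF hRG hRH hGF.symm
  have e : ∀ a b e : ZMod 2, a + b ≠ 0 → (a = e ∧ b ≠ e) ∨ (b = e ∧ a ≠ e) := by decide
  rcases e _ _ ε hj with ⟨h1, h2⟩ | ⟨h1, h2⟩
  · refine ⟨F, hF, h1, hRF, fun H hH hRH hSH => ?_⟩
    rcases hall H hH hRH with h | rfl
    · exact h
    · exact absurd hSH h2
  · refine ⟨G, hG, h1, hRG, fun H hH hRH hSH => ?_⟩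
    rcases hall H hH hRH with rfl | h
    · exact absurd hSH h2
    · exact h

theorem facetAdj_symm {K : SComplex} (hsub : ∀ s ∈ K.faces, ∃ F, K.Fct F ∧ s ⊆ F) :
    Std.Symm K.FacetAdj := by
  constructor
  intro a b h
  refine ⟨h.2.1, h.1, ?_⟩
  have h1 := ((fct_of_sub hsub).mp h.1).2
  have h2 := ((fct_of_sub hsub).mp h.2.1).2
  rw [Finset.inter_comm, h2, ← h1]
  exact h.2.2

theorem vertAdj_symm (K : SComplex) : Std.Symm K.VertAdj := by
  constructor
  intro a b h
  unfold VertAdj at h ⊢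
  rw [Finset.pair_comm]
  exact h

theorem adj_of_ridge {K : SComplex} (hsub : ∀ s ∈ K.faces, ∃ F, K.Fct F ∧ s ⊆ F) {F G R}
    (hF : K.Fct F) (hG : K.Fct G) (hR3 : R.card = 3) (hRF : R ⊆ F) (hRG : R ⊆ G) (hne : F ≠ G) :
    K.FacetAdj F G := by
  refine ⟨(fct_of_sub hsub).mpr hF, (fct_of_sub hsub).mpr hG, ?_⟩
  have h1 : 3 ≤ (F ∩ G).card := hR3 ▸ Finset.card_le_card (Finset.subset_inter hRF hRG)
  have h2 : (F ∩ G).card ≤ 4 := hF.2 ▸ Finset.card_le_card Finset.inter_subset_left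
  have h3 : (F ∩ G).card ≠ 4 := by
    intro h
    have e1 := Finset.eq_of_subset_of_card_le (Finset.inter_subset_left (s₁ := F) (s₂ := G))
      (by rw [h, hF.2])
    have e2 := Finset.eq_of_subset_of_card_le (Finset.inter_subset_right (s₁ := F) (s₂ := G))
      (by rw [h, hG.2])
    exact hne (e1.symm.trans e2)
  rw [hF.2]; omega

theorem side_sub {K : SComplex} {σ} (hσ : σ.card = 4) {S ε} :
    ∀ s ∈ (sideC K σ S ε).faces, ∃ F, (sideC K σ S ε).Fct F ∧ s ⊆ F := by
  intro s hs
  rw [mem_sideC] at hs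
  rcases hs.2 with ⟨F, h1, h2, h3⟩ | h
  · exact ⟨F, (fct_sideC hσ).mpr (Or.inl ⟨h1, h2⟩), h3⟩
  · exact ⟨σ, (fct_sideC hσ).mpr (Or.inr rfl), h⟩

theorem side_strong {K : SComplex} (hK : K.IsNormalPseudomanifold 3) {σ} (hσ : σ.card = 4)
    (hm : σ ∉ K.faces)
    (hb : ∀ τ ∈ properFaces σ, τ ∈ K.faces) {S : Finset ℕ → ZMod 2}
    (hS : ∀ R ∈ K.faces, R.card = 3 → ¬ R ⊆ σ → K.jump S R = 0)
    (hn : ∃ F G, K.Fct F ∧ K.Fct G ∧ S F ≠ S G) (ε : ZMod 2) :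
    (sideC K σ S ε).StronglyConnected := by
  classical
  have hw := weak_of_normal hK
  have hrr : RidgeProp K := hw.ridge
  set C := sideC K σ S ε with hC
  have hsub : ∀ s ∈ C.faces, ∃ F, C.Fct F ∧ s ⊆ F := side_sub hσ
  have hσC : C.Fct σ := (fct_sideC hσ).mpr (Or.inr rfl)
  let f : Finset ℕ → ZMod 2 := fun F =>
    if S F = ε then (if Relation.ReflTransGen C.FacetAdj σ F then 0 else 1) else 0
  have hadj : ∀ F, K.Fct F → S F = ε → ∀ R, R.card = 3 → R ⊆ F → R ⊆ σ → f F = 0 := by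
    intro F hF hSF R hR3 hRF hRσ
    have : C.FacetAdj σ F := adj_of_ridge hsub hσC ((fct_sideC hσ).mpr (Or.inl ⟨hF, hSF⟩)) hR3 hRσ hRF
      (by rintro rfl; exact hm hF.1)
    simp only [f]
    rw [if_pos hSF, if_pos (Relation.ReflTransGen.single this)]
  have hadj2 : ∀ F, K.Fct F → ∀ R, R.card = 3 → R ⊆ F → R ⊆ σ → f F = 0 := by
    intro F hF R hR3 hRF hRσ
    by_cases h : S F = ε
    · exact hadj F hF h R hR3 hRF hRσ
    · simp only [f]; rw [if_neg h]
  have hjump : ∀ R ∈ K.faces, R.card = 3 → K.jump f R = 0 := by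
    intro R hR hR3
    obtain ⟨F, hF, hRF⟩ := hw.sub R hR
    obtain ⟨G, hG, hRG, hGF, _⟩ := hrr.other hR3 hF hRF
    rw [jump_eq hw.ridge hR3 hF hG hRF hRG hGF.symm]
    by_cases hs : R ⊆ σ
    · rw [hadj2 F hF R hR3 hRF hs, hadj2 G hG R hR3 hRG hs, add_zero]
    · have hSS := side_const hK hS hF hG hRF hRG hs
      suffices f F = f G by rw [this]; exact z2_add_self _
      simp only [f]
      rw [← hSS]
      by_cases h : S F = ε
      · have hFC : C.Fct F := (fct_sideC hσ).mpr (Or.inl ⟨hF, h⟩)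
        have hGC : C.Fct G := (fct_sideC hσ).mpr (Or.inl ⟨hG, hSS ▸ h⟩)
        have a1 := adj_of_ridge hsub hFC hGC hR3 hRF hRG hGF.symm
        have a2 := adj_of_ridge hsub hGC hFC hR3 hRG hRF hGF
        have : Relation.ReflTransGen C.FacetAdj σ F ↔ Relation.ReflTransGen C.FacetAdj σ G :=
          ⟨fun h => h.tail a1, fun h => h.tail a2⟩
        simp only [this]
      · rw [if_neg h, if_neg h]
  have hreach : ∀ F, C.Fct F → Relation.ReflTransGen C.FacetAdj σ F := by
    intro F hF
    rcases (fct_sideC hσ).mp hF with ⟨hFK, hSF⟩ | rfl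
    · obtain ⟨b, hbσ⟩ : σ.Nonempty := Finset.card_pos.mp (by omega)
      have h3 : (σ.erase b).card = 3 := by rw [Finset.card_erase_of_mem hbσ, hσ]
      obtain ⟨G, hG, hSG, hRG, _⟩ := side_facet hK hσ hb hS hn ε (Finset.erase_subset b σ) h3
      have h0 := hadj2 G hG _ h3 hRG (Finset.erase_subset b σ)
      rw [← const_of_jump_all hK hjump hFK hG] at h0
      simp only [f] at h0
      rw [if_pos hSF] at h0
      by_contra hcon
      rw [if_neg hcon] at h0
      exact one_ne_zero h0
    · exact Relation.ReflTransGen.refl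
  intro F G hF hG
  have := facetAdj_symm hsub
  have h1 := hreach F ((fct_of_sub hsub).mp hF)
  have h2 := hreach G ((fct_of_sub hsub).mp hG)
  exact (rtg_symm h1).trans h2

theorem side_ridge {K : SComplex} (hK : K.IsNormalPseudomanifold 3) {σ} (hσ : σ.card = 4)
    (hm : σ ∉ K.faces)
    (hb : ∀ τ ∈ properFaces σ, τ ∈ K.faces) {S : Finset ℕ → ZMod 2}
    (hS : ∀ R ∈ K.faces, R.card = 3 → ¬ R ⊆ σ → K.jump S R = 0)
    (hn : ∃ F G, K.Fct F ∧ K.Fct G ∧ S F ≠ S G) (ε : ZMod 2) :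
    RidgeProp (sideC K σ S ε) := by
  have hw := weak_of_normal hK
  have hrr : RidgeProp K := hw.ridge
  intro R hR hR3
  have hmemf : ∀ G, G ∈ (sideC K σ S ε).faces.filter (fun F => F.card = 3 + 1 ∧ R ⊆ F) ↔
      ((K.Fct G ∧ S G = ε) ∨ G = σ) ∧ R ⊆ G := by
    intro G
    rw [← fct_sideC hσ, Finset.mem_filter]
    unfold Fct
    tauto
  by_cases hs : R ⊆ σ
  · obtain ⟨F, hF, hSF, hRF, hu⟩ := side_facet hK hσ hb hS hn ε hs hR3
    refine card_eq_two_of (a := σ) (b := F) ?_ ?_ ?_ ?_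
    · rw [hmemf]; exact ⟨Or.inr rfl, hs⟩
    · rw [hmemf]; exact ⟨Or.inl ⟨hF, hSF⟩, hRF⟩
    · rintro rfl; exact hm hF.1
    · intro G hG
      rw [hmemf] at hG
      rcases hG.1 with h | h
      · exact Or.inr (hu G h.1 hG.2 h.2)
      · exact Or.inl h
  · obtain ⟨F, hF, hSF, hRF⟩ := (mem_sideC.mp hR).2.resolve_right hs
    obtain ⟨G, hG, hRG, hGF, _⟩ := hrr.other hR3 hF hRF
    refine card_eq_two_of (a := F) (b := G) ?_ ?_ hGF.symm ?_
    · rw [hmemf]; exact ⟨Or.inl ⟨hF, hSF⟩, hRF⟩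
    · rw [hmemf]; exact ⟨Or.inl ⟨hG, (side_const hK hS hF hG hRF hRG hs) ▸ hSF⟩, hRG⟩
    · intro H hH
      rw [hmemf] at hH
      rcases hH.1 with h | rfl
      · exact hrr.two hR3 hF hG h.1 hRF hRG hH.2 hGF.symm
      · exact absurd hH.2 hs

theorem side_link {K : SComplex} (hK : K.IsNormalPseudomanifold 3) {σ} (hσ : σ.card = 4)
    (hb : ∀ τ ∈ properFaces σ, τ ∈ K.faces) {S : Finset ℕ → ZMod 2}
    (hS : ∀ R ∈ K.faces, R.card = 3 → ¬ R ⊆ σ → K.jump S R = 0) (ε : ZMod 2) {s}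
    (hs : s ∈ (sideC K σ S ε).faces) (hs2 : s.card ≤ 2) :
    ((sideC K σ S ε).lk s).Conn := by
  have hw := weak_of_normal hK
  have hrr : RidgeProp K := hw.ridge
  have hsne : s.Nonempty := (mem_sideC.mp hs).1
  by_cases hsσ : s ⊆ σ
  · have hsK : s ∈ K.faces := hb s (proper_mem hsσ hsne (by omega))
    have hcon := hK.2.2.2 s hsK (by omega)
    have hlk : ∀ {L : SComplex} {w}, {w} ∈ (L.lk s).faces ↔ w ∉ s ∧ insert w s ∈ L.faces := by
      intro L w
      rw [mem_lk]
      have : ({w} : Finset ℕ) ∪ s = insert w s := rfl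
      rw [this]
      constructor
      · rintro ⟨_, h2, h3⟩
        refine ⟨fun h => ?_, h3⟩
        have : w ∈ {w} ∩ s := by simp [h]
        rw [h2] at this; simp at this
      · rintro ⟨h1, h2⟩
        exact ⟨sub_face h2 (by simp) (by simp), Finset.singleton_inter_of_notMem h1, h2⟩
    obtain ⟨a, ha⟩ : (σ \ s).Nonempty := by
      rw [← Finset.card_pos, Finset.card_sdiff_of_subset hsσ]; omega
    rw [Finset.mem_sdiff] at ha
    have hσmem : ∀ w, w ∈ σ → insert w s ∈ (sideC K σ S ε).faces := fun w hwσ =>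
      mem_sideC.mpr ⟨by simp, Or.inr (Finset.insert_subset hwσ hsσ)⟩
    have haC : {a} ∈ ((sideC K σ S ε).lk s).faces := hlk.mpr ⟨ha.2, hσmem a ha.1⟩
    have hCK : ∀ w, {w} ∈ ((sideC K σ S ε).lk s).faces → {w} ∈ (K.lk s).faces := by
      intro w hwC
      rw [hlk] at hwC ⊢
      refine ⟨hwC.1, ?_⟩
      rcases (mem_sideC.mp hwC.2).2 with ⟨F, hF, _, hwF⟩ | h
      · exact sub_face hF.1 hwF (by simp)
      · refine hb _ (proper_mem h (by simp) ?_)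
        have := Finset.card_insert_le w s
        omega
    have hreach : ∀ u, {u} ∈ ((sideC K σ S ε).lk s).faces →
        Relation.ReflTransGen ((sideC K σ S ε).lk s).VertAdj a u := by
      intro u hu
      have path := hcon.2 a u (hCK a haC) (hCK u hu)
      induction path with
      | refl => exact Relation.ReflTransGen.refl
      | @tail b c _ hbc ih =>
        have hu' := hlk.mp hu
        by_cases hcσ : c ∈ σ
        · apply Relation.ReflTransGen.single
          unfold VertAdj
          have hd : ({a, c} : Finset ℕ) ∩ s = ∅ := by
            rw [Finset.eq_empty_iff_forall_notMem]
            intro x hx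
            simp only [Finset.mem_inter, Finset.mem_insert, Finset.mem_singleton] at hx
            rcases hx with ⟨rfl | rfl, hx⟩
            · exact ha.2 hx
            · exact hu'.1 hx
          have hac : ({a, c} : Finset ℕ) ⊆ σ := by
            intro x hx
            simp only [Finset.mem_insert, Finset.mem_singleton] at hx
            rcases hx with rfl | rfl
            · exact ha.1
            · exact hcσ
          rw [mem_lk]
          exact ⟨mem_sideC.mpr ⟨by simp, Or.inr hac⟩, hd,
            mem_sideC.mpr ⟨by simp, Or.inr (Finset.union_subset hac hsσ)⟩⟩
        · have hns : ¬ insert c s ⊆ σ := fun h => hcσ (h (Finset.mem_insert_self c s))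
          obtain ⟨G, hG, hSG, hcG⟩ := (mem_sideC.mp hu'.2).2.resolve_right hns
          unfold VertAdj at hbc
          rw [mem_lk] at hbc
          obtain ⟨F, hF, hFs⟩ := hw.sub _ hbc.2.2
          have hcF : insert c s ⊆ F := fun x hx => hFs (by simp at hx ⊢; tauto)
          have hSF : S F = ε := (side_const hK hS hF hG hcF hcG hns).trans hSG
          have hbcC : ({b, c} : Finset ℕ) ∈ ((sideC K σ S ε).lk s).faces := by
            rw [mem_lk]
            exact ⟨mem_sideC.mpr ⟨by simp, Or.inl ⟨F, hF, hSF, Finset.subset_union_left.trans hFs⟩⟩,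
              hbc.2.1, mem_sideC.mpr ⟨by simp, Or.inl ⟨F, hF, hSF, hFs⟩⟩⟩
          exact (ih (sub_face hbcC (by simp) (by simp))).tail hbcC
    refine ⟨⟨_, haC⟩, fun u v hu hv => ?_⟩
    have := vertAdj_symm ((sideC K σ S ε).lk s)
    exact (rtg_symm (hreach u hu)).trans (hreach v hv)
  · obtain ⟨F, hF, hSF, hsF⟩ := (mem_sideC.mp hs).2.resolve_right hsσ
    have hsK : s ∈ K.faces := sub_face hF.1 hsF hsne
    have : (sideC K σ S ε).lk s = K.lk s := by
      apply eq_of_faces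
      intro γ
      rw [mem_lk, mem_lk]
      constructor
      · rintro ⟨h1, h2, h3⟩
        rcases (mem_sideC.mp h3).2 with ⟨G, hG, _, h⟩ | h
        · exact ⟨sub_face hG.1 (Finset.subset_union_left.trans h) (mem_sideC.mp h1).1, h2,
            sub_face hG.1 h (mem_sideC.mp h3).1⟩
        · exact absurd (Finset.subset_union_right.trans h) hsσ
      · rintro ⟨h1, h2, h3⟩
        obtain ⟨G, hG, h⟩ := hw.sub _ h3
        have hSG : S G = ε :=
          (side_const hK hS hG hF (Finset.subset_union_right.trans h) hsF hsσ).trans hSF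
        have hγ : γ.Nonempty := by
          rw [Finset.nonempty_iff_ne_empty]
          rintro rfl
          exact K.not_empty_mem h1
        exact ⟨mem_sideC.mpr ⟨hγ, Or.inl ⟨G, hG, hSG, Finset.subset_union_left.trans h⟩⟩, h2,
          mem_sideC.mpr ⟨hsne.mono Finset.subset_union_right, Or.inl ⟨G, hG, hSG, h⟩⟩⟩
    rw [this]
    exact hK.2.2.2 s hsK (by omega)

theorem conn_sum {K : SComplex} (hK : K.IsNormalPseudomanifold 3) {σ} (hσ : σ.card = 4)
    (hm : σ ∉ K.faces)
    (hb : ∀ τ ∈ properFaces σ, τ ∈ K.faces) {S : Finset ℕ → ZMod 2}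
    (hS : ∀ R ∈ K.faces, R.card = 3 → ¬ R ⊆ σ → K.jump S R = 0)
    (hn : ∃ F G, K.Fct F ∧ K.Fct G ∧ S F ≠ S G) : FormedByConnSum K := by
  have hw := weak_of_normal hK
  have hrr : RidgeProp K := hw.ridge
  have hσC : ∀ ε, (sideC K σ S ε).Fct σ := fun ε => (fct_sideC hσ).mpr (Or.inr rfl)
  have hN : ∀ ε, (sideC K σ S ε).IsNormalPseudomanifold 3 := fun ε =>
    ⟨⟨⟨σ, (hσC ε).1⟩, fun s hs => ((fct_of_sub (side_sub hσ)).mp hs).2⟩,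
      side_strong hK hσ hm hb hS hn ε, side_ridge hK hσ hm hb hS hn ε,
      fun s hs h2 => side_link hK hσ hb hS ε hs (by omega)⟩
  have hne : ∀ s ∈ K.faces, s.Nonempty := by
    intro s hs
    rw [Finset.nonempty_iff_ne_empty]
    rintro rfl
    exact K.not_empty_mem hs
  refine ⟨sideC K σ S 0, sideC K σ S 1, hN 0, hN 1, σ, σ, id,
    (fct_of_sub (side_sub hσ)).mpr (hσC 0), hσ, (fct_of_sub (side_sub hσ)).mpr (hσC 1), hσ,
    Function.injective_id.injOn, Finset.image_id, ?_, ?_⟩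
  · intro v hv hvσ hv0
    simp only [id] at hv0
    rw [mem_vertexSet] at hv hv0
    have hns : ¬ ({v} : Finset ℕ) ⊆ σ := by simpa using hvσ
    obtain ⟨F, hF, hSF, hvF⟩ := (mem_sideC.mp hv).2.resolve_right hns
    obtain ⟨G, hG, hSG, hvG⟩ := (mem_sideC.mp hv0).2.resolve_right hns
    have := side_const hK hS hF hG hvF hvG hns
    rw [hSF, hSG] at this
    exact one_ne_zero this
  · have hid : (Finset.image (id : ℕ → ℕ)) = id := by
      funext s
      exact Finset.image_id
    rw [hid, Finset.image_id]
    ext s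
    rw [Finset.mem_sdiff, Finset.mem_union, Finset.mem_singleton, mem_sideC, mem_sideC]
    constructor
    · intro hs
      obtain ⟨F, hF, hsF⟩ := hw.sub s hs
      refine ⟨?_, by rintro rfl; exact hm hs⟩
      by_cases h : S F = 0
      · exact Or.inl ⟨hne s hs, Or.inl ⟨F, hF, h, hsF⟩⟩
      · exact Or.inr ⟨hne s hs, Or.inl ⟨F, hF, z2_one h, hsF⟩⟩
    · rintro ⟨h, hsσ⟩
      have aux : s.Nonempty → s ⊆ σ → s ∈ K.faces := fun h1 h2 =>
        hb s (by
          unfold properFaces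
          rw [Finset.mem_filter, Finset.mem_powerset]
          exact ⟨h2, h1.ne_empty, hsσ⟩)
      rcases h with ⟨h1, ⟨F, hF, _, h2⟩ | h2⟩ | ⟨h1, ⟨F, hF, _, h2⟩ | h2⟩
      · exact sub_face hF.1 h2 h1
      · exact aux h1 h2
      · exact sub_face hF.1 h2 h1
      · exact aux h1 h2

theorem main_thm (Δ : SComplex) (t : ℕ) (σ : Finset ℕ)
    (hΔ : Δ.IsNormalPseudomanifold 3)
    (ht : ({t} : Finset ℕ) ∈ Δ.faces)
    (hg : Δ.g2 ≤ (Δ.lk {t}).g2surf + 9)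
    (hσcard : σ.card = 4) (hσmiss : σ ∉ Δ.faces)
    (hσbdry : ∀ τ ∈ properFaces σ, τ ∈ Δ.faces)
    (hsep : ∀ x ∈ σ, SeparatesLink (Δ.lk {x}) (σ.erase x)) :
    FormedByConnSum Δ ∧ ¬ FormedByHandleAddition Δ := by
  constructor
  · obtain ⟨f, hf⟩ := exists_side hΔ hσcard hσbdry hsep
    by_cases hA : ∀ g : Finset ℕ → ZMod 2,
        (∀ R ∈ Δ.faces, R.card = 3 → ¬ R ⊆ σ → Δ.jump g R = 0) →
        ∀ F G, Δ.Fct F → Δ.Fct G → g F = g G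
    · obtain ⟨C, τ₁, τ₂, ψ, h, hC, H⟩ := cut_handle hΔ hσcard hσmiss hσbdry hf hA
      exact (H.no_handle hC ht hg).elim
    · push Not at hA
      obtain ⟨S, hS, F, G, hF, hG, hne⟩ := hA
      exact conn_sum hΔ hσcard hσmiss hσbdry hS ⟨F, G, hF, hG, hne⟩
  · rintro ⟨K', τ₁, τ₂, ψ, h, hK', hf1, hc1, hf2, hc2, inj, img, adm, hid, hps, eq⟩
    have H : Handle K' Δ τ₁ τ₂ ψ h :=
      { f1 := ⟨hf1.1, hc1⟩
        f2 := ⟨hf2.1, hc2⟩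
        inj := inj
        img := img
        adm := fun x hx z => (adm x hx).2.2 z
        hid := hid
        hps := hps
        eq := eq }
    exact H.no_handle (weak_of_normal hK') ht hg

/-- Lemma 2.6: under the `g₂` bound, a missing tetrahedron all of whose missing
triangles separate the corresponding vertex links forces `Δ` to be formed using a
connected sum (and not a handle addition). -/
theorem statement1 (Δ : SComplex) (t : ℕ) (σ : Finset ℕ)
    (hΔ : Δ.IsNormalPseudomanifold 3)
    (ht : ({t} : Finset ℕ) ∈ Δ.faces)
    (hmax : ∀ v, ({v} : Finset ℕ) ∈ Δ.faces → v ≠ t →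
      (Δ.lk {v}).g2surf ≤ (Δ.lk {t}).g2surf)
    (hg : Δ.g2 ≤ (Δ.lk {t}).g2surf + 9)
    (hσcard : σ.card = 4) (hσmiss : σ ∉ Δ.faces)
    (hσbdry : ∀ τ ∈ properFaces σ, τ ∈ Δ.faces)
    (hsep : ∀ x ∈ σ, SeparatesLink (Δ.lk {x}) (σ.erase x)) :
    FormedByConnSum Δ ∧ ¬ FormedByHandleAddition Δ := by
  exact main_thm Δ t σ hΔ ht hg hσcard hσmiss hσbdry hsep

end SComplex
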